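/- (Generic corollary of the main theorem.) Consider the system ẋ = f(x) + g₁(x)u₁ + g₂(x)u₂ on an open set U ⊆ ℝⁿ, n ≥ 2, with f, g₁, g₂ smooth. Let (G_k) be the derived flag of Δ = span_{C^∞(U)}{g₁, g₂}, let Λᵏ = (G_k)^⊥ and Cᵏ_q = C(Λᵏ)_q for 1 ≤ k ≤ n−3. Suppose there exists an open dense set D ⊆ U such that: (1) dim G_k(q) = 2 + k for all 0 ≤ k ≤ n−2 and all q ∈ D; and (2) (L_f ω)(q) ∈ Cᵏ_q for all 1 ≤ k ≤ n−3, all q ∈ D and all ω ∈ Λᵏ. Then there exists an open dense set V ⊆ U such that for every p ∈ V there exist an open neighborhood W ⊆ U of p, a diffeomorphism φ : W → φ(W) ⊆ ℝⁿ, smooth α : W → ℝ², β : W → ℝ^{2×2} with β(x) invertible on W, and smooth functions φ₁, …, φ_{n−2} with φᵢ depending only on z₁, …, z_{i+1}, zₙ, such that for all x ∈ W, v ∈ ℝ²: Dφ(x)( f(x) + Σᵢ(αᵢ(x) + Σⱼ β_{ij}(x)vⱼ) gᵢ(x) ) = ( φ₁(z) + z₂v₁, …, φ_{n−2}(z) +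 z_{n−1}v₁, v₂, v₁ ) with z = φ(x). -/

import Mathlib

noncomputable section

/-- A vector field on (an open subset of) `ℝⁿ`, represented as a total map. -/
abbrev VF (n : ℕ) := (Fin n → ℝ) → (Fin n → ℝ)

/-- Lie bracket `[X,Y](x) = DY(x)(X(x)) − DX(x)(Y(x))`. -/
def lieBracket {n : ℕ} (X Y : VF n) : VF n :=
  fun x => fderiv ℝ Y x (X x) - fderiv ℝ X x (Y x)

/-- Span over `C^∞(U)` of a set of vector fields (membership only constrains values on `U`). -/
def spanOn {n : ℕ} (U : Set (Fin n → ℝ)) (S : Set (VF n)) : Set (VF n) :=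
  { X | ∃ (m : ℕ) (c : Fin m → (Fin n → ℝ) → ℝ) (Y : Fin m → VF n),
      (∀ i, ContDiffOn ℝ (⊤ : ℕ∞) (c i) U) ∧ (∀ i, Y i ∈ S) ∧
      ∀ x ∈ U, X x = ∑ i, c i x • Y i x }

/-- Sum of two distributions (as equality of values on `U`). -/
def addOn {n : ℕ} (U : Set (Fin n → ℝ)) (A B : Set (VF n)) : Set (VF n) :=
  { X | ∃ Y ∈ A, ∃ Z ∈ B, ∀ x ∈ U, X x = Y x + Z x }

/-- The set of brackets `[X,Y]`, `X ∈ A`, `Y ∈ B`. -/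
def bracketSet {n : ℕ} (A B : Set (VF n)) : Set (VF n) :=
  { Z | ∃ X ∈ A, ∃ Y ∈ B, Z = lieBracket X Y }

/-- The Lie flag: `F₀ = Δ`, `F_{k+1} = F_k + span_{C^∞(U)}{[X,Y] : X ∈ F_k, Y ∈ F₀}`. -/
def lieFlag {n : ℕ} (U : Set (Fin n → ℝ)) (Δ : Set (VF n)) : ℕ → Set (VF n)
  | 0 => Δ
  | k + 1 => addOn U (lieFlag U Δ k) (spanOn U (bracketSet (lieFlag U Δ k) Δ))

/-- The derived flag: `G₀ = Δ`, `G_{k+1} = G_k + span_{C^∞(U)}{[X,Y] : X, Y ∈ G_k}`. -/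
def derivedFlag {n : ℕ} (U : Set (Fin n → ℝ)) (Δ : Set (VF n)) : ℕ → Set (VF n)
  | 0 => Δ
  | k + 1 => addOn U (derivedFlag U Δ k)
      (spanOn U (bracketSet (derivedFlag U Δ k) (derivedFlag U Δ k)))

end

noncomputable section

/-- Covectors on `ℝⁿ`. -/
abbrev Covector (n : ℕ) := (Fin n → ℝ) →L[ℝ] ℝ

/-- A 1-form on (an open subset of) `ℝⁿ`, represented as a total map. -/
abbrev OneForm (n : ℕ) := (Fin n → ℝ) → Covector n

/-- The interior product `ι_v dω(q)`, i.e. the covector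
`w ↦ dω(q)(v,w) = (Dω(q)(v))(w) − (Dω(q)(w))(v)`. -/
def intExtDer {n : ℕ} (ω : OneForm n) (q v : Fin n → ℝ) : Covector n :=
  fderiv ℝ ω q v - (fderiv ℝ ω q).flip v

/-- The Lie derivative of a 1-form along a vector field:
`(L_X ω)(q)(v) = (Dω(q)(X(q)))(v) + ω(q)(DX(q)(v))`. -/
def lieDerOneForm {n : ℕ} (X : VF n) (ω : OneForm n) (q : Fin n → ℝ) : Covector n :=
  fderiv ℝ ω q (X q) + (ω q).comp (fderiv ℝ X q)

/-- The annihilator `A^⊥` of a set `A` of vector fields: the smooth 1-forms `ω` on `U`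
with `ω(x)(X(x)) = 0` for all `X ∈ A`, `x ∈ U`. -/
def annihilatorOn {n : ℕ} (U : Set (Fin n → ℝ)) (A : Set (VF n)) : Set (OneForm n) :=
  { ω | ContDiffOn ℝ (⊤ : ℕ∞) ω U ∧ ∀ X ∈ A, ∀ x ∈ U, ω x (X x) = 0 }

/-- The associated (Cauchy characteristic) space of a codistribution `Λ` at `q`. -/
def assocOf {n : ℕ} (Λ : Set (OneForm n)) (q : Fin n → ℝ) : Set (Fin n → ℝ) :=
  { v | ∀ ω ∈ Λ, ω q v = 0 ∧
      intExtDer ω q v ∈ Submodule.span ℝ { ξ : Covector n | ∃ ρ ∈ Λ, ξ = ρ q } }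

/-- The retracting space `C(Λ)_q`, the annihilator of the associated space. -/
def retractOf {n : ℕ} (Λ : Set (OneForm n)) (q : Fin n → ℝ) : Set (Covector n) :=
  { ξ | ∀ v ∈ assocOf Λ q, ξ v = 0 }

/-- `dim Δ(q)`: the dimension of `Δ_q = {X(q) : X ∈ Δ} ⊆ ℝⁿ`. -/
def evalDim {n : ℕ} (A : Set (VF n)) (q : Fin n → ℝ) : ℕ :=
  Module.finrank ℝ ↥(Submodule.span ℝ { w : Fin n → ℝ | ∃ X ∈ A, w = X q })

/-- The right-hand side of the triangular form (3), with 0-based components: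
component `j ≤ n−3` is `φ_{j+1}(z) + z_{j+2} v₁` (1-based), component `n−2` is `v₂` and
component `n−1` is `v₁`.  Here `Φ i` is the 1-based function `φ_{i+1}`. -/
def triRHS (n : ℕ) (Φ : ℕ → (Fin n → ℝ) → ℝ) (z : Fin n → ℝ) (v : Fin 2 → ℝ) :
    Fin n → ℝ :=
  fun j => if h : j.1 + 3 ≤ n then Φ j.1 z + z ⟨j.1 + 1, by omega⟩ * v 0
           else if j.1 + 2 = n then v 1 else v 0

/-- The system `ẋ = f + g₁u₁ + g₂u₂` is transformable into the triangular form (3)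
near `p`: on an open neighborhood `V ⊆ U` of `p` there are a diffeomorphism `φ` onto
`φ(V)` and a regular static state feedback `u = α + βv` such that the closed-loop
vector field is pushed forward by `φ` to the triangular form, where each `φᵢ = Φ (i-1)`
depends only on `z₁, …, z_{i+1}, zₙ`. -/
def IsTriangularizableAt (n : ℕ) (U : Set (Fin n → ℝ)) (f g1 g2 : VF n)
    (p : Fin n → ℝ) : Prop :=
  ∃ V : Set (Fin n → ℝ), IsOpen V ∧ p ∈ V ∧ V ⊆ U ∧
    ∃ φ ψ : (Fin n → ℝ) → (Fin n → ℝ),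
      ContDiffOn ℝ (⊤ : ℕ∞) φ V ∧ IsOpen (φ '' V) ∧ ContDiffOn ℝ (⊤ : ℕ∞) ψ (φ '' V) ∧
      (∀ x ∈ V, ψ (φ x) = x) ∧
      ∃ (α : (Fin n → ℝ) → Fin 2 → ℝ) (β : (Fin n → ℝ) → Fin 2 → Fin 2 → ℝ),
        (∀ i, ContDiffOn ℝ (⊤ : ℕ∞) (fun x => α x i) V) ∧
        (∀ i j, ContDiffOn ℝ (⊤ : ℕ∞) (fun x => β x i j) V) ∧
        (∀ x ∈ V, β x 0 0 * β x 1 1 - β x 0 1 * β x 1 0 ≠ 0) ∧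
        ∃ Φ : ℕ → (Fin n → ℝ) → ℝ,
          (∀ i, i + 3 ≤ n → ContDiffOn ℝ (⊤ : ℕ∞) (Φ i) (φ '' V)) ∧
          (∀ i, i + 3 ≤ n → ∀ z z' : Fin n → ℝ,
            (∀ j : Fin n, (j.1 ≤ i + 1 ∨ j.1 + 1 = n) → z j = z' j) → Φ i z = Φ i z') ∧
          ∀ x ∈ V, ∀ v : Fin 2 → ℝ,
            fderiv ℝ φ x (f x
                + (α x 0 + β x 0 0 * v 0 + β x 0 1 * v 1) • g1 x
                + (α x 1 + β x 1 0 * v 0 + β x 1 1 * v 1) • g2 x) =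
              triRHS n Φ (φ x) v

/-- Conditions 1) and 2) of the main theorem on the set `W`:
1) `dim F_k(q) = dim G_k(q) = 2 + k` for `0 ≤ k ≤ n−2`, `q ∈ W`;
2) `(L_f ω)(q) ∈ Cᵏ_q` for `1 ≤ k ≤ n−3`, `q ∈ W`, `ω ∈ Λᵏ = (G_k)^⊥`. -/
def MainConditionsOn (n : ℕ) (U W : Set (Fin n → ℝ)) (f g1 g2 : VF n) : Prop :=
  (∀ k : ℕ, k + 2 ≤ n → ∀ q ∈ W,
      evalDim (lieFlag U (spanOn U {g1, g2}) k) q = 2 + k ∧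
      evalDim (derivedFlag U (spanOn U {g1, g2}) k) q = 2 + k) ∧
  (∀ k : ℕ, 1 ≤ k → k + 3 ≤ n → ∀ q ∈ W,
      ∀ ω ∈ annihilatorOn U (derivedFlag U (spanOn U {g1, g2}) k),
        lieDerOneForm f ω q ∈
          retractOf (annihilatorOn U (derivedFlag U (spanOn U {g1, g2}) k)) q)

end

/-!
The conditions make the values of `G_k` a Goursat flag: `dim G_k = k + 2` and `G_{k+1}` is spanned
by `G_k` and its brackets. For `n ≥ 3` the rank-two distribution `G_0` contains a nonvanishing
field `X` with `[X, G_1] ⊆ G_1`; by the Jacobi identity `[X, G_k] ⊆ G_k` for all `k ≥ 1`, and the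
drift condition gives `[f, X] ∈ G_1`.

A flow box straightens `X`. The distributions `G_k`, `k ≥ 1`, are then invariant along `X` and
descend to a Goursat flag on a transversal of dimension `n - 1`, for which `f` descends to a drift
satisfying the same conditions. By induction the transversal carries triangular coordinates
`z_0, …, z_{p-1}, t`. The additional coordinate is the ratio `z_p = dz_{p-1}(Y) / dt(Y)` for a
field `Y` of `G_0` transverse to `X`; a Wronskian argument shows `dz_p(X) ≠ 0`. The ratio
requires `dt(Y) ≠ 0`, which can fail at a given point but holds at points arbitrarily close to it:
this is why only an open dense set is reached. A decoupling feedback finally turns the derivatives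
of `t` and of the last `z` into the new inputs.
-/

noncomputable section

open Set Filter Topology
open scoped ContDiff unitInterval

/-! ### Smooth dependence of flows on initial conditions -/

section Superposition

universe u

variable {K : Type*} [TopologicalSpace K] [CompactSpace K] {E F : Type u}
  [NormedAddCommGroup E] [NormedSpace ℝ E] [NormedAddCommGroup F] [NormedSpace ℝ F]

variable (K E F) in
/-- Pointwise application `(A, η) ↦ (t ↦ A t (η t))` as a bounded bilinear map on spaces of
continuous functions; it expresses the derivative of a superposition operator. -/
def pointwiseApply : C(K, E →L[ℝ] F) →L[ℝ] C(K, E) →L[ℝ] C(K, F) :=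
  LinearMap.mkContinuous₂
    (LinearMap.mk₂ ℝ (fun (A : C(K, E →L[ℝ] F)) (η : C(K, E)) =>
        (⟨fun t => A t (η t), by fun_prop⟩ : C(K, F)))
      (fun _ _ _ => by ext; simp) (fun _ _ _ => by ext; simp)
      (fun _ _ _ => by ext; simp) (fun _ _ _ => by ext; simp)) 1
    fun A η => by
      rw [ContinuousMap.norm_le _ (by positivity), one_mul]
      exact fun t => (A t).le_of_opNorm_le_of_le (A.norm_coe_le_norm t) (η.norm_coe_le_norm t)

lemma hasFDerivAt_continuousMap_comp {X : C(E, F)} (hX : ContDiff ℝ 1 X) (γ : C(K, E)) :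
    HasFDerivAt (fun γ : C(K, E) => X.comp γ)
      (pointwiseApply K E F
        ((⟨fderiv ℝ X, hX.continuous_fderiv one_ne_zero⟩ : C(E, E →L[ℝ] F)).comp γ)) γ := by
  rw [hasFDerivAt_iff_isLittleO_nhds_zero, Asymptotics.isLittleO_iff]
  intro c hc
  obtain ⟨δ, hδ, hclose⟩ := Metric.mem_uniformity_dist.1 <|
    (isCompact_range γ.continuous).uniformContinuousAt_of_continuousAt (fderiv ℝ X)
      (fun _ _ => (hX.continuous_fderiv one_ne_zero).continuousAt) (Metric.dist_mem_uniformity hc)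
  filter_upwards [Metric.ball_mem_nhds (0 : C(K, E)) hδ] with η hη
  refine (ContinuousMap.norm_le _ (by positivity)).2 fun t => ?_
  have hηt : ‖η t‖ < δ := (η.norm_coe_le_norm t).trans_lt (by simpa using hη)
  have hmean : ‖X (γ t + η t) - X (γ t) - fderiv ℝ X (γ t) (γ t + η t - γ t)‖
      ≤ c * ‖γ t + η t - γ t‖ := by
    refine (convex_ball (γ t) δ).norm_image_sub_le_of_norm_hasFDerivWithin_le'
      (fun x _ => (hX.differentiable one_ne_zero x).hasFDerivAt.hasFDerivWithinAt)
      (fun x hx => ?_) (Metric.mem_ball_self hδ) (by simpa [Metric.mem_ball, dist_eq_norm])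
    rw [← dist_eq_norm, dist_comm]
    exact (hclose (a := γ t) (b := x) (by rwa [dist_comm]) (mem_range_self t)).le
  rw [add_sub_cancel_left] at hmean
  exact hmean.trans (mul_le_mul_of_nonneg_left (η.norm_coe_le_norm t) hc.le)

lemma contDiff_nat_continuousMap_comp (m : ℕ) {X : C(E, F)} (hX : ContDiff ℝ m X) :
    ContDiff ℝ m (fun γ : C(K, E) => X.comp γ) := by
  induction m generalizing F with
  | zero => exact contDiff_zero.2 (ContinuousMap.continuous_postcomp X)
  | succ m ih =>
    have hX1 : ContDiff ℝ 1 X := hX.of_le (by exact_mod_cast Nat.le_add_left 1 m)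
    rw [Nat.cast_succ, contDiff_succ_iff_hasFDerivAt]
    refine ⟨_, (pointwiseApply K E F).contDiff.comp (ih ?_), hasFDerivAt_continuousMap_comp hX1⟩
    exact hX.fderiv_right (by simp)

theorem contDiff_continuousMap_comp {X : C(E, F)} (hX : ContDiff ℝ ∞ X) :
    ContDiff ℝ ∞ (fun γ : C(K, E) => X.comp γ) :=
  contDiff_infty.2 fun m => contDiff_nat_continuousMap_comp m (contDiff_infty.1 hX m)

end Superposition

section Diffeomorphism

variable {E F : Type*} [NormedAddCommGroup E] [NormedSpace ℝ E] [NormedAddCommGroup F]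
  [NormedSpace ℝ F]

/-- An open partial homeomorphism which is a smooth diffeomorphism from its source onto its
target; smoothness of the inverse is expressed by invertibility of the derivative. -/
structure IsSmoothDiffeo (κ : OpenPartialHomeomorph E F) : Prop where
  contDiffAt : ∀ x ∈ κ.source, ContDiffAt ℝ ∞ κ x
  isInvertible_fderiv : ∀ x ∈ κ.source, (fderiv ℝ κ x).IsInvertible

lemma IsSmoothDiffeo.contDiffAt_symm [CompleteSpace E] {κ : OpenPartialHomeomorph E F}
    (hκ : IsSmoothDiffeo κ) {y : F} (hy : y ∈ κ.target) : ContDiffAt ℝ ∞ κ.symm y := by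
  have hx := κ.map_target hy
  obtain ⟨D, hD⟩ := hκ.isInvertible_fderiv _ hx
  refine κ.contDiffAt_symm hy (f₀' := D) ?_ (hκ.contDiffAt _ hx)
  rw [hD]
  exact ((hκ.contDiffAt _ hx).differentiableAt (by simp)).hasFDerivAt

theorem exists_isSmoothDiffeo_of_hasFDerivAt_equiv [CompleteSpace E] {Θ : E → F} {p : E}
    {N : Set E} (hN : N ∈ 𝓝 p) (hΘ : ∀ᶠ x in 𝓝 p, ContDiffAt ℝ ∞ Θ x) {D : E ≃L[ℝ] F}
    (hD : HasFDerivAt Θ (D : E →L[ℝ] F) p) :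
    ∃ κ : OpenPartialHomeomorph E F,
      p ∈ κ.source ∧ κ.source ⊆ N ∧ ⇑κ = Θ ∧ IsSmoothDiffeo κ := by
  have hp := hΘ.self_of_nhds
  have hinv : ∀ᶠ x in 𝓝 p, fderiv ℝ Θ x ∈ range ContinuousLinearEquiv.toContinuousLinearMap := by
    refine (hp.fderiv_right (m := ∞) (by simp)).continuousAt.eventually_mem ?_
    rw [hD.fderiv]
    exact D.nhds
  obtain ⟨s, hs, hs_open, hps⟩ := mem_nhds_iff.1 (inter_mem (hΘ.and hinv) hN)
  let κ := hp.toOpenPartialHomeomorph Θ hD (by simp)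
  refine ⟨κ.restrOpen s hs_open, ⟨hp.mem_toOpenPartialHomeomorph_source hD (by simp), hps⟩,
    fun x hx => (hs hx.2).2, rfl, fun x hx => (hs hx.2).1.1, fun x hx => (hs hx.2).1.2⟩

theorem exists_isSmoothDiffeo_of_injective_fderiv [FiniteDimensional ℝ E] [FiniteDimensional ℝ F]
    (hdim : Module.finrank ℝ E = Module.finrank ℝ F) {Θ : E → F} {p : E} {N : Set E}
    (hN : N ∈ 𝓝 p) (hΘ : ∀ᶠ x in 𝓝 p, ContDiffAt ℝ ∞ Θ x)
    (hinj : Function.Injective (fderiv ℝ Θ p)) :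
    ∃ κ : OpenPartialHomeomorph E F,
      p ∈ κ.source ∧ κ.source ⊆ N ∧ ⇑κ = Θ ∧ IsSmoothDiffeo κ :=
  have := FiniteDimensional.complete ℝ E
  let D : E ≃L[ℝ] F :=
    (LinearEquiv.ofInjectiveOfFinrankEq
      (fderiv ℝ Θ p).toLinearMap hinj hdim).toContinuousLinearEquiv
  exists_isSmoothDiffeo_of_hasFDerivAt_equiv hN hΘ (D := D)
    (hΘ.self_of_nhds.differentiableAt (by simp)).hasFDerivAt

end Diffeomorphism

section Flow

lemma eventually_forall_unitInterval_of_eventually {α : Type*} [PseudoMetricSpace α] {p : α}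
    {P : α × ℝ → Prop}
    (hP : ∀ᶠ z in 𝓝 (p, (0 : ℝ)), P z) :
    ∀ᶠ z in 𝓝 (p, (0 : ℝ)), ∀ t ∈ I, P (z.1, z.2 * t) := by
  obtain ⟨δ, hδ, hball⟩ := Metric.eventually_nhds_iff_ball.1 hP
  refine Metric.eventually_nhds_iff_ball.2 ⟨δ, hδ, fun z hz t ht => hball _ ?_⟩
  rw [← ball_prod_same] at hz ⊢
  refine ⟨hz.1, mem_ball_zero_iff.2 (lt_of_le_of_lt ?_ (mem_ball_zero_iff.1 hz.2))⟩
  rw [norm_mul, Real.norm_of_nonneg ht.1]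
  exact mul_le_of_le_one_right (norm_nonneg _) ht.2

variable {E : Type*} [NormedAddCommGroup E] [NormedSpace ℝ E]

/-- `Φ` is a local flow of `X` around `p`: near `(p, 0)` the curves `s ↦ Φ (x, s)` are integral
curves of `X` with initial value `x`. Only continuity at `(p, 0)` is required; smoothness is a
consequence. -/
structure IsLocalFlow (X : E → E) (p : E) (Φ : E × ℝ → E) : Prop where
  continuousAt : ContinuousAt Φ (p, 0)
  map_zero : ∀ᶠ x in 𝓝 p, Φ (x, 0) = x
  hasDerivAt : ∀ᶠ z in 𝓝 (p, (0 : ℝ)), HasDerivAt (fun s => Φ (z.1, s)) (X (Φ z)) z.2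

lemma IsLocalFlow.tendsto {X : E → E} {p : E} {Φ : E × ℝ → E} (hΦ : IsLocalFlow X p Φ) :
    Tendsto Φ (𝓝 (p, 0)) (𝓝 p) := by
  simpa only [ContinuousAt, hΦ.map_zero.self_of_nhds] using hΦ.continuousAt

lemma IsLocalFlow.congr {X Y : E → E} {p : E} {Φ : E × ℝ → E} (hΦ : IsLocalFlow X p Φ)
    (hXY : X =ᶠ[𝓝 p] Y) : IsLocalFlow Y p Φ where
  continuousAt := hΦ.continuousAt
  map_zero := hΦ.map_zero
  hasDerivAt := by
    filter_upwards [hΦ.hasDerivAt, hΦ.tendsto.eventually hXY] with z hz hXYz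
    rwa [← hXYz]

theorem exists_isLocalFlow [CompleteSpace E] {X : E → E} {p : E} (hX : ContDiffAt ℝ 1 X p) :
    ∃ Φ : E × ℝ → E, IsLocalFlow X p Φ := by
  obtain ⟨ε, hε, a, r, L, K, hr, hPL⟩ := IsPicardLindelof.of_contDiffAt_one hX
  obtain ⟨Φ, hΦ, hΦcont⟩ :=
    (hPL 0).exists_forall_mem_closedBall_eq_hasDerivWithinAt_continuousOn
  simp only [zero_sub, zero_add] at hΦ hΦcont
  have hball : Metric.closedBall p r ∈ 𝓝 p := Metric.closedBall_mem_nhds p hr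
  have htime : Ioo (-ε) ε ∈ 𝓝 (0 : ℝ) := Ioo_mem_nhds (neg_lt_zero.2 hε) hε
  refine ⟨Φ, ⟨hΦcont.continuousAt ?_, ?_, ?_⟩⟩
  · exact prod_mem_nhds hball (mem_of_superset htime Ioo_subset_Icc_self)
  · filter_upwards [hball] with x hx using (hΦ x hx).1
  · filter_upwards [prod_mem_nhds hball htime] with z hz
    exact ((hΦ z.1 hz.1).2 z.2 (Ioo_subset_Icc_self hz.2)).hasDerivAt (Icc_mem_nhds hz.2.1 hz.2.2)

variable (E) in
/-- The operator `γ ↦ (t ↦ ∫₀ᵗ γ)` on `C([0,1], E)`, with `γ` extended by constants. -/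
def primitiveCLM : C(I, E) →L[ℝ] C(I, E) :=
  have integrable_ext (γ : C(I, E)) (a b : ℝ) :
      IntervalIntegrable (IccExtend zero_le_one γ) MeasureTheory.volume a b :=
    (γ.continuous.Icc_extend' (h := zero_le_one)).intervalIntegrable a b
  LinearMap.mkContinuous
    { toFun := fun γ => ⟨fun t => ∫ s in (0 : ℝ)..t, IccExtend zero_le_one γ s,
        (intervalIntegral.continuous_primitive (integrable_ext γ) 0).comp continuous_subtype_val⟩
      map_add' := fun γ η => by
        ext t
        exact intervalIntegral.integral_add (integrable_ext γ 0 t) (integrable_ext η 0 t)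
      map_smul' := fun c γ => by
        ext t
        exact intervalIntegral.integral_smul c _ } 1
    fun γ => by
      rw [ContinuousMap.norm_le _ (by positivity), one_mul]
      intro t
      refine (intervalIntegral.norm_integral_le_of_norm_le_const (C := ‖γ‖)
        fun s _ => γ.norm_coe_le_norm _).trans ?_
      rw [sub_zero, abs_of_nonneg t.2.1]
      exact mul_le_of_le_one_right (norm_nonneg γ) t.2.2

/-- The residual `γ - x - s ∫ X ∘ γ` of the integral equation satisfied by the integral curve
of `s • X` starting at `x`. -/
def flowResidual (X : C(E, E)) (z : (E × ℝ) × C(I, E)) : C(I, E) :=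
  z.2 - ContinuousLinearMap.const ℝ I z.1.1 - z.1.2 • primitiveCLM E (X.comp z.2)

lemma contDiff_primitive_comp {X : C(E, E)} (hX : ContDiff ℝ ∞ X) :
    ContDiff ℝ ∞ fun z : (E × ℝ) × C(I, E) => primitiveCLM E (X.comp z.2) :=
  (primitiveCLM E).contDiff.comp ((contDiff_continuousMap_comp hX).comp contDiff_snd)

lemma contDiff_flowResidual {X : C(E, E)} (hX : ContDiff ℝ ∞ X) :
    ContDiff ℝ ∞ (flowResidual X) := by
  let cst : E →L[ℝ] C(I, E) := ContinuousLinearMap.const ℝ I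
  have hcst : ContDiff ℝ ∞ fun z : (E × ℝ) × C(I, E) => cst z.1.1 :=
    cst.contDiff.comp (contDiff_fst.comp contDiff_fst)
  exact (contDiff_snd.sub hcst).sub
    ((contDiff_snd.comp contDiff_fst).smul (contDiff_primitive_comp hX))

lemma exists_hasFDerivAt_flowResidual {X : C(E, E)} (hX : ContDiff ℝ ∞ X) (p : E) :
    ∃ D : (E × ℝ) →L[ℝ] C(I, E),
      HasFDerivAt (flowResidual X)
        (ContinuousLinearMap.snd ℝ (E × ℝ) C(I, E) +
          D.comp (ContinuousLinearMap.fst ℝ (E × ℝ) C(I, E)))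
        ((p, 0), ContinuousMap.const I p) := by
  let cst : E →L[ℝ] C(I, E) := ContinuousLinearMap.const ℝ I
  let u : (E × ℝ) × C(I, E) := ((p, 0), ContinuousMap.const I p)
  let base : (E × ℝ) × C(I, E) →L[ℝ] E × ℝ := ContinuousLinearMap.fst ℝ (E × ℝ) C(I, E)
  have hcst : HasFDerivAt (fun z : (E × ℝ) × C(I, E) => cst z.1.1)
      (cst.comp ((ContinuousLinearMap.fst ℝ E ℝ).comp base)) u :=
    (cst.comp ((ContinuousLinearMap.fst ℝ E ℝ).comp base)).hasFDerivAt
  have htime : HasFDerivAt (fun z : (E × ℝ) × C(I, E) => z.1.2)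
      ((ContinuousLinearMap.snd ℝ E ℝ).comp base) u :=
    ((ContinuousLinearMap.snd ℝ E ℝ).comp base).hasFDerivAt
  have hprim := ((contDiff_primitive_comp hX).differentiable (by simp) u).hasFDerivAt
  refine ⟨-(cst.comp (.fst ℝ E ℝ) + (ContinuousLinearMap.snd ℝ E ℝ).smulRight
    (primitiveCLM E (X.comp u.2))), ?_⟩
  refine (((hasFDerivAt_snd (𝕜 := ℝ) (p := u)).sub hcst).sub
    (htime.smul hprim)).congr_fderiv (ContinuousLinearMap.ext fun z => ?_)
  simp [u, base, sub_eq_add_neg, add_assoc, add_comm]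

lemma exists_isSmoothDiffeo_flowResidual [CompleteSpace E] {X : C(E, E)} (hX : ContDiff ℝ ∞ X)
    (p : E) :
    ∃ κ : OpenPartialHomeomorph ((E × ℝ) × C(I, E)) ((E × ℝ) × C(I, E)),
      ((p, 0), ContinuousMap.const I p) ∈ κ.source ∧
        ⇑κ = (fun z => (z.1, flowResidual X z)) ∧ IsSmoothDiffeo κ := by
  obtain ⟨D, hD⟩ := exists_hasFDerivAt_flowResidual hX p
  obtain ⟨κ, hmem, -, hκ, hdiffeo⟩ := exists_isSmoothDiffeo_of_hasFDerivAt_equiv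
    (Θ := fun z : (E × ℝ) × C(I, E) => (z.1, flowResidual X z))
    (D := (ContinuousLinearEquiv.refl ℝ (E × ℝ)).skewProd (.refl ℝ C(I, E)) D) univ_mem
    (Eventually.of_forall fun z => (contDiff_fst.prodMk (contDiff_flowResidual hX)).contDiffAt)
    (hasFDerivAt_fst.prodMk hD)
  exact ⟨κ, hmem, hκ, hdiffeo⟩

lemma exists_flowResidual_eq_zero [CompleteSpace E] {X : C(E, E)} {α : ℝ → E} {s : ℝ}
    (hα : ∀ t ∈ I, HasDerivAt α (X (α (s * t))) (s * t)) :
    ∃ γ : C(I, E), (∀ t : I, γ t = α (s * t)) ∧ flowResidual X ((α 0, s), γ) = 0 := by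
  have hderiv : ∀ t ∈ I, HasDerivAt (fun t => α (s * t)) (s • X (α (s * t))) t := fun t ht =>
    (hα t ht).scomp t (by simpa using (hasDerivAt_id t).const_mul s)
  have hcont : ContinuousOn (fun t => α (s * t)) I :=
    fun t ht => (hderiv t ht).continuousAt.continuousWithinAt
  refine ⟨⟨fun t => α (s * t), hcont.domRestrict⟩, fun _ => rfl, ?_⟩
  ext t
  have hsub : uIcc (0 : ℝ) t ⊆ I := by
    rw [uIcc_of_le t.2.1]
    exact Icc_subset_Icc le_rfl t.2.2
  have hFTC : ∫ τ in (0 : ℝ)..t, s • X (α (s * τ)) = α (s * t) - α (s * 0) :=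
    intervalIntegral.integral_eq_sub_of_hasDerivAt (fun τ hτ => hderiv τ (hsub hτ))
      ((X.continuous.comp_continuousOn (hcont.mono hsub)).const_smul s).intervalIntegrable
  have hext : ∫ τ in (0 : ℝ)..t, X (α (s * τ)) = ∫ τ in (0 : ℝ)..t,
      IccExtend zero_le_one (fun τ : I => X (α (s * τ))) τ :=
    intervalIntegral.integral_congr fun τ hτ => 
      (IccExtend_of_mem zero_le_one (fun τ : I => X (α (s * τ))) (hsub hτ)).symm
  rw [intervalIntegral.integral_smul, hext, mul_zero] at hFTC
  change α (s * t) - α 0 - s • ∫ τ in (0 : ℝ)..t,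
    IccExtend zero_le_one (fun τ : I => X (α (s * τ))) τ = 0
  rw [hFTC, sub_self]

theorem IsLocalFlow.eventually_contDiffAt [CompleteSpace E] {X : E → E} (hX : ContDiff ℝ ∞ X)
    {p : E} {Φ : E × ℝ → E} (hΦ : IsLocalFlow X p Φ) :
    ∀ᶠ z in 𝓝 (p, (0 : ℝ)), ContDiffAt ℝ ∞ Φ z := by
  obtain ⟨κ, hmem, hκ, hdiffeo⟩ := exists_isSmoothDiffeo_flowResidual (X := ⟨X, hX.continuous⟩) hX p
  obtain ⟨ρ, hρ, hball⟩ := Metric.isOpen_iff.1 κ.open_source _ hmem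
  have hsolve : ∀ᶠ z in 𝓝 (p, (0 : ℝ)),
      (z, 0) ∈ κ.target ∧ Φ z = (κ.symm (z, 0)).2 1 := by
    filter_upwards [eventually_forall_unitInterval_of_eventually hΦ.hasDerivAt,
      eventually_forall_unitInterval_of_eventually
        (hΦ.tendsto.eventually (Metric.closedBall_mem_nhds p (half_pos hρ))),
      continuousAt_fst.eventually hΦ.map_zero, Metric.ball_mem_nhds (p, (0 : ℝ)) hρ]
      with z hderiv hclose hzero hz
    obtain ⟨γ, hγ, hres⟩ := exists_flowResidual_eq_zero (X := ⟨X, hX.continuous⟩) hderiv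
    have hsource : (z, γ) ∈ κ.source := by
      refine hball ?_
      rw [← ball_prod_same]
      refine ⟨hz, lt_of_le_of_lt ?_ (half_lt_self hρ)⟩
      exact (ContinuousMap.dist_le (half_pos hρ).le).2 fun t => by
        rw [hγ]; exact hclose t t.2
    have hval : κ (z, γ) = (z, 0) := by rw [hκ, ← hres, hzero]
    rw [← hval, κ.left_inv hsource, hγ, Icc.coe_one, mul_one]
    exact ⟨κ.map_source hsource, rfl⟩
  filter_upwards [hsolve.eventually_nhds] with z hz
  refine ContDiffAt.congr_of_eventuallyEq ?_ (hz.mono fun _ h => h.2)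
  exact (ContinuousMap.evalCLM ℝ (1 : I)).contDiff.contDiffAt.comp z <| ContDiffAt.snd <|
    (hdiffeo.contDiffAt_symm hz.self_of_nhds.1).comp z (contDiffAt_id.prodMk contDiffAt_const)

end Flow

section Cutoff

variable {E : Type*} [NormedAddCommGroup E] [NormedSpace ℝ E] [FiniteDimensional ℝ E]

lemma exists_contDiff_cutoff_smul {F : Type*} [NormedAddCommGroup F] [NormedSpace ℝ F]
    {Y : E → F} {p : E} (hY : ∀ᶠ x in 𝓝 p, ContDiffAt ℝ ∞ Y x) {N : Set E} (hN : N ∈ 𝓝 p) :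
    ∃ χ : E → ℝ, χ =ᶠ[𝓝 p] 1 ∧ tsupport χ ⊆ N ∧ ContDiff ℝ ∞ fun x => χ x • Y x := by
  obtain ⟨r, hr, hsub⟩ := Metric.nhds_basis_closedBall.mem_iff.1 (inter_mem hY hN)
  let χ : ContDiffBump p := ⟨r / 2, r, half_pos hr, half_lt_self hr⟩
  have hsupp : tsupport χ = Metric.closedBall p r := χ.tsupport_eq
  refine ⟨χ, χ.eventuallyEq_one, hsupp ▸ fun x hx => (hsub hx).2,
    contDiff_iff_contDiffAt.2 fun x => ?_⟩
  by_cases hx : x ∈ tsupport χ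
  · exact χ.contDiff.contDiffAt.smul (hsub (hsupp ▸ hx)).1
  · refine (contDiffAt_const (c := (0 : F))).congr_of_eventuallyEq ?_
    filter_upwards [notMem_tsupport_iff_eventuallyEq.1 hx] with y hy
    simp [hy]

theorem exists_isLocalFlow_eventually_contDiffAt {X : E → E} {p : E}
    (hX : ∀ᶠ x in 𝓝 p, ContDiffAt ℝ ∞ X x) :
    ∃ Φ : E × ℝ → E, IsLocalFlow X p Φ ∧ ∀ᶠ z in 𝓝 (p, (0 : ℝ)), ContDiffAt ℝ ∞ Φ z := by
  have := FiniteDimensional.complete ℝ E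
  obtain ⟨χ, hχ, -, hχX⟩ := exists_contDiff_cutoff_smul hX univ_mem
  obtain ⟨Φ, hΦ⟩ := exists_isLocalFlow (hχX.contDiffAt (x := p).of_le (by simp))
  exact ⟨Φ, hΦ.congr (hχ.mono fun x hx => by simp [hx]), hΦ.eventually_contDiffAt hχX⟩

end Cutoff

section FlowBox

variable {E : Type*} [NormedAddCommGroup E] [NormedSpace ℝ E]

lemma IsLocalFlow.eventually_fderiv_apply_inr {X : E → E} {p : E} {Φ : E × ℝ → E}
    (hΦ : IsLocalFlow X p Φ) (hsmooth : ∀ᶠ z in 𝓝 (p, (0 : ℝ)), ContDiffAt ℝ ∞ Φ z) :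
    ∀ᶠ z in 𝓝 (p, (0 : ℝ)), fderiv ℝ Φ z (0, 1) = X (Φ z) := by
  filter_upwards [hΦ.hasDerivAt, hsmooth] with z hderiv hz
  have hslice : HasDerivAt (fun s : ℝ => (z.1, s)) (0, 1) z.2 :=
    (hasDerivAt_const _ _).prodMk (hasDerivAt_id _)
  have hΦz : HasFDerivAt Φ (fderiv ℝ Φ z) (z.1, z.2) :=
    (hz.differentiableAt (by simp)).hasFDerivAt
  exact (hΦz.comp_hasDerivAt z.2 hslice).unique hderiv

lemma IsLocalFlow.fderiv_apply_inl {X : E → E} {p : E} {Φ : E × ℝ → E}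
    (hΦ : IsLocalFlow X p Φ) (hdiff : DifferentiableAt ℝ Φ (p, 0)) (v : E) :
    fderiv ℝ Φ (p, 0) (v, 0) = v := by
  have hcomp : HasFDerivAt (fun x : E => Φ (x, 0))
      ((fderiv ℝ Φ (p, 0)).comp (ContinuousLinearMap.inl ℝ E ℝ)) p :=
    HasFDerivAt.comp (g := Φ) p hdiff.hasFDerivAt (ContinuousLinearMap.inl ℝ E ℝ).hasFDerivAt
  have hid : HasFDerivAt (fun x : E => Φ (x, 0)) (ContinuousLinearMap.id ℝ E) p :=
    (hasFDerivAt_id p).congr_of_eventuallyEq hΦ.map_zero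
  exact DFunLike.congr_fun (hcomp.unique hid) v

lemma IsLocalFlow.fderiv_apply {X : E → E} {p : E} {Φ : E × ℝ → E} (hΦ : IsLocalFlow X p Φ)
    (hsmooth : ∀ᶠ z in 𝓝 (p, (0 : ℝ)), ContDiffAt ℝ ∞ Φ z) (v : E) (τ : ℝ) :
    fderiv ℝ Φ (p, 0) (v, τ) = v + τ • X p := by
  have hsplit : (v, τ) = (v, (0 : ℝ)) + τ • ((0 : E), (1 : ℝ)) := by simp
  rw [hsplit, map_add, map_smul, (hΦ.eventually_fderiv_apply_inr hsmooth).self_of_nhds,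
    hΦ.map_zero.self_of_nhds,
    hΦ.fderiv_apply_inl (hsmooth.self_of_nhds.differentiableAt (by simp))]

lemma injective_subtype_add_smul {E' : Submodule ℝ E} {v : E} (hv : v ≠ 0)
    (hdisj : Disjoint E' (Submodule.span ℝ {v})) :
    Function.Injective fun z : E' × ℝ => (z.1 : E) + z.2 • v := by
  rintro ⟨x, s⟩ ⟨y, t⟩ hxy
  have hdiff : (s - t) • v = (y - x : E) := by
    rw [sub_smul, sub_eq_sub_iff_add_eq_add, add_comm, add_comm (y : E)]
    simpa only [add_comm] using hxy
  have hst : (s - t) • v = 0 := Submodule.disjoint_def.1 hdisj _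
    (hdiff ▸ E'.sub_mem y.2 x.2) (Submodule.smul_mem _ _ (Submodule.mem_span_singleton_self v))
  refine Prod.ext (Subtype.ext ?_) (sub_eq_zero.1 ((smul_eq_zero.1 hst).resolve_right hv))
  exact (sub_eq_zero.1 (hdiff.symm.trans hst)).symm

variable [FiniteDimensional ℝ E]

theorem exists_flowBox {X : E → E} {q : E} (hX : ∀ᶠ x in 𝓝 q, ContDiffAt ℝ ∞ X x)
    (hne : X q ≠ 0) {N : Set E} (hN : N ∈ 𝓝 q) :
    ∃ E' : Submodule ℝ E, Module.finrank ℝ E' + 1 = Module.finrank ℝ E ∧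
      ∃ κ : OpenPartialHomeomorph (E' × ℝ) E, 0 ∈ κ.source ∧ κ 0 = q ∧ κ.target ⊆ N ∧
        IsSmoothDiffeo κ ∧ ∀ z ∈ κ.source, fderiv ℝ κ z (0, 1) = X (κ z) := by
  obtain ⟨Φ, hΦ, hsmooth⟩ := exists_isLocalFlow_eventually_contDiffAt hX
  obtain ⟨E', hE'⟩ := (Submodule.span ℝ {X q}).exists_isCompl
  have hdim : Module.finrank ℝ E' + 1 = Module.finrank ℝ E := by
    rw [← Submodule.finrank_add_eq_of_isCompl hE', finrank_span_singleton hne, add_comm]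
  let L : E' × ℝ →L[ℝ] E × ℝ := E'.subtypeL.prodMap (.id ℝ ℝ)
  have hL (z : E' × ℝ) : HasFDerivAt (fun z => (q, (0 : ℝ)) + L z) L z := L.hasFDerivAt.const_add _
  have htendsto : Tendsto (fun z : E' × ℝ => (q, (0 : ℝ)) + L z) (𝓝 0) (𝓝 (q, 0)) := by
    simpa using (hL 0).continuousAt.tendsto
  let Θ : E' × ℝ → E := fun z => Φ ((q, 0) + L z)
  have hΘ : ∀ᶠ z in 𝓝 0, ContDiffAt ℝ ∞ Θ z := (htendsto.eventually hsmooth).mono fun z hz =>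
    hz.comp z (contDiffAt_const.add L.contDiff.contDiffAt)
  have hΘ' : ∀ᶠ z in 𝓝 0, HasFDerivAt Θ ((fderiv ℝ Φ ((q, 0) + L z)).comp L) z :=
    (htendsto.eventually hsmooth).mono fun z hz =>
      (hz.differentiableAt (by simp)).hasFDerivAt.comp z (hL z)
  have hflow : ∀ᶠ z in 𝓝 (0 : E' × ℝ), fderiv ℝ Θ z (0, 1) = X (Θ z) := by
    filter_upwards [hΘ', htendsto.eventually (hΦ.eventually_fderiv_apply_inr hsmooth)]
      with z hz hinr
    rw [hz.fderiv, ContinuousLinearMap.comp_apply, ← hinr]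
    simp [L]
  have hinj : Function.Injective (fderiv ℝ Θ 0) := by
    convert injective_subtype_add_smul hne hE'.disjoint.symm with z
    rw [hΘ'.self_of_nhds.fderiv, ContinuousLinearMap.comp_apply, map_zero, add_zero]
    exact hΦ.fderiv_apply hsmooth _ _
  obtain ⟨κ, h0, hsource, hκ, hdiffeo⟩ := exists_isSmoothDiffeo_of_injective_fderiv
    (by simpa using hdim) (inter_mem ((hΦ.tendsto.comp htendsto).eventually hN) hflow) hΘ hinj
  refine ⟨E', hdim, κ, h0, ?_, fun y hy => ?_, hdiffeo, fun z hz => hκ ▸ (hsource hz).2⟩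
  · simpa [hκ, Θ] using hΦ.map_zero.self_of_nhds
  · have hmem : Θ (κ.symm y) ∈ N := (hsource (κ.map_target hy)).1
    rwa [← hκ, κ.right_inv hy] at hmem

end FlowBox

end

noncomputable section

open Set Filter Topology
open VectorField (lieBracket)
open scoped ContDiff Matrix

/-! ### Local sections and frames of distributions -/

section Frames

variable {E : Type*} [NormedAddCommGroup E] [NormedSpace ℝ E]

/-- `X` is, near `q`, a smooth section of the distribution `G`. -/
def IsLocalSection (G : E → Submodule ℝ E) (X : E → E) (q : E) : Prop :=
  ∀ᶠ x in 𝓝 q, ContDiffAt ℝ ∞ X x ∧ X x ∈ G x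

/-- `e` is a frame of the distribution `G` at `x`, smooth together with its coefficient map `θ`;
outside of `G x` the map `θ x` is unconstrained. -/
structure IsFrameAt {ι : Type*} [Fintype ι] (G : E → Submodule ℝ E) (e : ι → E → E)
    (θ : E → E →L[ℝ] ι → ℝ) (x : E) : Prop where
  contDiffAt_field : ∀ i, ContDiffAt ℝ ∞ (e i) x
  contDiffAt_coeff : ContDiffAt ℝ ∞ θ x
  mem : ∀ i, e i x ∈ G x
  sum_coeff_smul : ∀ Z ∈ G x, ∑ i, θ x Z i • e i x = Z
  coeff_sum_smul : ∀ c : ι → ℝ, θ x (∑ i, c i • e i x) = c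

variable {G : E → Submodule ℝ E} {X Y : E → E} {q : E}

namespace IsLocalSection

lemma eventually (hX : IsLocalSection G X q) : ∀ᶠ x in 𝓝 q, IsLocalSection G X x :=
  eventually_eventually_nhds.2 hX

lemma eventually_contDiffAt (hX : IsLocalSection G X q) : ∀ᶠ x in 𝓝 q, ContDiffAt ℝ ∞ X x :=
  hX.mono fun _ hx => hx.1

lemma mono {H : E → Submodule ℝ E} (hX : IsLocalSection G X q) (hle : ∀ᶠ x in 𝓝 q, G x ≤ H x) :
    IsLocalSection H X q := by
  filter_upwards [hX, hle] with x hXx hx using ⟨hXx.1, hx hXx.2⟩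

lemma congr {X' : E → E} (hX : IsLocalSection G X q) (hXX' : X =ᶠ[𝓝 q] X') :
    IsLocalSection G X' q := by
  filter_upwards [hX, hXX'.eventuallyEq_nhds] with x hx hXx
  exact ⟨hx.1.congr_of_eventuallyEq hXx.symm, hXx.eq_of_nhds ▸ hx.2⟩

end IsLocalSection

lemma eventually_contDiffAt_lieBracket [CompleteSpace E]
    (hX : ∀ᶠ x in 𝓝 q, ContDiffAt ℝ ∞ X x) (hY : ∀ᶠ x in 𝓝 q, ContDiffAt ℝ ∞ Y x) :
    ∀ᶠ x in 𝓝 q, ContDiffAt ℝ ∞ (lieBracket ℝ X Y) x := by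
  filter_upwards [hX, hY] with x hXx hYx using hXx.lieBracket_vectorField hYx (by simp)

lemma lieBracket_mem_symm {x : E} {H : Submodule ℝ E} (h : lieBracket ℝ X Y x ∈ H) :
    lieBracket ℝ Y X x ∈ H := by
  rw [VectorField.lieBracket_swap]
  exact H.neg_mem h

lemma lieBracket_sum_smul_right {ι : Type*} [Fintype ι] {x : E} {e : ι → E → E} {c : ι → E → ℝ}
    (hc : ∀ i, DifferentiableAt ℝ (c i) x) (he : ∀ i, DifferentiableAt ℝ (e i) x) :
    lieBracket ℝ X (fun y => ∑ i, c i y • e i y) x =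
      ∑ i, (fderiv ℝ (c i) x (X x) • e i x + c i x • lieBracket ℝ X (e i) x) := by
  have hsum : HasFDerivAt (fun y => ∑ i, c i y • e i y)
      (∑ i, (c i x • fderiv ℝ (e i) x + (fderiv ℝ (c i) x).smulRight (e i x))) x :=
    HasFDerivAt.fun_sum fun i _ => (hc i).hasFDerivAt.smul (he i).hasFDerivAt
  simp only [VectorField.lieBracket, hsum.fderiv, sum_apply,
    add_apply, smul_apply,
    ContinuousLinearMap.smulRight_apply, map_sum, map_smul, smul_sub, ← Finset.sum_sub_distrib]
  exact Finset.sum_congr rfl fun i _ => by abel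

lemma lieBracket_add_smul_left_mem {a b g : E → E} {c : E → ℝ} {x : E} {H : Submodule ℝ E}
    (ha : DifferentiableAt ℝ a x) (hb : DifferentiableAt ℝ b x) (hc : DifferentiableAt ℝ c x)
    (hax : a x ∈ H) (h : lieBracket ℝ b g x + c x • lieBracket ℝ a g x ∈ H) :
    lieBracket ℝ (b + fun y => c y • a y) g x ∈ H := by
  rw [VectorField.lieBracket_add_left hb (hc.fun_smul ha), VectorField.lieBracket_smul_left hc ha,
    add_left_comm]
  exact H.add_mem (H.smul_mem _ hax) h

section Coefficients

variable {ι : Type*} [Fintype ι] {e : ι → E → E} {θ : E → E →L[ℝ] ι → ℝ}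

lemma IsFrameAt.linearIndependent {x : E} (h : IsFrameAt G e θ x) :
    LinearIndependent ℝ fun i => e i x :=
  Fintype.linearIndependent_iff.2 fun c hc i => by
    rw [← h.coeff_sum_smul c, hc, map_zero, Pi.zero_apply]

lemma isLocalSection_of_eventually_isFrameAt (h : ∀ᶠ x in 𝓝 q, IsFrameAt G e θ x) (i : ι) :
    IsLocalSection G (e i) q :=
  h.mono fun _ hx => ⟨hx.contDiffAt_field i, hx.mem i⟩

lemma IsFrameAt.contDiffAt_coeff_apply {x : E} (h : IsFrameAt G e θ x) (hY : ContDiffAt ℝ ∞ Y x)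
    (i : ι) : ContDiffAt ℝ ∞ (fun y => θ y (Y y) i) x :=
  contDiffAt_pi.1 (h.contDiffAt_coeff.clm_apply hY) i

lemma lieBracket_mem_of_frame (h : ∀ᶠ x in 𝓝 q, IsFrameAt G e θ x) {H : Submodule ℝ E}
    (hH : G q ≤ H) (hX : ∀ i, lieBracket ℝ X (e i) q ∈ H) (hY : IsLocalSection G Y q) :
    lieBracket ℝ X Y q ∈ H := by
  have hYe : Y =ᶠ[𝓝 q] fun y => ∑ i, θ y (Y y) i • e i y := by
    filter_upwards [h, hY] with x hx hYx using (hx.sum_coeff_smul _ hYx.2).symm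
  have hq := h.self_of_nhds
  rw [EventuallyEq.lieBracket_vectorField_eq (EventuallyEq.refl _ X) hYe,
    lieBracket_sum_smul_right
      (fun i => (hq.contDiffAt_coeff_apply hY.self_of_nhds.1 i).differentiableAt (by simp))
      (fun i => (hq.contDiffAt_field i).differentiableAt (by simp))]
  exact H.sum_mem fun i _ => H.add_mem (H.smul_mem _ (hH (hq.mem i))) (H.smul_mem _ (hX i))

lemma lieBracket_mem_of_frame_lieBracket_mem (h : ∀ᶠ x in 𝓝 q, IsFrameAt G e θ x)
    {H : Submodule ℝ E} (hH : G q ≤ H) (he : ∀ i j, lieBracket ℝ (e i) (e j) q ∈ H)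
    (hX : IsLocalSection G X q) (hY : IsLocalSection G Y q) : lieBracket ℝ X Y q ∈ H :=
  lieBracket_mem_of_frame h hH
    (fun i => lieBracket_mem_symm (lieBracket_mem_of_frame h hH (he i) hX)) hY

end Coefficients

variable [FiniteDimensional ℝ E]

/- With `T` a left inverse of the linear combination map `S q`, the coefficient map
`(T ∘ S x)⁻¹ ∘ T` has a kernel that does not depend on `x`. -/
lemma exists_smooth_coeff {ι : Type*} [Fintype ι] {e : ι → E → E}
    (he : ∀ᶠ x in 𝓝 q, ∀ i, ContDiffAt ℝ ∞ (e i) x) (hli : LinearIndependent ℝ fun i => e i q) :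
    ∃ θ : E → E →L[ℝ] ι → ℝ, ∀ᶠ x in 𝓝 q, ContDiffAt ℝ ∞ θ x ∧
      (∀ c : ι → ℝ, θ x (∑ i, c i • e i x) = c) ∧ (θ x).ker = (θ q).ker := by
  let S : E → (ι → ℝ) →L[ℝ] E := fun x => ∑ i, (ContinuousLinearMap.proj i).smulRight (e i x)
  have hS_apply (x : E) (c : ι → ℝ) : S x c = ∑ i, c i • e i x := by simp [S]
  have hS_smooth : ∀ᶠ x in 𝓝 q, ContDiffAt ℝ ∞ S x := he.mono fun x hx =>
    ContDiffAt.sum fun i _ => contDiffAt_const.smulRight (hx i)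
  obtain ⟨T, hT⟩ := (S q).toLinearMap.exists_leftInverse_of_injective <|
    LinearMap.ker_eq_bot.2 <| by
      simpa [Function.Injective, Fintype.linearCombination_apply, hS_apply] using
        linearIndependent_iff_injective_fintypeLinearCombination.1 hli
  let A : E → (ι → ℝ) →L[ℝ] ι → ℝ := fun x => T.toContinuousLinearMap.comp (S x)
  have hA_smooth : ∀ᶠ x in 𝓝 q, ContDiffAt ℝ ∞ A x := hS_smooth.mono fun x hx =>
    contDiffAt_const.clm_comp hx
  have hA_inv : ∀ᶠ x in 𝓝 q, (A x).IsInvertible := by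
    refine hA_smooth.self_of_nhds.continuousAt.eventually_mem
      (s := {B : (ι → ℝ) →L[ℝ] ι → ℝ | B.IsInvertible}) ?_
    have hAq : A q = ContinuousLinearMap.id ℝ _ :=
      ContinuousLinearMap.ext fun c => LinearMap.congr_fun hT c
    rw [hAq]
    exact (ContinuousLinearEquiv.refl ℝ (ι → ℝ)).nhds
  have hker {x : E} (hx : (A x).IsInvertible) :
      ((A x).inverse.comp T.toContinuousLinearMap).ker = LinearMap.ker T := by
    ext v
    simp [hx.inverse_apply_eq]
  refine ⟨fun x => (A x).inverse.comp T.toContinuousLinearMap, ?_⟩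
  filter_upwards [hA_smooth, hA_inv] with x hx hinv
  refine ⟨(hinv.contDiffAt_map_inverse.comp x hx).clm_comp contDiffAt_const, fun c => ?_,
    (hker hinv).trans (hker hA_inv.self_of_nhds).symm⟩
  rw [← hS_apply]
  exact hinv.inverse_apply_self c

theorem exists_isFrameAt {ι : Type*} [Fintype ι] {e : ι → E → E}
    (hrank : ∀ᶠ x in 𝓝 q, Module.finrank ℝ (G x) = Fintype.card ι)
    (he : ∀ i, IsLocalSection G (e i) q) (hli : LinearIndependent ℝ fun i => e i q) :
    ∃ θ : E → E →L[ℝ] ι → ℝ, ∀ᶠ x in 𝓝 q, IsFrameAt G e θ x ∧ (θ x).ker = (θ q).ker := by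
  have hsec : ∀ᶠ x in 𝓝 q, ∀ i, ContDiffAt ℝ ∞ (e i) x ∧ e i x ∈ G x := eventually_all.2 he
  obtain ⟨θ, hθ⟩ := exists_smooth_coeff (hsec.mono fun x hx i => (hx i).1) hli
  refine ⟨θ, ?_⟩
  filter_upwards [hθ, hsec, hrank] with x ⟨hsmooth, hcoeff, hker⟩ hsecx hrankx
  have hlix : LinearIndependent ℝ fun i => e i x :=
    Fintype.linearIndependent_iff.2 fun c hc i => by
      rw [← hcoeff c, hc, map_zero, Pi.zero_apply]
  have hspan : Submodule.span ℝ (range fun i => e i x) = G x :=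
    Submodule.eq_of_le_of_finrank_eq (Submodule.span_le.2 (range_subset_iff.2 fun i => (hsecx i).2))
      (by rw [finrank_span_eq_card hlix, hrankx])
  refine ⟨⟨fun i => (hsecx i).1, hsmooth, fun i => (hsecx i).2, fun Z hZ => ?_, hcoeff⟩, hker⟩
  obtain ⟨c, rfl⟩ := (Submodule.mem_span_range_iff_exists_fun ℝ).1 (hspan ▸ hZ)
  rw [hcoeff]

theorem exists_frame_of_exists_section {r : ℕ}
    (hrank : ∀ᶠ x in 𝓝 q, Module.finrank ℝ (G x) = r)
    (hsec : ∀ v ∈ G q, ∃ X, IsLocalSection G X q ∧ X q = v) :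
    ∃ (e : Fin r → E → E) (θ : E → E →L[ℝ] Fin r → ℝ),
      ∀ᶠ x in 𝓝 q, IsFrameAt G e θ x ∧ (θ x).ker = (θ q).ker := by
  let b := Module.finBasisOfFinrankEq ℝ (G q) hrank.self_of_nhds
  choose e he heq using fun i => hsec (b i) (b i).2
  have hli : LinearIndependent ℝ fun i => e i q := by
    simp only [heq]
    exact b.linearIndependent.map' (G q).subtype (Submodule.ker_subtype _)
  obtain ⟨θ, hθ⟩ := exists_isFrameAt (by simpa using hrank) he hli
  exact ⟨e, θ, hθ⟩

end Frames

/-! ### Goursat flags and their characteristic fields -/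

section Goursat

variable {E : Type*} [NormedAddCommGroup E] [NormedSpace ℝ E]

/-- Near `q`, bracketing with `X` preserves the sections of the distribution `G`, that is, `X` is a
(Cauchy) characteristic field of `G`. -/
def IsCharacteristicAt (G : E → Submodule ℝ E) (X : E → E) (q : E) : Prop :=
  ∀ᶠ x in 𝓝 q, ∀ Y, IsLocalSection G Y x → lieBracket ℝ X Y x ∈ G x

/-- A Goursat flag `G 0 ⊂ G 1 ⊂ ⋯ ⊂ G (n - 2)` on the open set `O` of an `n`-dimensional space,
`G (k + 1)` being generated by `G k` and its brackets, together with a drift `f` normalising the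
characteristic fields of `G k` modulo `G k` for `1 ≤ k ≤ n - 3`. The distributions `G k` with
`n - 2 < k` are unconstrained. -/
structure IsGoursatSystem (n : ℕ) (O : Set E) (G : ℕ → E → Submodule ℝ E) (f : E → E) : Prop where
  isOpen : IsOpen O
  finrank_eq : Module.finrank ℝ E = n
  contDiffAt_drift : ∀ x ∈ O, ContDiffAt ℝ ∞ f x
  finrank_flag : ∀ k, k + 2 ≤ n → ∀ q ∈ O, Module.finrank ℝ (G k q) = k + 2
  exists_section : ∀ k, k + 2 ≤ n → ∀ q ∈ O, ∀ v ∈ G k q, ∃ X, IsLocalSection (G k) X q ∧ X q = v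
  le_succ : ∀ k, k + 3 ≤ n → ∀ q ∈ O, G k q ≤ G (k + 1) q
  lieBracket_mem_succ : ∀ k, k + 3 ≤ n → ∀ q ∈ O, ∀ X Y, IsLocalSection (G k) X q →
    IsLocalSection (G k) Y q → lieBracket ℝ X Y q ∈ G (k + 1) q
  exists_lieBracket_notMem : ∀ k, k + 3 ≤ n → ∀ q ∈ O,
    ∃ X Y, IsLocalSection (G k) X q ∧ IsLocalSection (G k) Y q ∧ lieBracket ℝ X Y q ∉ G k q
  lieBracket_drift_mem : ∀ k, 1 ≤ k → k + 3 ≤ n → ∀ q ∈ O, ∀ X, IsLocalSection (G k) X q →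
    IsCharacteristicAt (G k) X q → lieBracket ℝ f X q ∈ G k q

lemma IsCharacteristicAt.eventually {G : E → Submodule ℝ E} {X : E → E} {q : E}
    (h : IsCharacteristicAt G X q) : ∀ᶠ x in 𝓝 q, IsCharacteristicAt G X x :=
  eventually_eventually_nhds.2 h

lemma IsCharacteristicAt.congr_field {G : E → Submodule ℝ E} {X X' : E → E} {q : E}
    (h : IsCharacteristicAt G X q) (hX : X =ᶠ[𝓝 q] X') : IsCharacteristicAt G X' q := by
  filter_upwards [h, hX.eventuallyEq_nhds] with x hx hXx Y hY
  rw [← hXx.lieBracket_vectorField_eq (EventuallyEq.refl _ Y)]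
  exact hx Y hY

lemma isCharacteristicAt_of_frame {ι : Type*} [Fintype ι] {G : E → Submodule ℝ E} {e : ι → E → E}
    {θ : E → E →L[ℝ] ι → ℝ} {X : E → E} {q : E} (h : ∀ᶠ x in 𝓝 q, IsFrameAt G e θ x)
    (hX : ∀ᶠ x in 𝓝 q, ∀ i, lieBracket ℝ X (e i) x ∈ G x) : IsCharacteristicAt G X q := by
  filter_upwards [eventually_eventually_nhds.2 h, hX] with x hframe hXx Y hY
  exact lieBracket_mem_of_frame hframe le_rfl hXx hY

namespace IsGoursatSystem

variable {n : ℕ} {O : Set E} {G : ℕ → E → Submodule ℝ E} {f X Y : E → E} {q : E} {k : ℕ}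

lemma mono {O' : Set E} (h : IsGoursatSystem n O G f) (hO' : IsOpen O') (hsub : O' ⊆ O) :
    IsGoursatSystem n O' G f where
  isOpen := hO'
  finrank_eq := h.finrank_eq
  contDiffAt_drift x hx := h.contDiffAt_drift x (hsub hx)
  finrank_flag k hk x hx := h.finrank_flag k hk x (hsub hx)
  exists_section k hk x hx := h.exists_section k hk x (hsub hx)
  le_succ k hk x hx := h.le_succ k hk x (hsub hx)
  lieBracket_mem_succ k hk x hx := h.lieBracket_mem_succ k hk x (hsub hx)
  exists_lieBracket_notMem k hk x hx := h.exists_lieBracket_notMem k hk x (hsub hx)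
  lieBracket_drift_mem k h1 hk x hx := h.lieBracket_drift_mem k h1 hk x (hsub hx)

lemma eventually_mem (h : IsGoursatSystem n O G f) (hq : q ∈ O) : ∀ᶠ x in 𝓝 q, x ∈ O :=
  h.isOpen.mem_nhds hq

lemma isLocalSection_succ (h : IsGoursatSystem n O G f) (hk : k + 3 ≤ n) (hq : q ∈ O)
    (hX : IsLocalSection (G k) X q) : IsLocalSection (G (k + 1)) X q :=
  hX.mono ((h.eventually_mem hq).mono (h.le_succ k hk))

lemma exists_frame_lieBracket_notMem {ι : Type*} [Fintype ι] {e : ι → E → E}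
    {θ : E → E →L[ℝ] ι → ℝ} (h : IsGoursatSystem n O G f) (hk : k + 3 ≤ n)
    (hq : q ∈ O) (hframe : ∀ᶠ x in 𝓝 q, IsFrameAt (G k) e θ x) :
    ∃ i j, lieBracket ℝ (e i) (e j) q ∉ G k q := by
  by_contra! hcon
  obtain ⟨X, Y, hX, hY, hXY⟩ := h.exists_lieBracket_notMem k hk q hq
  exact hXY (lieBracket_mem_of_frame_lieBracket_mem hframe le_rfl hcon hX hY)

variable [FiniteDimensional ℝ E]

lemma exists_frame (h : IsGoursatSystem n O G f) (hk : k + 2 ≤ n) (hq : q ∈ O) :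
    ∃ (e : Fin (k + 2) → E → E) (θ : E → E →L[ℝ] Fin (k + 2) → ℝ),
      ∀ᶠ x in 𝓝 q, IsFrameAt (G k) e θ x ∧ (θ x).ker = (θ q).ker :=
  exists_frame_of_exists_section ((h.eventually_mem hq).mono (h.finrank_flag k hk))
    (h.exists_section k hk q hq)

lemma isLocalSection_lieBracket (h : IsGoursatSystem n O G f) (hk : k + 3 ≤ n) (hq : q ∈ O)
    (hX : IsLocalSection (G k) X q) (hY : IsLocalSection (G k) Y q) :
    IsLocalSection (G (k + 1)) (lieBracket ℝ X Y) q := by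
  have := FiniteDimensional.complete ℝ E
  filter_upwards [eventually_contDiffAt_lieBracket hX.eventually_contDiffAt
    hY.eventually_contDiffAt, h.eventually_mem hq, hX.eventually, hY.eventually]
    with x hsmooth hx hXx hYx
  exact ⟨hsmooth, h.lieBracket_mem_succ k hk x hx X Y hXx hYx⟩

lemma exists_frame_option {ι : Type*} [Fintype ι] {e : ι → E → E} {θ : E → E →L[ℝ] ι → ℝ}
    (h : IsGoursatSystem n O G f) (hk : k + 3 ≤ n) (hq : q ∈ O) (hι : Fintype.card ι = k + 2)
    (hframe : ∀ᶠ x in 𝓝 q, IsFrameAt (G k) e θ x) (hX : IsLocalSection (G (k + 1)) X q)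
    (hXq : X q ∉ G k q) :
    ∃ θ' : E → E →L[ℝ] Option ι → ℝ,
      ∀ᶠ x in 𝓝 q, IsFrameAt (G (k + 1)) (fun o => o.elim X e) θ' x := by
  have hrank : ∀ᶠ x in 𝓝 q, Module.finrank ℝ (G (k + 1) x) = Fintype.card (Option ι) :=
    (h.eventually_mem hq).mono fun x hx => by
      rw [h.finrank_flag (k + 1) (by omega) x hx, Fintype.card_option, hι]
  have hsec : ∀ o : Option ι, IsLocalSection (G (k + 1)) (o.elim X e) q
    | none => hX
    | some i => h.isLocalSection_succ hk hq (isLocalSection_of_eventually_isFrameAt hframe i)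
  have hq' := hframe.self_of_nhds
  have hli : LinearIndependent ℝ fun o : Option ι => o.elim X e q := by
    refine linearIndependent_option.2 ⟨hq'.linearIndependent, fun hspan => hXq ?_⟩
    exact Submodule.span_le.2 (range_subset_iff.2 hq'.mem) hspan
  obtain ⟨θ', hθ'⟩ := exists_isFrameAt hrank hsec hli
  exact ⟨θ', hθ'.mono fun x hx => hx.1⟩

/- `G (k + 1)` has a frame consisting of a frame `e` of `G k` and one bracket `[e i, e j]`; the
Jacobi identity controls `[X, [e i, e j]]`. -/
lemma isCharacteristicAt_succ (h : IsGoursatSystem n O G f) (hk : k + 3 ≤ n) (hq : q ∈ O)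
    (hXsmooth : ∀ᶠ x in 𝓝 q, ContDiffAt ℝ ∞ X x) (hX : IsCharacteristicAt (G k) X q) :
    IsCharacteristicAt (G (k + 1)) X q := by
  have := FiniteDimensional.complete ℝ E
  obtain ⟨e, θ, hframe⟩ := h.exists_frame (k := k) (by omega) hq
  replace hframe := hframe.mono fun x hx => hx.1
  have he := isLocalSection_of_eventually_isFrameAt hframe
  obtain ⟨i, j, hij⟩ := h.exists_frame_lieBracket_notMem hk hq hframe
  obtain ⟨θ', hframe'⟩ := h.exists_frame_option hk hq (by simp) hframe
    (h.isLocalSection_lieBracket hk hq (he i) (he j)) hij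
  have hXe (l : Fin (k + 2)) : IsLocalSection (G k) (lieBracket ℝ X (e l)) q := by
    filter_upwards [eventually_contDiffAt_lieBracket hXsmooth (he l).eventually_contDiffAt, hX,
      (he l).eventually] with x hsmooth hXx hel using ⟨hsmooth, hXx _ hel⟩
  refine isCharacteristicAt_of_frame hframe' ?_
  filter_upwards [h.eventually_mem hq, eventually_all.2 fun l => (hXe l).eventually,
    eventually_all.2 fun l => (he l).eventually, hXsmooth] with x hx hXex hex hXx
  rintro (_ | l)
  · have hle : minSmoothness ℝ 2 ≤ ∞ := by
      rw [minSmoothness_of_isRCLikeNormedField]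
      exact WithTop.coe_le_coe.2 le_top
    change lieBracket ℝ X (lieBracket ℝ (e i) (e j)) x ∈ _
    rw [VectorField.leibniz_identity_lieBracket hle hXx
      (hex i).self_of_nhds.1 (hex j).self_of_nhds.1]
    exact Submodule.add_mem _ (h.lieBracket_mem_succ k hk x hx _ _ (hXex i) (hex j))
      (h.lieBracket_mem_succ k hk x hx _ _ (hex i) (hXex j))
  · exact h.le_succ k hk x hx (hXex l).self_of_nhds.2

section RankTwo

variable {a b g : E → E}

lemma exists_frame_pair (h : IsGoursatSystem n O G f) (hn : 2 ≤ n) (hq : q ∈ O)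
    (ha : IsLocalSection (G 0) a q) (hb : IsLocalSection (G 0) b q)
    (hli : LinearIndependent ℝ ![a q, b q]) :
    ∃ θ : E → E →L[ℝ] Fin 2 → ℝ, ∀ᶠ x in 𝓝 q, IsFrameAt (G 0) ![a, b] θ x := by
  have hrank := (h.eventually_mem hq).mono (h.finrank_flag 0 hn)
  have hli' : LinearIndependent ℝ fun i => (![a, b] i) q := by
    convert hli using 2 with i
    fin_cases i <;> rfl
  obtain ⟨θ, hθ⟩ := exists_isFrameAt hrank (Fin.forall_fin_two.2 ⟨ha, hb⟩) hli'
  exact ⟨θ, hθ.mono fun x hx => hx.1⟩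

lemma exists_linearIndependent_pair (h : IsGoursatSystem n O G f) (hn : 2 ≤ n) (hq : q ∈ O) :
    ∃ a b, IsLocalSection (G 0) a q ∧ IsLocalSection (G 0) b q ∧
      LinearIndependent ℝ ![a q, b q] := by
  obtain ⟨e, θ, hframe⟩ := h.exists_frame (k := 0) hn hq
  replace hframe := hframe.mono fun x hx => hx.1
  refine ⟨e 0, e 1, isLocalSection_of_eventually_isFrameAt hframe 0,
    isLocalSection_of_eventually_isFrameAt hframe 1, ?_⟩
  convert hframe.self_of_nhds.linearIndependent using 2 with i
  fin_cases i <;> rfl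

lemma lieBracket_notMem_of_linearIndependent (h : IsGoursatSystem n O G f) (hn : 3 ≤ n)
    (hq : q ∈ O) (ha : IsLocalSection (G 0) a q) (hb : IsLocalSection (G 0) b q)
    (hli : LinearIndependent ℝ ![a q, b q]) : lieBracket ℝ a b q ∉ G 0 q := by
  intro hmem
  obtain ⟨θ, hframe⟩ := h.exists_frame_pair (by omega) hq ha hb hli
  obtain ⟨i, j, hij⟩ := h.exists_frame_lieBracket_notMem hn hq hframe
  have hmem' := lieBracket_mem_symm hmem
  refine hij ?_
  fin_cases i <;> fin_cases j <;> simp [hmem, hmem']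

lemma lieBracket_lieBracket_notMem (h : IsGoursatSystem n O G f) (hn : 4 ≤ n) (hq : q ∈ O)
    (ha : IsLocalSection (G 0) a q) (hb : IsLocalSection (G 0) b q)
    (hli : LinearIndependent ℝ ![a q, b q]) :
    lieBracket ℝ a (lieBracket ℝ a b) q ∉ G 1 q ∨ lieBracket ℝ b (lieBracket ℝ a b) q ∉ G 1 q := by
  by_contra! hcon
  obtain ⟨θ, hframe⟩ := h.exists_frame_pair (by omega) hq ha hb hli
  obtain ⟨θ', hframe'⟩ := h.exists_frame_option (by omega) hq (by simp) hframe
    (h.isLocalSection_lieBracket (by omega) hq ha hb)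
    (h.lieBracket_notMem_of_linearIndependent (by omega) hq ha hb hli)
  have he := isLocalSection_of_eventually_isFrameAt hframe
  have hpair (i : Fin 2) : lieBracket ℝ (![a, b] i) (lieBracket ℝ a b) q ∈ G 1 q := by
    fin_cases i
    exacts [hcon.1, hcon.2]
  obtain ⟨i, j, hij⟩ := h.exists_frame_lieBracket_notMem hn hq hframe'
  refine hij ?_
  rcases i with _ | i <;> rcases j with _ | j
  · simp
  · exact lieBracket_mem_symm (hpair j)
  · exact hpair i
  · exact h.lieBracket_mem_succ 0 (by omega) q hq _ _ (he i) (he j)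

/- `G 2` is spanned by `G 1` and `[a, g]`, so for a suitable function `c` the field `b + c • a`
satisfies `[b + c • a, g] ∈ G 1`. -/
lemma exists_isCharacteristicAt_one_of_lieBracket_notMem (h : IsGoursatSystem n O G f) (hn : 4 ≤ n)
    (hq : q ∈ O) (ha : IsLocalSection (G 0) a q) (hb : IsLocalSection (G 0) b q)
    (hli : LinearIndependent ℝ ![a q, b q]) (hg : IsLocalSection (G 1) g q) (hgq : g q ∉ G 0 q)
    (hag : lieBracket ℝ a g q ∉ G 1 q) :
    ∃ X, IsLocalSection (G 0) X q ∧ X q ≠ 0 ∧ IsCharacteristicAt (G 1) X q := by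
  obtain ⟨θ, hframe⟩ := h.exists_frame_pair (by omega) hq ha hb hli
  obtain ⟨θ₁, hframe₁⟩ := h.exists_frame_option (by omega) hq (by simp) hframe hg hgq
  have ha₁ := h.isLocalSection_succ (by omega) hq ha
  have hb₁ := h.isLocalSection_succ (by omega) hq hb
  obtain ⟨θ₂, hframe₂⟩ := h.exists_frame_option (by omega) hq (by simp) hframe₁
    (h.isLocalSection_lieBracket hn hq ha₁ hg) hag
  have hbg := h.isLocalSection_lieBracket hn hq hb₁ hg
  let c : E → ℝ := fun x => -θ₂ x (lieBracket ℝ b g x) none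
  have hc : ∀ᶠ x in 𝓝 q, ContDiffAt ℝ ∞ c x := by
    filter_upwards [hframe₂, hbg] with x hx hbgx using (hx.contDiffAt_coeff_apply hbgx.1 none).neg
  have hX : IsLocalSection (G 0) (b + fun x => c x • a x) q := by
    filter_upwards [ha, hb, hc] with x hax hbx hcx
    exact ⟨hbx.1.add (hcx.smul hax.1), (G 0 x).add_mem hbx.2 ((G 0 x).smul_mem _ hax.2)⟩
  refine ⟨_, hX, fun hzero => ?_, isCharacteristicAt_of_frame hframe₁ ?_⟩
  · have := LinearIndependent.pair_iff.1 hli (c q) 1 (by simpa [add_comm] using hzero)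
    exact one_ne_zero this.2
  filter_upwards [h.eventually_mem hq, hX.eventually, hframe₂, hframe₁, ha, hb, hc, hbg,
    eventually_all.2 fun i => (isLocalSection_of_eventually_isFrameAt hframe i).eventually]
    with x hx hXx hframe₂x hframe₁x hax hbx hcx hbgx hex
  rintro (_ | i)
  · change lieBracket ℝ (b + fun x => c x • a x) g x ∈ G 1 x
    refine lieBracket_add_smul_left_mem (hax.1.differentiableAt (by simp))
      (hbx.1.differentiableAt (by simp)) (hcx.differentiableAt (by simp))
      (h.le_succ 0 (by omega) x hx hax.2) ?_
    have hexpand := hframe₂x.sum_coeff_smul _ hbgx.2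
    rw [Fintype.sum_option] at hexpand
    rw [← hexpand]
    simp only [Option.elim, c, neg_smul, add_neg_cancel_comm]
    exact (G 1 x).sum_mem fun o _ => (G 1 x).smul_mem _ (hframe₁x.mem o)
  · exact h.lieBracket_mem_succ 0 (by omega) x hx _ _ hXx (hex i)

end RankTwo

lemma exists_isCharacteristicAt_one (h : IsGoursatSystem n O G f) (hn : 3 ≤ n) (hq : q ∈ O) :
    ∃ X, IsLocalSection (G 0) X q ∧ X q ≠ 0 ∧ IsCharacteristicAt (G 1) X q := by
  obtain ⟨a, b, ha, hb, hli⟩ := h.exists_linearIndependent_pair (by omega) hq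
  rcases hn.lt_or_eq with hn | rfl
  · have hg := h.isLocalSection_lieBracket (by omega) hq ha hb
    have hgq := h.lieBracket_notMem_of_linearIndependent (by omega) hq ha hb hli
    rcases h.lieBracket_lieBracket_notMem hn hq ha hb hli with hag | hbg
    · exact h.exists_isCharacteristicAt_one_of_lieBracket_notMem hn hq ha hb hli hg hgq hag
    · exact h.exists_isCharacteristicAt_one_of_lieBracket_notMem hn hq hb ha
        (LinearIndependent.pair_symm_iff.1 hli) hg hgq hbg
  · refine ⟨a, ha, hli.ne_zero 0, (h.eventually_mem hq).mono fun x hx Y _ => ?_⟩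
    have htop : G 1 x = ⊤ := Submodule.eq_top_of_finrank_eq <| by
      rw [h.finrank_flag 1 le_rfl x hx, h.finrank_eq]
    exact htop ▸ Submodule.mem_top

theorem exists_isCharacteristicAt (h : IsGoursatSystem n O G f) (hn : 3 ≤ n) (hq : q ∈ O) :
    ∃ X, IsLocalSection (G 0) X q ∧ X q ≠ 0 ∧
      ∀ k, 1 ≤ k → k + 2 ≤ n → IsCharacteristicAt (G k) X q := by
  obtain ⟨X, hX, hXq, hX₁⟩ := h.exists_isCharacteristicAt_one hn hq
  refine ⟨X, hX, hXq, fun k hk => ?_⟩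
  induction k, hk using Nat.le_induction with
  | base => exact fun _ => hX₁
  | succ k _ ih =>
    exact fun hk => h.isCharacteristicAt_succ hk hq hX.eventually_contDiffAt (ih (by omega))

end IsGoursatSystem

end Goursat

/-! ### Transport along diffeomorphisms -/

section Transport

variable {E F : Type*} [NormedAddCommGroup E] [NormedSpace ℝ E] [NormedAddCommGroup F]
  [NormedSpace ℝ F]

/-- The distribution `(Dκ)⁻¹ G` on the source of `κ`. -/
def pullbackDistribution (κ : F → E) (G : E → Submodule ℝ E) (z : F) : Submodule ℝ F :=
  (G (κ z)).comap (fderiv ℝ κ z).toLinearMap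

lemma mem_pullbackDistribution {κ : F → E} {G : E → Submodule ℝ E} {z v : F} :
    v ∈ pullbackDistribution κ G z ↔ fderiv ℝ κ z v ∈ G (κ z) :=
  Iff.rfl

namespace IsSmoothDiffeo

variable {κ : OpenPartialHomeomorph F E} {G : E → Submodule ℝ E} {X Y : E → E} {z : F}

lemma fderiv_pullback_apply (hκ : IsSmoothDiffeo κ) (hz : z ∈ κ.source) :
    fderiv ℝ κ z (VectorField.pullback ℝ κ X z) = X (κ z) :=
  (hκ.isInvertible_fderiv z hz).self_apply_inverse _

lemma fderiv_symm (hκ : IsSmoothDiffeo κ) {y : E} (hy : y ∈ κ.target) :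
    fderiv ℝ κ.symm y = (fderiv ℝ κ (κ.symm y)).inverse := by
  have hx := κ.map_target hy
  obtain ⟨D, hD⟩ := hκ.isInvertible_fderiv _ hx
  have hderiv : HasFDerivAt κ (D : F →L[ℝ] E) (κ.symm y) :=
    hD ▸ ((hκ.contDiffAt _ hx).differentiableAt (by simp)).hasFDerivAt
  rw [(κ.hasFDerivAt_symm hy hderiv).fderiv, ← hD, ContinuousLinearMap.inverse_equiv]

lemma finrank_pullbackDistribution (hκ : IsSmoothDiffeo κ) (hz : z ∈ κ.source) :
    Module.finrank ℝ (pullbackDistribution κ G z) = Module.finrank ℝ (G (κ z)) := by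
  obtain ⟨D, hD⟩ := hκ.isInvertible_fderiv z hz
  rw [pullbackDistribution, ← hD]
  have hmap : ((G (κ z)).comap D.toLinearEquiv.toLinearMap).map D.toLinearEquiv.toLinearMap =
      G (κ z) := Submodule.map_comap_eq_of_surjective D.surjective _
  conv_rhs => rw [← hmap]
  exact (LinearEquiv.finrank_map_eq D.toLinearEquiv _).symm

variable [FiniteDimensional ℝ F]

lemma contDiffAt_pullback (hκ : IsSmoothDiffeo κ) (hz : z ∈ κ.source)
    (hX : ContDiffAt ℝ ∞ X (κ z)) : ContDiffAt ℝ ∞ (VectorField.pullback ℝ κ X) z := by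
  have := FiniteDimensional.complete ℝ F
  have hfderiv : ContDiffAt ℝ ∞ (fderiv ℝ κ) z := (hκ.contDiffAt z hz).fderiv_right (by simp)
  exact ((hκ.isInvertible_fderiv z hz).contDiffAt_map_inverse.comp z hfderiv).clm_apply
    (hX.comp z (hκ.contDiffAt z hz))

lemma isLocalSection_pullback (hκ : IsSmoothDiffeo κ) (hz : z ∈ κ.source)
    (hX : IsLocalSection G X (κ z)) :
    IsLocalSection (pullbackDistribution κ G) (VectorField.pullback ℝ κ X) z := by
  filter_upwards [κ.open_source.mem_nhds hz, (κ.continuousAt hz).eventually hX] with w hw hXw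
  refine ⟨hκ.contDiffAt_pullback hw hXw.1, ?_⟩
  rw [mem_pullbackDistribution, hκ.fderiv_pullback_apply hw]
  exact hXw.2

lemma exists_isLocalSection_eventuallyEq_pullback (hκ : IsSmoothDiffeo κ) (hz : z ∈ κ.source)
    {X' : F → F} (hX' : IsLocalSection (pullbackDistribution κ G) X' z) :
    ∃ X, IsLocalSection G X (κ z) ∧ X' =ᶠ[𝓝 z] VectorField.pullback ℝ κ X := by
  have := FiniteDimensional.complete ℝ F
  refine ⟨fun y => fderiv ℝ κ (κ.symm y) (X' (κ.symm y)), (κ.eventually_nhds _ hz).2 ?_, ?_⟩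
  · filter_upwards [κ.open_source.mem_nhds hz, hX'] with w hw hX'w
    have hsymm := hκ.contDiffAt_symm (κ.map_source hw)
    have hpush : ContDiffAt ℝ ∞ (fun w => fderiv ℝ κ w (X' w)) (κ.symm (κ w)) := by
      rw [κ.left_inv hw]
      exact ((hκ.contDiffAt w hw).fderiv_right (m := ∞) (by simp)).clm_apply hX'w.1
    refine ⟨hpush.comp (κ w) hsymm, ?_⟩
    simp only [κ.left_inv hw]
    exact hX'w.2
  · filter_upwards [κ.open_source.mem_nhds hz] with w hw
    rw [VectorField.pullback, κ.left_inv hw, (hκ.isInvertible_fderiv w hw).inverse_apply_self]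

lemma fderiv_lieBracket_pullback (hκ : IsSmoothDiffeo κ) (hz : z ∈ κ.source)
    (hX : ContDiffAt ℝ ∞ X (κ z)) (hY : ContDiffAt ℝ ∞ Y (κ z)) :
    fderiv ℝ κ z (lieBracket ℝ (VectorField.pullback ℝ κ X) (VectorField.pullback ℝ κ Y) z) =
      lieBracket ℝ X Y (κ z) := by
  have := FiniteDimensional.complete ℝ F
  have hle : minSmoothness ℝ 2 ≤ ∞ := by
    rw [minSmoothness_of_isRCLikeNormedField]
    exact WithTop.coe_le_coe.2 le_top
  rw [← VectorField.pullback_lieBracket hle (hκ.contDiffAt z hz) (hX.differentiableAt (by simp))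
    (hY.differentiableAt (by simp)), hκ.fderiv_pullback_apply hz]

lemma isCharacteristicAt_of_pullback (hκ : IsSmoothDiffeo κ) (hz : z ∈ κ.source)
    (hX : ∀ᶠ y in 𝓝 (κ z), ContDiffAt ℝ ∞ X y)
    (h : IsCharacteristicAt (pullbackDistribution κ G) (VectorField.pullback ℝ κ X) z) :
    IsCharacteristicAt G X (κ z) := by
  refine (κ.eventually_nhds _ hz).2 ?_
  filter_upwards [h, κ.open_source.mem_nhds hz, (κ.continuousAt hz).eventually hX]
    with w hchar hw hXw Y hY
  have hmem := hchar _ (hκ.isLocalSection_pullback hw hY)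
  rwa [mem_pullbackDistribution, hκ.fderiv_lieBracket_pullback hw hXw hY.self_of_nhds.1] at hmem

lemma isCharacteristicAt_pullback (hκ : IsSmoothDiffeo κ) (hz : z ∈ κ.source)
    (hX : ∀ᶠ y in 𝓝 (κ z), ContDiffAt ℝ ∞ X y) (h : IsCharacteristicAt G X (κ z)) :
    IsCharacteristicAt (pullbackDistribution κ G) (VectorField.pullback ℝ κ X) z := by
  filter_upwards [κ.open_source.mem_nhds hz, (κ.continuousAt hz).eventually (hX.and h)]
    with w hw ⟨hXw, hchar⟩ Y' hY'
  obtain ⟨Y, hY, hYY'⟩ := hκ.exists_isLocalSection_eventuallyEq_pullback hw hY'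
  rw [mem_pullbackDistribution, (EventuallyEq.refl _ _).lieBracket_vectorField_eq hYY',
    hκ.fderiv_lieBracket_pullback hw hXw hY.self_of_nhds.1]
  exact hchar Y hY

theorem isGoursatSystem_pullback (hκ : IsSmoothDiffeo κ) {n : ℕ} {O : Set E}
    {G : ℕ → E → Submodule ℝ E} {f : E → E} (h : IsGoursatSystem n O G f) (hO : κ.target ⊆ O)
    (hF : Module.finrank ℝ F = n) :
    IsGoursatSystem n κ.source (fun k => pullbackDistribution κ (G k))
      (VectorField.pullback ℝ κ f) := by
  have hmaps {z : F} (hz : z ∈ κ.source) : κ z ∈ O := hO (κ.map_source hz)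
  refine ⟨κ.open_source, hF,
    fun z hz => hκ.contDiffAt_pullback hz (h.contDiffAt_drift _ (hmaps hz)),
    fun k hk z hz => ?_, fun k hk z hz v hv => ?_, fun k hk z hz v hv => ?_,
    fun k hk z hz X' Y' hX' hY' => ?_, fun k hk z hz => ?_, fun k hk₁ hk z hz X' hX' hchar => ?_⟩
  · rw [hκ.finrank_pullbackDistribution hz, h.finrank_flag k hk _ (hmaps hz)]
  · obtain ⟨X, hX, hXv⟩ := h.exists_section k hk _ (hmaps hz) _ (mem_pullbackDistribution.1 hv)
    refine ⟨_, hκ.isLocalSection_pullback hz hX, ?_⟩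
    rw [VectorField.pullback, hXv, (hκ.isInvertible_fderiv z hz).inverse_apply_self]
  · exact h.le_succ k hk _ (hmaps hz) hv
  · obtain ⟨X, hX, hXX'⟩ := hκ.exists_isLocalSection_eventuallyEq_pullback hz hX'
    obtain ⟨Y, hY, hYY'⟩ := hκ.exists_isLocalSection_eventuallyEq_pullback hz hY'
    rw [mem_pullbackDistribution, hXX'.lieBracket_vectorField_eq hYY',
      hκ.fderiv_lieBracket_pullback hz hX.self_of_nhds.1 hY.self_of_nhds.1]
    exact h.lieBracket_mem_succ k hk _ (hmaps hz) X Y hX hY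
  · obtain ⟨X, Y, hX, hY, hXY⟩ := h.exists_lieBracket_notMem k hk _ (hmaps hz)
    refine ⟨_, _, hκ.isLocalSection_pullback hz hX, hκ.isLocalSection_pullback hz hY, ?_⟩
    rwa [mem_pullbackDistribution,
      hκ.fderiv_lieBracket_pullback hz hX.self_of_nhds.1 hY.self_of_nhds.1]
  · obtain ⟨X, hX, hXX'⟩ := hκ.exists_isLocalSection_eventuallyEq_pullback hz hX'
    rw [mem_pullbackDistribution, (EventuallyEq.refl _ _).lieBracket_vectorField_eq hXX',
      hκ.fderiv_lieBracket_pullback hz (h.contDiffAt_drift _ (hmaps hz)) hX.self_of_nhds.1]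
    exact h.lieBracket_drift_mem k hk₁ hk _ (hmaps hz) X hX
      (hκ.isCharacteristicAt_of_pullback hz hX.eventually_contDiffAt (hchar.congr_field hXX'))

end IsSmoothDiffeo

end Transport

/-! ### Triangular coordinates -/

section Triangular

variable {E F : Type*} [NormedAddCommGroup E] [NormedSpace ℝ E] [NormedAddCommGroup F]
  [NormedSpace ℝ F]

/-- The first `m` of the functions `z`, together with the distinguished function `t`. -/
def coordMap (z : ℕ → E → ℝ) (t : E → ℝ) (m : ℕ) (x : E) : (Fin m → ℝ) × ℝ :=
  (fun i => z i x, t x)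

/-- The functions `z 0, …, z p, t` separate tangent vectors at `x`, and the control system with
drift `f` and control distribution `G` is triangular in them: along every admissible velocity
`f x + w` one has `ż j = Φ j (z 0, …, z (j + 1), t) + z (j + 1) * ṫ` for `j < p`. -/
structure IsTriangularAt (p : ℕ) (G : E → Submodule ℝ E) (f : E → E) (z : ℕ → E → ℝ) (t : E → ℝ)
    (Φ : (j : ℕ) → (Fin (j + 2) → ℝ) × ℝ → ℝ) (x : E) : Prop where
  contDiffAt_coord : ∀ j ≤ p, ContDiffAt ℝ ∞ (z j) x
  contDiffAt_time : ContDiffAt ℝ ∞ t x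
  eq_zero_of_fderiv_eq_zero : ∀ w, (∀ j ≤ p, fderiv ℝ (z j) x w = 0) → fderiv ℝ t x w = 0 → w = 0
  contDiffAt_drift : ∀ j < p, ContDiffAt ℝ ∞ (Φ j) (coordMap z t (j + 2) x)
  fderiv_coord : ∀ j < p, ∀ w ∈ G x, fderiv ℝ (z j) x (f x + w) =
    Φ j (coordMap z t (j + 2) x) + z (j + 1) x * fderiv ℝ t x (f x + w)

/-- The system with drift `f` and control distribution `G` has triangular coordinates near some
point of `O`. -/
def HasTriangularCoordinates (p : ℕ) (O : Set E) (G : E → Submodule ℝ E) (f : E → E) : Prop :=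
  ∃ q ∈ O, ∃ z t Φ, ∀ᶠ x in 𝓝 q, IsTriangularAt p G f z t Φ x

lemma HasTriangularCoordinates.mono {p : ℕ} {O O' : Set E} {G : E → Submodule ℝ E} {f : E → E}
    (h : HasTriangularCoordinates p O' G f) (hsub : O' ⊆ O) : HasTriangularCoordinates p O G f :=
  let ⟨q, hq, hex⟩ := h
  ⟨q, hsub hq, hex⟩

variable {p : ℕ} {G : E → Submodule ℝ E} {f : E → E} {t : E → ℝ}
  {Φ : (j : ℕ) → (Fin (j + 2) → ℝ) × ℝ → ℝ}

lemma IsTriangularAt.fderiv_coord_of_mem {z : ℕ → E → ℝ} {x w : E}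
    (h : IsTriangularAt p G f z t Φ x) {j : ℕ} (hj : j < p) (hw : w ∈ G x) :
    fderiv ℝ (z j) x w = z (j + 1) x * fderiv ℝ t x w := by
  have hsub := congrArg₂ (· - ·) (h.fderiv_coord j hj w hw) (h.fderiv_coord j hj 0 (zero_mem _))
  simpa [← mul_sub] using hsub

lemma IsTriangularAt.eq_zero_of_mem {z : ℕ → E → ℝ} {x w : E} (h : IsTriangularAt p G f z t Φ x)
    (hw : w ∈ G x) (hz : fderiv ℝ (z p) x w = 0) (ht : fderiv ℝ t x w = 0) : w = 0 := by
  refine h.eq_zero_of_fderiv_eq_zero w (fun j hj => ?_) ht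
  rcases hj.lt_or_eq with hj | rfl
  · rw [h.fderiv_coord_of_mem hj hw, ht, mul_zero]
  · exact hz

variable [FiniteDimensional ℝ F]

lemma IsTriangularAt.comp_symm {κ : OpenPartialHomeomorph F E} (hκ : IsSmoothDiffeo κ) {y : E}
    (hy : y ∈ κ.target) {z : ℕ → F → ℝ} {t : F → ℝ}
    (h : IsTriangularAt p (pullbackDistribution κ G) (VectorField.pullback ℝ κ f) z t Φ
      (κ.symm y)) :
    IsTriangularAt p G f (fun j => z j ∘ κ.symm) (t ∘ κ.symm) Φ y := by
  have := FiniteDimensional.complete ℝ F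
  have hsymm := hκ.contDiffAt_symm hy
  have hinv := hκ.isInvertible_fderiv _ (κ.map_target hy)
  have hchain {g : F → ℝ} (hg : ContDiffAt ℝ ∞ g (κ.symm y)) (w : E) :
      fderiv ℝ (g ∘ κ.symm) y w = fderiv ℝ g (κ.symm y) ((fderiv ℝ κ (κ.symm y)).inverse w) := by
    rw [fderiv_comp y (hg.differentiableAt (by simp)) (hsymm.differentiableAt (by simp)),
      hκ.fderiv_symm hy, ContinuousLinearMap.comp_apply]
  refine ⟨fun j hj => (h.contDiffAt_coord j hj).comp y hsymm, h.contDiffAt_time.comp y hsymm,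
    fun w hz ht => ?_, h.contDiffAt_drift, fun j hj w hw => ?_⟩
  · have hw := h.eq_zero_of_fderiv_eq_zero ((fderiv ℝ κ (κ.symm y)).inverse w)
      (fun j hj => hchain (h.contDiffAt_coord j hj) w ▸ hz j hj)
      (hchain h.contDiffAt_time w ▸ ht)
    rw [← hinv.self_apply_inverse w, hw, map_zero]
  · rw [hchain (h.contDiffAt_coord j hj.le), hchain h.contDiffAt_time, map_add]
    have hf : (fderiv ℝ κ (κ.symm y)).inverse (f y) = VectorField.pullback ℝ κ f (κ.symm y) := by
      rw [VectorField.pullback, κ.right_inv hy]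
    rw [hf]
    refine h.fderiv_coord j hj _ ?_
    rwa [mem_pullbackDistribution, hinv.self_apply_inverse, κ.right_inv hy]

theorem HasTriangularCoordinates.of_pullback {κ : OpenPartialHomeomorph F E}
    (hκ : IsSmoothDiffeo κ)
    (h : HasTriangularCoordinates p κ.source (pullbackDistribution κ G)
      (VectorField.pullback ℝ κ f)) : HasTriangularCoordinates p κ.target G f := by
  obtain ⟨q, hq, z, t, Φ, htri⟩ := h
  refine ⟨κ q, κ.map_source hq, fun j => z j ∘ κ.symm, t ∘ κ.symm, Φ, ?_⟩
  filter_upwards [κ.open_target.mem_nhds (κ.map_source hq), κ.symm.continuousAt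
    (κ.map_source hq) |>.eventually (by rwa [κ.left_inv hq])] with y hy htriy
  exact htriy.comp_symm hκ hy

end Triangular

/-! ### Distributions invariant along a coordinate field -/

section FrameProjection

variable {E ι : Type*} [NormedAddCommGroup E] [NormedSpace ℝ E] [Fintype ι]

/-- The projection of the constant vector `w` onto the distribution spanned by the frame `e`, along
the kernels of the coefficient maps `θ`. -/
def frameProjection (e : ι → E → E) (θ : E → E →L[ℝ] ι → ℝ) (w x : E) : E :=
  ∑ i, θ x w i • e i x

variable {G : E → Submodule ℝ E} {e : ι → E → E} {θ : E → E →L[ℝ] ι → ℝ} {x v w : E}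

namespace IsFrameAt

lemma contDiffAt_frameProjection (h : IsFrameAt G e θ x) :
    ContDiffAt ℝ ∞ (frameProjection e θ w) x :=
  ContDiffAt.sum fun i _ =>
    (h.contDiffAt_coeff_apply contDiffAt_const i).smul (h.contDiffAt_field i)

lemma frameProjection_mem (h : IsFrameAt G e θ x) : frameProjection e θ w x ∈ G x :=
  (G x).sum_mem fun i _ => (G x).smul_mem _ (h.mem i)

lemma frameProjection_eq_self (h : IsFrameAt G e θ x) (hw : w ∈ G x) :
    frameProjection e θ w x = w :=
  h.sum_coeff_smul w hw

lemma coeff_frameProjection (h : IsFrameAt G e θ x) : θ x (frameProjection e θ w x) = θ x w :=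
  h.coeff_sum_smul _

lemma eq_zero_of_coeff_eq_zero (h : IsFrameAt G e θ x) (hw : w ∈ G x) (hθ : θ x w = 0) :
    w = 0 := by
  rw [← h.sum_coeff_smul w hw, hθ]
  simp

end IsFrameAt

lemma isLocalSection_frameProjection (h : ∀ᶠ y in 𝓝 x, IsFrameAt G e θ y) :
    IsLocalSection G (frameProjection e θ w) x :=
  h.mono fun _ hy => ⟨hy.contDiffAt_frameProjection, hy.frameProjection_mem⟩

lemma fderiv_frameProjection_eq_zero
    (h : ∀ᶠ y in 𝓝 x, IsFrameAt G e θ y ∧ (θ y).ker = (θ x).ker)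
    (hv : fderiv ℝ (frameProjection e θ w) x v ∈ G x) :
    fderiv ℝ (frameProjection e θ w) x v = 0 := by
  have hx := h.self_of_nhds.1
  refine hx.eq_zero_of_coeff_eq_zero hv ?_
  have hconst : (fun y => θ x (frameProjection e θ w y)) =ᶠ[𝓝 x] fun _ => θ x w := by
    filter_upwards [h] with y ⟨hy, hker⟩
    have hmem : frameProjection e θ w y - w ∈ (θ y).ker := by
      rw [LinearMap.mem_ker, ContinuousLinearMap.coe_coe, map_sub, hy.coeff_frameProjection,
        sub_self]
    rw [hker, LinearMap.mem_ker, ContinuousLinearMap.coe_coe, map_sub] at hmem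
    exact sub_eq_zero.1 hmem
  have hderiv := (θ x).hasFDerivAt.comp x
    (hx.contDiffAt_frameProjection (w := w).differentiableAt (by simp)).hasFDerivAt
  have hzero := hderiv.unique ((hasFDerivAt_const _ x).congr_of_eventuallyEq hconst)
  exact DFunLike.congr_fun hzero v

end FrameProjection

section Vertical

lemma eventually_forall_mem_ball_prod {M : Type*} [SeminormedAddCommGroup M] {P : M × ℝ → Prop}
    (hP : ∀ᶠ z in 𝓝 0, P z) :
    ∀ᶠ ε in 𝓝[>] (0 : ℝ), ∀ x ∈ Metric.ball (0 : M) ε, ∀ y ∈ Metric.ball (0 : ℝ) ε, P (x, y) := by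
  obtain ⟨δ, hδ, hball⟩ := Metric.eventually_nhds_iff_ball.1 hP
  filter_upwards [Ioo_mem_nhdsGT hδ] with ε hε x hx y hy
  refine hball _ (Metric.ball_subset_ball hε.2.le ?_)
  rw [← Prod.mk_zero_zero, ← ball_prod_same]
  exact ⟨hx, hy⟩

variable {M V : Type*} [NormedAddCommGroup M] [NormedSpace ℝ M] [NormedAddCommGroup V]
  [NormedSpace ℝ V]

/-- The coordinate field `∂/∂y` on `M × ℝ`. -/
def verticalField : M × ℝ → M × ℝ := fun _ => (0, 1)

lemma lieBracket_verticalField {Y : M × ℝ → M × ℝ} {z : M × ℝ} :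
    lieBracket ℝ verticalField Y z = fderiv ℝ Y z (0, 1) := by
  have hconst : fderiv ℝ (verticalField : M × ℝ → M × ℝ) z = 0 := (hasFDerivAt_const _ _).fderiv
  simp [VectorField.lieBracket, hconst, verticalField]

lemma hasDerivAt_vertical_line {F : M × ℝ → V} {x : M} {y : ℝ} (h : ContDiffAt ℝ ∞ F (x, y)) :
    HasDerivAt (fun s => F (x, s)) (fderiv ℝ F (x, y) (0, 1)) y :=
  (h.differentiableAt (by simp)).hasFDerivAt.comp_hasDerivAt y
    ((hasDerivAt_const y x).prodMk (hasDerivAt_id y))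

lemma sub_mem_of_hasDerivAt_mem [FiniteDimensional ℝ V] {W : Submodule ℝ V} {c c' : ℝ → V}
    {J : Set ℝ} (hJ : IsOpen J) (hconn : IsPreconnected J)
    (hc : ∀ s ∈ J, HasDerivAt c (c' s) s) (hmem : ∀ s ∈ J, c' s ∈ W) {a b : ℝ} (ha : a ∈ J)
    (hb : b ∈ J) : c b - c a ∈ W := by
  rw [← Subspace.forall_mem_dualAnnihilator_apply_eq_zero_iff]
  intro l hl
  have hderiv : ∀ s ∈ J, HasDerivAt (fun s => l.toContinuousLinearMap (c s)) 0 s := fun s hs => by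
    have hs' := l.toContinuousLinearMap.hasFDerivAt.comp_hasDerivAt s (hc s hs)
    rwa [show l.toContinuousLinearMap (c' s) = 0 from
      (Submodule.mem_dualAnnihilator l).1 hl _ (hmem s hs)] at hs'
  have hconst := hJ.is_const_of_deriv_eq_zero hconn
    (fun s hs => (hderiv s hs).differentiableAt.differentiableWithinAt)
    (fun s hs => (hderiv s hs).deriv) hb ha
  rw [map_sub]
  exact sub_eq_zero.2 hconst

/- The field `∂/∂y` is characteristic, so the `y`-derivative of a projected constant vector stays in
the distribution; it also lies in the fixed complement, hence vanishes. -/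
lemma distribution_eq_of_isCharacteristicAt_verticalField [FiniteDimensional ℝ M] {ι : Type*}
    [Fintype ι] {G : M × ℝ → Submodule ℝ (M × ℝ)} {e : ι → M × ℝ → M × ℝ}
    {θ : M × ℝ → M × ℝ →L[ℝ] ι → ℝ} {J : Set ℝ} (hJ : IsOpen J) (hconn : IsPreconnected J) {x : M}
    {K : Submodule ℝ (M × ℝ)}
    (hframe : ∀ s ∈ J, ∀ᶠ z in 𝓝 (x, s), IsFrameAt G e θ z ∧ (θ z).ker = K)
    (hchar : ∀ s ∈ J, IsCharacteristicAt G verticalField (x, s)) {a b : ℝ} (ha : a ∈ J)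
    (hb : b ∈ J) : G (x, a) = G (x, b) := by
  have hderiv (w : M × ℝ) {s : ℝ} (hs : s ∈ J) :
      fderiv ℝ (frameProjection e θ w) (x, s) (0, 1) = 0 := by
    refine fderiv_frameProjection_eq_zero ((hframe s hs).mono fun z hz =>
      ⟨hz.1, hz.2.trans (hframe s hs).self_of_nhds.2.symm⟩) ?_
    rw [← lieBracket_verticalField]
    exact (hchar s hs).self_of_nhds _
      (isLocalSection_frameProjection ((hframe s hs).mono fun z hz => hz.1))
  have hconst (w : M × ℝ) {a b : ℝ} (ha : a ∈ J) (hb : b ∈ J) :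
      frameProjection e θ w (x, b) = frameProjection e θ w (x, a) := by
    refine sub_eq_zero.1 ((Submodule.mem_bot ℝ).1 ?_)
    exact sub_mem_of_hasDerivAt_mem hJ hconn (fun s hs => hasDerivAt_vertical_line
      (hframe s hs).self_of_nhds.1.contDiffAt_frameProjection)
      (fun s hs => (hderiv w hs).symm ▸ zero_mem _) ha hb
  have hle {a b : ℝ} (ha : a ∈ J) (hb : b ∈ J) : G (x, a) ≤ G (x, b) := fun w hw => by
    rw [← (hframe a ha).self_of_nhds.1.frameProjection_eq_self hw, ← hconst w ha hb]
    exact (hframe b hb).self_of_nhds.1.frameProjection_mem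
  exact le_antisymm (hle ha hb) (hle hb ha)

lemma eventually_distribution_eq_of_isCharacteristicAt_verticalField [FiniteDimensional ℝ M]
    {ι : Type*} [Fintype ι] {G : M × ℝ → Submodule ℝ (M × ℝ)} {e : ι → M × ℝ → M × ℝ}
    {θ : M × ℝ → M × ℝ →L[ℝ] ι → ℝ}
    (hframe : ∀ᶠ z in 𝓝 0, IsFrameAt G e θ z ∧ (θ z).ker = (θ 0).ker)
    (hchar : IsCharacteristicAt G verticalField 0) :
    ∀ᶠ ε in 𝓝[>] (0 : ℝ), ∀ x ∈ Metric.ball (0 : M) ε, ∀ y ∈ Metric.ball (0 : ℝ) ε,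
      G (x, y) = G (x, 0) := by
  filter_upwards [self_mem_nhdsWithin, eventually_forall_mem_ball_prod
    (hframe.eventually_nhds.and hchar.eventually)] with ε hε hall x hx y hy
  exact distribution_eq_of_isCharacteristicAt_verticalField Metric.isOpen_ball
    (convex_ball _ _).isPreconnected (fun s hs => (hall x hx s hs).1)
    (fun s hs => (hall x hx s hs).2) hy (Metric.mem_ball_self hε)

end Vertical

/-! ### Reduction of a Goursat system along a characteristic field -/

section FlowBox

variable {M : Type*} [NormedAddCommGroup M] [NormedSpace ℝ M]

/-- A Goursat system on the product `B ×ˢ J` for which `∂/∂y` is a section of the first distribution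
and a characteristic field of all further ones, which are therefore constant along `J`. -/
structure IsGoursatFlowBox (m : ℕ) (B : Set M) (J : Set ℝ) (G : ℕ → M × ℝ → Submodule ℝ (M × ℝ))
    (f : M × ℝ → M × ℝ) : Prop where
  isGoursatSystem : IsGoursatSystem (m + 1) (B ×ˢ J) G f
  isOpen_base : IsOpen B
  nonempty_base : B.Nonempty
  isOpen_fiber : IsOpen J
  isPreconnected_fiber : IsPreconnected J
  zero_mem : 0 ∈ J
  vertical_mem : ∀ x ∈ B, ∀ y ∈ J, (0, 1) ∈ G 0 (x, y)
  isCharacteristicAt : ∀ k, 1 ≤ k → k + 1 ≤ m → ∀ x ∈ B, ∀ y ∈ J,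
    IsCharacteristicAt (G k) verticalField (x, y)
  flag_eq : ∀ k, 1 ≤ k → k + 1 ≤ m → ∀ x ∈ B, ∀ y ∈ J, G k (x, y) = G k (x, 0)

lemma IsGoursatSystem.exists_ball_isGoursatFlowBox [FiniteDimensional ℝ M] {m : ℕ}
    {O : Set (M × ℝ)} {G : ℕ → M × ℝ → Submodule ℝ (M × ℝ)} {f : M × ℝ → M × ℝ}
    (h : IsGoursatSystem (m + 1) O G f) (h0 : 0 ∈ O) (hsec : IsLocalSection (G 0) verticalField 0)
    (hchar : ∀ k, 1 ≤ k → k + 1 ≤ m → IsCharacteristicAt (G k) verticalField 0) :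
    ∃ ε, Metric.ball 0 ε ×ˢ Metric.ball 0 ε ⊆ O ∧
      IsGoursatFlowBox m (Metric.ball 0 ε) (Metric.ball 0 ε) G f := by
  have hcharAll : ∀ᶠ z in 𝓝 0, ∀ k ∈ Finset.Ico 1 m, IsCharacteristicAt (G k) verticalField z :=
    (eventually_all_finset _).2 fun k hk =>
      (hchar k (Finset.mem_Ico.1 hk).1 (Finset.mem_Ico.1 hk).2).eventually
  have heqAll : ∀ᶠ ε in 𝓝[>] (0 : ℝ), ∀ k ∈ Finset.Ico 1 m, ∀ x ∈ Metric.ball (0 : M) ε,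
      ∀ y ∈ Metric.ball (0 : ℝ) ε, G k (x, y) = G k (x, 0) :=
    (eventually_all_finset _).2 fun k hk => by
      obtain ⟨hk₁, hkm⟩ := Finset.mem_Ico.1 hk
      obtain ⟨e, θ, hframe⟩ := h.exists_frame (k := k) (by omega) h0
      exact eventually_distribution_eq_of_isCharacteristicAt_verticalField hframe (hchar k hk₁ hkm)
  obtain ⟨ε, hε, heq, hall⟩ := (eventually_mem_nhdsWithin.and (heqAll.and
    (eventually_forall_mem_ball_prod ((h.eventually_mem h0).and (hsec.and hcharAll))))).exists
  have hsub : Metric.ball (0 : M) ε ×ˢ Metric.ball (0 : ℝ) ε ⊆ O :=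
    fun z hz => (hall _ hz.1 _ hz.2).1
  exact ⟨ε, hsub,
    { isGoursatSystem := h.mono (Metric.isOpen_ball.prod Metric.isOpen_ball) hsub
      isOpen_base := Metric.isOpen_ball
      nonempty_base := Metric.nonempty_ball.2 hε
      isOpen_fiber := Metric.isOpen_ball
      isPreconnected_fiber := (convex_ball _ _).isPreconnected
      zero_mem := Metric.mem_ball_self hε
      vertical_mem := fun x hx y hy => (hall x hx y hy).2.1.2
      isCharacteristicAt := fun k hk₁ hkm x hx y hy =>
        (hall x hx y hy).2.2 k (Finset.mem_Ico.2 ⟨hk₁, hkm⟩)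
      flag_eq := fun k hk₁ hkm => heq k (Finset.mem_Ico.2 ⟨hk₁, hkm⟩) }⟩

theorem IsGoursatSystem.exists_isGoursatFlowBox {E : Type*} [NormedAddCommGroup E]
    [NormedSpace ℝ E] [FiniteDimensional ℝ E] {m : ℕ} {O : Set E} {G : ℕ → E → Submodule ℝ E}
    {f : E → E} (h : IsGoursatSystem (m + 1) O G f) (hm : 2 ≤ m) {q : E} (hq : q ∈ O) :
    ∃ (M : Submodule ℝ E) (κ : OpenPartialHomeomorph (M × ℝ) E), IsSmoothDiffeo κ ∧ κ.target ⊆ O ∧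
      ∃ B J, B ×ˢ J ⊆ κ.source ∧
        IsGoursatFlowBox m B J (fun k => pullbackDistribution κ (G k))
          (VectorField.pullback ℝ κ f) := by
  obtain ⟨X, hX, hX0, hchar⟩ := h.exists_isCharacteristicAt (by omega) hq
  obtain ⟨M, hM, κ, h0, rfl, htarget, hκ, hstraight⟩ :=
    exists_flowBox hX.eventually_contDiffAt hX0 (h.eventually_mem hq)
  have hMm : Module.finrank ℝ M = m := by have := h.finrank_eq; omega
  have hpull : VectorField.pullback ℝ κ X =ᶠ[𝓝 0] verticalField := by
    filter_upwards [κ.open_source.mem_nhds h0] with z hz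
    rw [VectorField.pullback, ← hstraight z hz, (hκ.isInvertible_fderiv z hz).inverse_apply_self,
      verticalField]
  have hpullback := hκ.isGoursatSystem_pullback h htarget
    (by rw [Module.finrank_prod, hMm, Module.finrank_self])
  obtain ⟨ε, hsub, hbox⟩ := hpullback.exists_ball_isGoursatFlowBox h0
    ((hκ.isLocalSection_pullback h0 hX).congr hpull)
    fun k hk₁ hkm => (hκ.isCharacteristicAt_pullback h0 hX.eventually_contDiffAt
      (hchar k hk₁ (by omega))).congr_field hpull
  exact ⟨M, κ, hκ, htarget, _, _, hsub, hbox⟩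

end FlowBox

section Reduction

lemma finrank_submodule_prod_top {M : Type*} [AddCommGroup M] [Module ℝ M] [FiniteDimensional ℝ M]
    (W : Submodule ℝ M) :
    Module.finrank ℝ (W.prod (⊤ : Submodule ℝ ℝ)) = Module.finrank ℝ W + 1 := by
  have hrange : (W.subtype.prodMap LinearMap.id).range = W.prod (⊤ : Submodule ℝ ℝ) := by
    rw [LinearMap.range_prodMap, Submodule.range_subtype, LinearMap.range_id]
  have hinj : Function.Injective (W.subtype.prodMap (LinearMap.id : ℝ →ₗ[ℝ] ℝ)) :=
    W.subtype_injective.prodMap Function.injective_id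
  rw [← hrange, LinearMap.finrank_range_of_inj hinj, Module.finrank_prod, Module.finrank_self]

variable {M : Type*} [NormedAddCommGroup M] [NormedSpace ℝ M]

/-- The field `(X, 0)` on `M × ℝ`. -/
def horizontalLift (X : M → M) (z : M × ℝ) : M × ℝ := (X z.1, 0)

/-- The `M`-component of a field on `M × ℝ` along the transversal `y = 0`. -/
def transversalField (Y : M × ℝ → M × ℝ) (x : M) : M := (Y (x, 0)).1

/-- The flag induced on the transversal `y = 0` by the members `G 1 ⊆ G 2 ⊆ ⋯` of the flag `G`. -/
def reducedFlag (G : ℕ → M × ℝ → Submodule ℝ (M × ℝ)) (k : ℕ) (x : M) : Submodule ℝ M :=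
  (G (k + 1) (x, 0)).comap (LinearMap.inl ℝ M ℝ)

lemma hasFDerivAt_horizontalLift {X : M → M} {z : M × ℝ} (hX : ContDiffAt ℝ ∞ X z.1) :
    HasFDerivAt (horizontalLift X)
      (((fderiv ℝ X z.1).comp (ContinuousLinearMap.fst ℝ M ℝ)).prod 0) z :=
  ((hX.differentiableAt (by simp)).hasFDerivAt.comp z hasFDerivAt_fst).prodMk
    (hasFDerivAt_const (0 : ℝ) z)

lemma contDiffAt_horizontalLift {X : M → M} {z : M × ℝ} (hX : ContDiffAt ℝ ∞ X z.1) :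
    ContDiffAt ℝ ∞ (horizontalLift X) z :=
  (hX.comp z contDiffAt_fst).prodMk contDiffAt_const

lemma lieBracket_horizontalLift {X Y : M → M} {z : M × ℝ} (hX : ContDiffAt ℝ ∞ X z.1)
    (hY : ContDiffAt ℝ ∞ Y z.1) :
    lieBracket ℝ (horizontalLift X) (horizontalLift Y) z = (lieBracket ℝ X Y z.1, 0) := by
  simp only [VectorField.lieBracket, (hasFDerivAt_horizontalLift hX).fderiv,
    (hasFDerivAt_horizontalLift hY).fderiv]
  simp [horizontalLift]

lemma lieBracket_verticalField_horizontalLift_mem {X : M → M} {x : M} {y : ℝ}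
    (hX : ContDiffAt ℝ ∞ X x) (W : Submodule ℝ (M × ℝ)) :
    lieBracket ℝ verticalField (horizontalLift X) (x, y) ∈ W := by
  have hzero : lieBracket ℝ verticalField (horizontalLift X) (x, y) = 0 := by
    rw [lieBracket_verticalField, (hasFDerivAt_horizontalLift (z := (x, y)) hX).fderiv]
    simp
  exact hzero ▸ W.zero_mem

lemma hasFDerivAt_transversalField {Y : M × ℝ → M × ℝ} {x : M} (h : ContDiffAt ℝ ∞ Y (x, 0)) :
    HasFDerivAt (transversalField Y) ((ContinuousLinearMap.fst ℝ M ℝ).comp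
      ((fderiv ℝ Y (x, 0)).comp (ContinuousLinearMap.inl ℝ M ℝ))) x :=
  (ContinuousLinearMap.fst ℝ M ℝ).hasFDerivAt.comp x
    ((h.differentiableAt (by simp)).hasFDerivAt.comp x
      (ContinuousLinearMap.inl ℝ M ℝ).hasFDerivAt)

lemma contDiffAt_transversalField {Y : M × ℝ → M × ℝ} {x : M} (h : ContDiffAt ℝ ∞ Y (x, 0)) :
    ContDiffAt ℝ ∞ (transversalField Y) x :=
  (ContDiffAt.comp x h (contDiffAt_id.prodMk contDiffAt_const)).fst

lemma lieBracket_transversalField {f : M × ℝ → M × ℝ} {X : M → M} {x : M}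
    (hf : ContDiffAt ℝ ∞ f (x, 0)) (hX : ContDiffAt ℝ ∞ X x) :
    lieBracket ℝ (transversalField f) X x = (lieBracket ℝ f (horizontalLift X) (x, 0)).1 := by
  have hlift := hasFDerivAt_horizontalLift (z := (x, 0)) hX
  simp only [VectorField.lieBracket, hlift.fderiv, (hasFDerivAt_transversalField hf).fderiv]
  simp [horizontalLift, transversalField]

namespace IsGoursatFlowBox

variable {m k : ℕ} {B : Set M} {J : Set ℝ} {G : ℕ → M × ℝ → Submodule ℝ (M × ℝ)}
  {f : M × ℝ → M × ℝ} {x : M} {y : ℝ}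

lemma vertical_mem_flag (h : IsGoursatFlowBox m B J G f) (hk : k + 1 ≤ m) (hx : x ∈ B)
    (hy : y ∈ J) : ((0, 1) : M × ℝ) ∈ G k (x, y) := by
  induction k with
  | zero => exact h.vertical_mem x hx y hy
  | succ k ih => exact h.isGoursatSystem.le_succ k (by omega) _ ⟨hx, hy⟩ (ih (by omega))

lemma isLocalSection_verticalField (h : IsGoursatFlowBox m B J G f) (hk : k + 1 ≤ m) (hx : x ∈ B)
    (hy : y ∈ J) : IsLocalSection (G k) verticalField (x, y) := by
  filter_upwards [h.isGoursatSystem.eventually_mem ⟨hx, hy⟩] with w hw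
  exact ⟨contDiffAt_const, h.vertical_mem_flag hk hw.1 hw.2⟩

lemma mem_flag_succ_iff (h : IsGoursatFlowBox m B J G f) (hk : k + 2 ≤ m) {v : M × ℝ} (hx : x ∈ B)
    (hy : y ∈ J) : v ∈ G (k + 1) (x, y) ↔ v.1 ∈ reducedFlag G k x := by
  have hvert := h.vertical_mem_flag (k := k + 1) (by omega) hx h.zero_mem
  have hv : v = (v.1, 0) + v.2 • (0, 1) := by simp
  rw [h.flag_eq (k + 1) (by omega) (by omega) x hx y hy, hv,
    Submodule.add_mem_iff_left _ (Submodule.smul_mem _ _ hvert)]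
  simp [reducedFlag]

lemma isLocalSection_transversalField (h : IsGoursatFlowBox m B J G f) (hk : k + 2 ≤ m)
    (hx : x ∈ B) {Y : M × ℝ → M × ℝ} (hY : IsLocalSection (G (k + 1)) Y (x, 0)) :
    IsLocalSection (reducedFlag G k) (transversalField Y) x := by
  have hcont : ContinuousAt (fun x : M => (x, (0 : ℝ))) x := by fun_prop
  filter_upwards [hcont.eventually hY, h.isOpen_base.mem_nhds hx] with u hYu hu
  exact ⟨contDiffAt_transversalField hYu.1, (h.mem_flag_succ_iff hk hu h.zero_mem).1 hYu.2⟩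

lemma isLocalSection_horizontalLift (h : IsGoursatFlowBox m B J G f) (hk : k + 2 ≤ m) (hx : x ∈ B)
    (hy : y ∈ J) {X : M → M} (hX : IsLocalSection (reducedFlag G k) X x) :
    IsLocalSection (G (k + 1)) (horizontalLift X) (x, y) := by
  filter_upwards [continuousAt_fst.eventually hX, h.isGoursatSystem.eventually_mem ⟨hx, hy⟩]
    with u hXu hu
  exact ⟨contDiffAt_horizontalLift hXu.1, (h.mem_flag_succ_iff hk hu.1 hu.2).2 hXu.2⟩

lemma exists_section_reducedFlag (h : IsGoursatFlowBox m B J G f) (hk : k + 2 ≤ m) (hx : x ∈ B)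
    {v : M} (hv : v ∈ reducedFlag G k x) :
    ∃ X, IsLocalSection (reducedFlag G k) X x ∧ X x = v := by
  obtain ⟨X, hX, hXv⟩ := h.isGoursatSystem.exists_section (k + 1) (by omega) (x, 0)
    ⟨hx, h.zero_mem⟩ (v, 0) hv
  exact ⟨_, h.isLocalSection_transversalField hk hx hX, by rw [transversalField, hXv]⟩

lemma lieBracket_reducedFlag_mem (h : IsGoursatFlowBox m B J G f) (hk : k + 3 ≤ m) (hx : x ∈ B)
    {X Y : M → M} (hX : IsLocalSection (reducedFlag G k) X x)
    (hY : IsLocalSection (reducedFlag G k) Y x) : lieBracket ℝ X Y x ∈ reducedFlag G (k + 1) x := by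
  have hmem := h.isGoursatSystem.lieBracket_mem_succ (k + 1) (by omega) (x, 0) ⟨hx, h.zero_mem⟩ _ _
    (h.isLocalSection_horizontalLift (by omega) hx h.zero_mem hX)
    (h.isLocalSection_horizontalLift (by omega) hx h.zero_mem hY)
  rwa [lieBracket_horizontalLift hX.self_of_nhds.1 hY.self_of_nhds.1] at hmem

variable [FiniteDimensional ℝ M]

lemma finrank_reducedFlag (h : IsGoursatFlowBox m B J G f) (hk : k + 2 ≤ m) (hx : x ∈ B) :
    Module.finrank ℝ (reducedFlag G k x) = k + 2 := by
  have hrank := h.isGoursatSystem.finrank_flag (k + 1) (by omega) (x, 0) ⟨hx, h.zero_mem⟩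
  have hprod : G (k + 1) (x, 0) = (reducedFlag G k x).prod ⊤ :=
    Submodule.ext fun v => by simp [h.mem_flag_succ_iff hk hx h.zero_mem]
  rw [hprod, finrank_submodule_prod_top] at hrank
  omega

lemma exists_frame_reducedFlag (h : IsGoursatFlowBox m B J G f) (hk : k + 2 ≤ m) (hx : x ∈ B) :
    ∃ (e : Fin (k + 2) → M → M) (θ : M → M →L[ℝ] Fin (k + 2) → ℝ),
      ∀ᶠ u in 𝓝 x, IsFrameAt (reducedFlag G k) e θ u := by
  obtain ⟨e, θ, hframe⟩ := exists_frame_of_exists_section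
    (Filter.Eventually.mono (h.isOpen_base.mem_nhds hx) fun u hu => h.finrank_reducedFlag hk hu)
    (fun v hv => h.exists_section_reducedFlag hk hx hv)
  exact ⟨e, θ, hframe.mono fun u hu => hu.1⟩

lemma exists_frame_horizontalLift (h : IsGoursatFlowBox m B J G f) (hk : k + 2 ≤ m) (hx : x ∈ B)
    (hy : y ∈ J) {e : Fin (k + 2) → M → M} {θ : M → M →L[ℝ] Fin (k + 2) → ℝ}
    (hframe : ∀ᶠ u in 𝓝 x, IsFrameAt (reducedFlag G k) e θ u) :
    ∃ θ' : M × ℝ → M × ℝ →L[ℝ] Option (Fin (k + 2)) → ℝ, ∀ᶠ u in 𝓝 (x, y),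
      IsFrameAt (G (k + 1)) (fun o => o.elim verticalField fun i => horizontalLift (e i)) θ' u := by
  have hrank : ∀ᶠ u in 𝓝 (x, y),
      Module.finrank ℝ (G (k + 1) u) = Fintype.card (Option (Fin (k + 2))) := by
    filter_upwards [h.isGoursatSystem.eventually_mem ⟨hx, hy⟩] with u hu
    rw [h.isGoursatSystem.finrank_flag (k + 1) (by omega) u hu, Fintype.card_option,
      Fintype.card_fin]
  have hsec : ∀ o : Option (Fin (k + 2)), IsLocalSection (G (k + 1))
      (o.elim verticalField fun i => horizontalLift (e i)) (x, y)
    | none => h.isLocalSection_verticalField (by omega) hx hy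
    | some i => h.isLocalSection_horizontalLift hk hx hy
        (isLocalSection_of_eventually_isFrameAt hframe i)
  have hli : LinearIndependent ℝ fun o : Option (Fin (k + 2)) =>
      o.elim verticalField (fun i => horizontalLift (e i)) (x, y) := by
    refine linearIndependent_option.2
      ⟨hframe.self_of_nhds.linearIndependent.map' (LinearMap.inl ℝ M ℝ)
        (LinearMap.ker_eq_bot.2 LinearMap.inl_injective), fun hspan => ?_⟩
    have hle : Submodule.span ℝ (range fun i => horizontalLift (e i) (x, y)) ≤
        (LinearMap.snd ℝ M ℝ).ker :=
      Submodule.span_le.2 (range_subset_iff.2 fun i => rfl)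
    exact one_ne_zero (hle hspan)
  obtain ⟨θ', hθ'⟩ := exists_isFrameAt hrank hsec hli
  exact ⟨θ', hθ'.mono fun u hu => hu.1⟩

lemma exists_lieBracket_reducedFlag_notMem (h : IsGoursatFlowBox m B J G f) (hk : k + 3 ≤ m)
    (hx : x ∈ B) : ∃ X Y, IsLocalSection (reducedFlag G k) X x ∧
      IsLocalSection (reducedFlag G k) Y x ∧ lieBracket ℝ X Y x ∉ reducedFlag G k x := by
  obtain ⟨e, θ, hframe⟩ := h.exists_frame_reducedFlag (k := k) (by omega) hx
  obtain ⟨θ', hframe'⟩ := h.exists_frame_horizontalLift (by omega) hx h.zero_mem hframe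
  have he := isLocalSection_of_eventually_isFrameAt hframe
  obtain ⟨_ | i, _ | j, hij⟩ := h.isGoursatSystem.exists_frame_lieBracket_notMem (by omega)
    ⟨hx, h.zero_mem⟩ hframe'
  · exact absurd (by simp) hij
  · refine absurd ?_ hij
    exact lieBracket_verticalField_horizontalLift_mem (he j).self_of_nhds.1 _
  · refine absurd (lieBracket_mem_symm ?_) hij
    exact lieBracket_verticalField_horizontalLift_mem (he i).self_of_nhds.1 _
  · refine ⟨e i, e j, he i, he j, fun hmem => hij ?_⟩
    simp only [Option.elim]
    rwa [lieBracket_horizontalLift (he i).self_of_nhds.1 (he j).self_of_nhds.1,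
      h.mem_flag_succ_iff (by omega) hx h.zero_mem]

lemma isCharacteristicAt_horizontalLift (h : IsGoursatFlowBox m B J G f) (hk : k + 2 ≤ m)
    (hx : x ∈ B) (hy : y ∈ J) {X : M → M} (hX : IsLocalSection (reducedFlag G k) X x)
    (hchar : IsCharacteristicAt (reducedFlag G k) X x) :
    IsCharacteristicAt (G (k + 1)) (horizontalLift X) (x, y) := by
  obtain ⟨e, θ, hframe⟩ := h.exists_frame_reducedFlag (k := k) hk hx
  obtain ⟨θ', hframe'⟩ := h.exists_frame_horizontalLift hk hx hy hframe
  refine isCharacteristicAt_of_frame hframe' ?_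
  filter_upwards [h.isGoursatSystem.eventually_mem ⟨hx, hy⟩, continuousAt_fst.eventually
    (hchar.and (hX.and hframe.eventually_nhds))] with u hu ⟨hcharu, hXu, hframeu⟩
  rintro (_ | i)
  · refine lieBracket_mem_symm ?_
    exact lieBracket_verticalField_horizontalLift_mem hXu.1 _
  · have hei := isLocalSection_of_eventually_isFrameAt hframeu i
    simp only [Option.elim]
    rw [lieBracket_horizontalLift hXu.1 hei.self_of_nhds.1]
    exact (h.mem_flag_succ_iff hk hu.1 hu.2).2 (hcharu _ hei)

lemma lieBracket_transversalField_mem (h : IsGoursatFlowBox m B J G f) (hk : k + 3 ≤ m)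
    (hx : x ∈ B) {X : M → M} (hX : IsLocalSection (reducedFlag G k) X x)
    (hchar : IsCharacteristicAt (reducedFlag G k) X x) :
    lieBracket ℝ (transversalField f) X x ∈ reducedFlag G k x := by
  have hz : (x, (0 : ℝ)) ∈ B ×ˢ J := ⟨hx, h.zero_mem⟩
  have hmem := h.isGoursatSystem.lieBracket_drift_mem (k + 1) (by omega) (by omega) _ hz _
    (h.isLocalSection_horizontalLift (by omega) hx h.zero_mem hX)
    (h.isCharacteristicAt_horizontalLift (by omega) hx h.zero_mem hX hchar)
  rw [lieBracket_transversalField (h.isGoursatSystem.contDiffAt_drift _ hz) hX.self_of_nhds.1]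
  exact (h.mem_flag_succ_iff (by omega) hx h.zero_mem).1 hmem

lemma finrank_base (h : IsGoursatFlowBox m B J G f) : Module.finrank ℝ M = m := by
  simpa using h.isGoursatSystem.finrank_eq

theorem isGoursatSystem_reducedFlag (h : IsGoursatFlowBox m B J G f) :
    IsGoursatSystem m B (reducedFlag G) (transversalField f) where
  isOpen := h.isOpen_base
  finrank_eq := h.finrank_base
  contDiffAt_drift x hx :=
    contDiffAt_transversalField (h.isGoursatSystem.contDiffAt_drift _ ⟨hx, h.zero_mem⟩)
  finrank_flag k hk x hx := h.finrank_reducedFlag hk hx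
  exists_section k hk x hx v hv := h.exists_section_reducedFlag hk hx hv
  le_succ k hk x hx v hv :=
    h.isGoursatSystem.le_succ (k + 1) (by omega) (x, 0) ⟨hx, h.zero_mem⟩ hv
  lieBracket_mem_succ k hk x hx X Y hX hY := h.lieBracket_reducedFlag_mem hk hx hX hY
  exists_lieBracket_notMem k hk x hx := h.exists_lieBracket_reducedFlag_notMem hk hx
  lieBracket_drift_mem k _ hk x hx X hX hchar := h.lieBracket_transversalField_mem hk hx hX hchar

/- The drift condition makes the vertical derivative of the drift a section of `G 1`. -/
lemma drift_sub_mem (h : IsGoursatFlowBox m B J G f) (hm : 2 ≤ m) (hx : x ∈ B) (hy : y ∈ J) :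
    (f (x, y)).1 - transversalField f x ∈ reducedFlag G 0 x := by
  obtain rfl | hm := hm.eq_or_lt
  · have htop : reducedFlag G 0 x = ⊤ := Submodule.eq_top_of_finrank_eq <| by
      rw [h.finrank_reducedFlag (by omega) hx, h.finrank_base]
    exact htop ▸ Submodule.mem_top
  refine sub_mem_of_hasDerivAt_mem (c := fun y => (f (x, y)).1) h.isOpen_fiber
    h.isPreconnected_fiber (fun s hs => (ContinuousLinearMap.fst ℝ M ℝ).hasFDerivAt.comp_hasDerivAt
      s (hasDerivAt_vertical_line (h.isGoursatSystem.contDiffAt_drift _ ⟨hx, hs⟩)))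
    (fun s hs => ?_) h.zero_mem hy
  have hmem := lieBracket_mem_symm <| h.isGoursatSystem.lieBracket_drift_mem 1 le_rfl (by omega)
    (x, s) ⟨hx, hs⟩ _ (h.isLocalSection_verticalField (by omega) hx hs)
    (h.isCharacteristicAt 1 le_rfl (by omega) x hx s hs)
  rw [lieBracket_verticalField] at hmem
  exact (h.mem_flag_succ_iff (by omega) hx hs).1 hmem

end IsGoursatFlowBox

end Reduction

section Prolongation

lemma mul_sub_mul_ne_zero_of_linearIndependent {V : Type*} [AddCommGroup V] [Module ℝ V]
    {W : Submodule ℝ V} {L T : V →ₗ[ℝ] ℝ} (hsep : ∀ w ∈ W, L w = 0 → T w = 0 → w = 0) {v w : V}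
    (hv : v ∈ W) (hw : w ∈ W) (hli : LinearIndependent ℝ ![v, w]) :
    T v * L w - L v * T w ≠ 0 := by
  intro hzero
  rw [LinearIndependent.pair_iff] at hli
  have hmem (r s : ℝ) : r • v + s • w ∈ W := W.add_mem (W.smul_mem r hv) (W.smul_mem s hw)
  obtain ⟨-, hTv⟩ := hli (-T w) (T v) <| hsep _ (hmem _ _)
    (by simp only [map_add, map_smul, smul_eq_mul]; linarith)
    (by simp only [map_add, map_smul, smul_eq_mul]; ring)
  obtain ⟨-, hLv⟩ := hli (-L w) (L v) <| hsep _ (hmem _ _)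
    (by simp only [map_add, map_smul, smul_eq_mul]; ring)
    (by simp only [map_add, map_smul, smul_eq_mul]; linarith)
  exact one_ne_zero (hli 1 0 (by simp [hsep v hv hLv hTv])).1

lemma linearIndependent_fst_pair {M : Type*} [AddCommGroup M] [Module ℝ M]
    {W : Submodule ℝ (M × ℝ)} (hvert : (0, 1) ∈ W) {v w : M × ℝ} (hv : v ∈ W) (hw : w ∉ W)
    (hli : LinearIndependent ℝ ![((0, 1) : M × ℝ), v]) : LinearIndependent ℝ ![v.1, w.1] := by
  rw [LinearIndependent.pair_iff] at hli ⊢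
  intro r s hrs
  have hcomb : r • v + s • w = (r * v.2 + s * w.2) • ((0, 1) : M × ℝ) :=
    Prod.ext (by simpa) (by simp)
  have hs : s = 0 := by
    by_contra hs
    refine hw ((W.smul_mem_iff hs).1 ?_)
    rw [← W.add_mem_iff_right (W.smul_mem r hv), hcomb]
    exact W.smul_mem _ hvert
  refine ⟨(hli (-(r * v.2)) r ?_).2, hs⟩
  rw [hs, zero_smul, add_zero, zero_mul, add_zero] at hcomb
  rw [hcomb, neg_smul, neg_add_cancel]

section Chart

variable {E : Type*} [NormedAddCommGroup E] [NormedSpace ℝ E]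

lemma contDiffAt_coordMap {p : ℕ} {z : ℕ → E → ℝ} {t : E → ℝ} {x : E}
    (hz : ∀ j ≤ p, ContDiffAt ℝ ∞ (z j) x) (ht : ContDiffAt ℝ ∞ t x) :
    ContDiffAt ℝ ∞ (coordMap z t (p + 1)) x :=
  (contDiffAt_pi.2 fun i : Fin (p + 1) => hz i (by omega)).prodMk ht

lemma injective_fderiv_coordMap {p : ℕ} {z : ℕ → E → ℝ} {t : E → ℝ} {x : E}
    (hz : ∀ j ≤ p, ContDiffAt ℝ ∞ (z j) x) (ht : ContDiffAt ℝ ∞ t x)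
    (hsep : ∀ w, (∀ j ≤ p, fderiv ℝ (z j) x w = 0) → fderiv ℝ t x w = 0 → w = 0) :
    Function.Injective (fderiv ℝ (coordMap z t (p + 1)) x) := by
  have hderiv : HasFDerivAt (coordMap z t (p + 1))
      ((ContinuousLinearMap.pi fun i : Fin (p + 1) => fderiv ℝ (z i) x).prod (fderiv ℝ t x)) x :=
    (hasFDerivAt_pi.2 fun i : Fin (p + 1) =>
      ((hz i (by omega)).differentiableAt (by simp)).hasFDerivAt).prodMk
      (ht.differentiableAt (by simp)).hasFDerivAt
  rw [hderiv.fderiv, injective_iff_map_eq_zero]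
  intro w hw
  exact hsep w (fun j hj => congrFun (congrArg Prod.fst hw) ⟨j, by omega⟩) (congrArg Prod.snd hw)

lemma exists_isSmoothDiffeo_coordMap [FiniteDimensional ℝ E] {p : ℕ}
    (hdim : Module.finrank ℝ E = p + 2) {z : ℕ → E → ℝ} {t : E → ℝ} {q : E}
    (hcoord : ∀ᶠ x in 𝓝 q, (∀ j ≤ p, ContDiffAt ℝ ∞ (z j) x) ∧ ContDiffAt ℝ ∞ t x)
    (hsep : ∀ w, (∀ j ≤ p, fderiv ℝ (z j) q w = 0) → fderiv ℝ t q w = 0 → w = 0) :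
    ∃ κ : OpenPartialHomeomorph E ((Fin (p + 1) → ℝ) × ℝ),
      q ∈ κ.source ∧ ⇑κ = coordMap z t (p + 1) ∧ IsSmoothDiffeo κ := by
  obtain ⟨κ, hq, -, hκ, hdiffeo⟩ := exists_isSmoothDiffeo_of_injective_fderiv
    (by simp [hdim]) univ_mem (hcoord.mono fun x hx => contDiffAt_coordMap hx.1 hx.2)
    (injective_fderiv_coordMap hcoord.self_of_nhds.1 hcoord.self_of_nhds.2 hsep)
  exact ⟨κ, hq, hκ, hdiffeo⟩

lemma IsFrameAt.linearIndependent_pair {G : E → Submodule ℝ E} {a b : E → E}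
    {θ : E → E →L[ℝ] Fin 2 → ℝ} {x : E} (h : IsFrameAt G ![a, b] θ x) :
    LinearIndependent ℝ ![a x, b x] := by
  have hpair : ![a x, b x] = fun i => ![a, b] i x := funext fun i => by fin_cases i <;> rfl
  exact hpair ▸ h.linearIndependent

end Chart

/-- The coordinates `z 0, …, z p` pulled back to `M × ℝ`, followed by `c`. -/
def prolongedCoord {M : Type*} (z : ℕ → M → ℝ) (p : ℕ) (c : M × ℝ → ℝ) : ℕ → M × ℝ → ℝ :=
  Function.update (fun j u => z j u.1) (p + 1) c

lemma prolongedCoord_of_le {M : Type*} {z : ℕ → M → ℝ} {p : ℕ} {c : M × ℝ → ℝ} {j : ℕ}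
    (hj : j ≤ p) : prolongedCoord z p c j = fun u => z j u.1 :=
  Function.update_of_ne (by omega) _ _

lemma prolongedCoord_last {M : Type*} {z : ℕ → M → ℝ} {p : ℕ} {c : M × ℝ → ℝ} :
    prolongedCoord z p c (p + 1) = c := Function.update_self _ _ _

lemma coordMap_prolongedCoord {M : Type*} {z : ℕ → M → ℝ} {t : M → ℝ} {p : ℕ} {c : M × ℝ → ℝ}
    {u : M × ℝ} {j : ℕ} (hj : j < p) :
    coordMap (prolongedCoord z p c) (fun u => t u.1) (j + 2) u = coordMap z t (j + 2) u.1 := by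
  refine Prod.ext (funext fun i => ?_) rfl
  simp only [coordMap]
  rw [prolongedCoord_of_le (by omega)]

variable {M : Type*} [NormedAddCommGroup M] [NormedSpace ℝ M]

/-- The derivative along `X` of the function `(x, y) ↦ T x` on `M × ℝ`. -/
def derivAlong (T : M → ℝ) (X : M × ℝ → M × ℝ) (u : M × ℝ) : ℝ := fderiv ℝ T u.1 (X u).1

/-- The ratio of the derivatives of `ζ` and `t` along `X`. -/
def derivRatio (ζ t : M → ℝ) (X : M × ℝ → M × ℝ) (u : M × ℝ) : ℝ :=
  derivAlong ζ X u / derivAlong t X u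

/-- The numerator of the derivative of `derivRatio ζ t X` in the vertical direction. -/
def verticalWronskian (ζ t : M → ℝ) (X : M × ℝ → M × ℝ) (u : M × ℝ) : ℝ :=
  derivAlong t X u * fderiv ℝ (derivAlong ζ X) u (0, 1) -
    derivAlong ζ X u * fderiv ℝ (derivAlong t X) u (0, 1)

variable {ζ t : M → ℝ} {X : M × ℝ → M × ℝ} {u : M × ℝ}

lemma contDiffAt_derivAlong (ht : ContDiffAt ℝ ∞ t u.1) (hX : ContDiffAt ℝ ∞ X u) :
    ContDiffAt ℝ ∞ (derivAlong t X) u :=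
  (ContDiffAt.comp u (ht.fderiv_right (m := ∞) (by simp)) contDiffAt_fst).clm_apply hX.fst

lemma fderiv_derivAlong_vertical (ht : ContDiffAt ℝ ∞ t u.1) (hX : ContDiffAt ℝ ∞ X u) :
    fderiv ℝ (derivAlong t X) u (0, 1) = fderiv ℝ t u.1 (fderiv ℝ X u (0, 1)).1 :=
  (hasDerivAt_vertical_line (contDiffAt_derivAlong ht hX)).unique <|
    ((fderiv ℝ t u.1).comp (ContinuousLinearMap.fst ℝ M ℝ)).hasFDerivAt.comp_hasDerivAt u.2
      (hasDerivAt_vertical_line hX)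

lemma fderiv_comp_fst (ht : ContDiffAt ℝ ∞ t u.1) (w : M × ℝ) :
    fderiv ℝ (fun u : M × ℝ => t u.1) u w = fderiv ℝ t u.1 w.1 := by
  have hderiv : HasFDerivAt (fun u : M × ℝ => t u.1)
      ((fderiv ℝ t u.1).comp (ContinuousLinearMap.fst ℝ M ℝ)) u :=
    (ht.differentiableAt (by simp)).hasFDerivAt.comp u hasFDerivAt_fst
  rw [hderiv.fderiv, ContinuousLinearMap.comp_apply, ContinuousLinearMap.coe_fst']

lemma contDiffAt_derivRatio (hζ : ContDiffAt ℝ ∞ ζ u.1) (ht : ContDiffAt ℝ ∞ t u.1)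
    (hX : ContDiffAt ℝ ∞ X u) (hne : derivAlong t X u ≠ 0) : ContDiffAt ℝ ∞ (derivRatio ζ t X) u :=
  (contDiffAt_derivAlong hζ hX).div (contDiffAt_derivAlong ht hX) hne

lemma fderiv_derivRatio_vertical_ne_zero (hζ : ContDiffAt ℝ ∞ ζ u.1) (ht : ContDiffAt ℝ ∞ t u.1)
    (hX : ContDiffAt ℝ ∞ X u) (hne : derivAlong t X u ≠ 0)
    (hwronskian : verticalWronskian ζ t X u ≠ 0) :
    fderiv ℝ (derivRatio ζ t X) u (0, 1) ≠ 0 := by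
  have hquot := (hasDerivAt_vertical_line (contDiffAt_derivAlong hζ hX)).div
    (hasDerivAt_vertical_line (contDiffAt_derivAlong ht hX)) hne
  rw [(hasDerivAt_vertical_line (contDiffAt_derivRatio hζ ht hX hne)).unique hquot]
  refine div_ne_zero ?_ (pow_ne_zero 2 hne)
  rwa [mul_comm]

lemma frequently_derivAlong_ne_zero (hwronskian : verticalWronskian ζ t X u ≠ 0) :
    ∃ᶠ v in 𝓝 u, derivAlong t X v ≠ 0 := by
  intro hvanish
  have hzero : derivAlong t X =ᶠ[𝓝 u] fun _ => 0 := hvanish.mono fun v hv => not_not.1 hv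
  refine hwronskian ?_
  rw [verticalWronskian, hzero.fderiv_eq, hzero.self_of_nhds]
  simp

variable {z : ℕ → M → ℝ} {p : ℕ}

namespace IsGoursatFlowBox

variable {B : Set M} {J : Set ℝ} {G : ℕ → M × ℝ → Submodule ℝ (M × ℝ)} {f : M × ℝ → M × ℝ}
  {Φ : (j : ℕ) → (Fin (j + 2) → ℝ) × ℝ → ℝ}

lemma fst_mem_reducedFlag {m : ℕ} (h : IsGoursatFlowBox m B J G f) (hm : 2 ≤ m)
    (hu : u ∈ B ×ˢ J) {w : M × ℝ} (hw : w ∈ G 0 u) : w.1 ∈ reducedFlag G 0 u.1 :=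
  (h.mem_flag_succ_iff hm hu.1 hu.2).1 (h.isGoursatSystem.le_succ 0 (by omega) u hu hw)

lemma exists_section_linearIndependent_vertical {m : ℕ} (h : IsGoursatFlowBox m B J G f)
    (hm : 2 ≤ m) (hu : u ∈ B ×ˢ J) :
    ∃ X, IsLocalSection (G 0) X u ∧ LinearIndependent ℝ ![((0, 1) : M × ℝ), X u] := by
  have hrank := h.isGoursatSystem.finrank_flag 0 (by omega) u hu
  let e : G 0 u := ⟨(0, 1), h.vertical_mem u.1 hu.1 u.2 hu.2⟩
  obtain ⟨v, hli⟩ := exists_linearIndependent_pair_of_one_lt_finrank (R := ℝ) (by omega)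
    (x := e) (by simp [e, Subtype.ext_iff])
  obtain ⟨X, hX, hXv⟩ := h.isGoursatSystem.exists_section 0 (by omega) u hu v v.2
  refine ⟨X, hX, ?_⟩
  rw [LinearIndependent.pair_iff] at hli ⊢
  exact fun r s hrs => hli r s (Subtype.ext (by simpa [e, hXv] using hrs))

variable [FiniteDimensional ℝ M]

lemma verticalWronskian_ne_zero (h : IsGoursatFlowBox (p + 2) B J G f) (hu : u ∈ B ×ˢ J)
    (hX : IsLocalSection (G 0) X u) (hli : LinearIndependent ℝ ![((0, 1) : M × ℝ), X u])
    (htri : IsTriangularAt p (reducedFlag G 0) (transversalField f) z t Φ u.1) :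
    verticalWronskian (z p) t X u ≠ 0 := by
  have hsec := h.isLocalSection_verticalField (k := 0) (by omega) hu.1 hu.2
  have hnotMem := h.isGoursatSystem.lieBracket_notMem_of_linearIndependent (by omega) hu hsec hX hli
  have hmem := h.isGoursatSystem.lieBracket_mem_succ 0 (by omega) u hu _ _ hsec hX
  rw [lieBracket_verticalField] at hnotMem hmem
  rw [verticalWronskian, fderiv_derivAlong_vertical (htri.contDiffAt_coord p le_rfl)
    hX.self_of_nhds.1, fderiv_derivAlong_vertical htri.contDiffAt_time hX.self_of_nhds.1]
  exact mul_sub_mul_ne_zero_of_linearIndependent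
    (L := (fderiv ℝ (z p) u.1 : M →ₗ[ℝ] ℝ)) (T := (fderiv ℝ t u.1 : M →ₗ[ℝ] ℝ))
    (fun w hw hzw htw => htri.eq_zero_of_mem hw hzw htw)
    (h.fst_mem_reducedFlag (by omega) hu hX.self_of_nhds.2)
    ((h.mem_flag_succ_iff (by omega) hu.1 hu.2).1 hmem)
    (linearIndependent_fst_pair (h.vertical_mem u.1 hu.1 u.2 hu.2) hX.self_of_nhds.2 hnotMem hli)

lemma fderiv_coord_of_lt (h : IsGoursatFlowBox (p + 2) B J G f) (hu : u ∈ B ×ˢ J)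
    (htri : IsTriangularAt p (reducedFlag G 0) (transversalField f) z t Φ u.1) {j : ℕ} (hj : j < p)
    {w : M × ℝ} (hw : w ∈ G 0 u) : fderiv ℝ (z j) u.1 (f u + w).1 =
      Φ j (coordMap z t (j + 2) u.1) + z (j + 1) u.1 * fderiv ℝ t u.1 (f u + w).1 := by
  have hadd := Submodule.add_mem _ (h.drift_sub_mem (by omega) hu.1 hu.2)
    (h.fst_mem_reducedFlag (by omega) hu hw)
  have hsum : transversalField f u.1 + ((f (u.1, u.2)).1 - transversalField f u.1 + w.1) =
      (f u + w).1 := by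
    rw [Prod.fst_add]
    abel
  rw [← hsum]
  exact htri.fderiv_coord j hj _ hadd

end IsGoursatFlowBox

lemma IsFrameAt.fderiv_eq_derivRatio_mul {G : M × ℝ → Submodule ℝ (M × ℝ)}
    {θ : M × ℝ → M × ℝ →L[ℝ] Fin 2 → ℝ}
    (h : IsFrameAt G ![verticalField, X] θ u) (hne : derivAlong t X u ≠ 0) {w : M × ℝ}
    (hw : w ∈ G u) : fderiv ℝ ζ u.1 w.1 = derivRatio ζ t X u * fderiv ℝ t u.1 w.1 := by
  have hfst : w.1 = θ u w 1 • (X u).1 := by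
    simpa [verticalField] using (congrArg Prod.fst (h.sum_coeff_smul w hw)).symm
  rw [hfst, map_smul, map_smul, smul_eq_mul, smul_eq_mul, derivRatio, ← derivAlong, ← derivAlong]
  field_simp

/-- The drift of the coordinate `ζ` relative to the rate of change `derivRatio ζ t X` of `ζ` with
respect to `t`. -/
def relativeDrift (ζ t : M → ℝ) (X f : M × ℝ → M × ℝ) (u : M × ℝ) : ℝ :=
  derivAlong ζ f u - derivRatio ζ t X u * derivAlong t f u

variable {B : Set M} {J : Set ℝ} {G : ℕ → M × ℝ → Submodule ℝ (M × ℝ)} {f : M × ℝ → M × ℝ}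
  {Φ : (j : ℕ) → (Fin (j + 2) → ℝ) × ℝ → ℝ} {θ : M × ℝ → M × ℝ →L[ℝ] Fin 2 → ℝ}

lemma contDiffAt_relativeDrift (hζ : ContDiffAt ℝ ∞ ζ u.1) (ht : ContDiffAt ℝ ∞ t u.1)
    (hX : ContDiffAt ℝ ∞ X u) (hf : ContDiffAt ℝ ∞ f u) (hne : derivAlong t X u ≠ 0) :
    ContDiffAt ℝ ∞ (relativeDrift ζ t X f) u :=
  (contDiffAt_derivAlong hζ hf).sub
    ((contDiffAt_derivRatio hζ ht hX hne).mul (contDiffAt_derivAlong ht hf))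

lemma IsFrameAt.fderiv_drift_add {G : M × ℝ → Submodule ℝ (M × ℝ)}
    (h : IsFrameAt G ![verticalField, X] θ u) (hne : derivAlong t X u ≠ 0) {w : M × ℝ}
    (hw : w ∈ G u) :
    fderiv ℝ ζ u.1 (f u + w).1 =
      relativeDrift ζ t X f u + derivRatio ζ t X u * fderiv ℝ t u.1 (f u + w).1 := by
  rw [Prod.fst_add, map_add, map_add, h.fderiv_eq_derivRatio_mul hne hw, relativeDrift,
    derivAlong, derivAlong]
  ring

/-- At `u`, the reduced system has the triangular coordinates `z, t`, the control distribution is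
framed by the vertical field and `X`, and `derivRatio (z p) t X` can serve as a new coordinate. -/
structure IsProlongableAt (p : ℕ) (G : ℕ → M × ℝ → Submodule ℝ (M × ℝ)) (f : M × ℝ → M × ℝ)
    (z : ℕ → M → ℝ) (t : M → ℝ) (Φ : (j : ℕ) → (Fin (j + 2) → ℝ) × ℝ → ℝ) (X : M × ℝ → M × ℝ)
    (θ : M × ℝ → M × ℝ →L[ℝ] Fin 2 → ℝ) (u : M × ℝ) : Prop where
  isTriangularAt : IsTriangularAt p (reducedFlag G 0) (transversalField f) z t Φ u.1
  isFrameAt : IsFrameAt (G 0) ![verticalField, X] θ u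
  derivAlong_ne_zero : derivAlong t X u ≠ 0
  verticalWronskian_ne_zero : verticalWronskian (z p) t X u ≠ 0

namespace IsProlongableAt

lemma contDiffAt_prolongedCoord (h : IsProlongableAt p G f z t Φ X θ u) {j : ℕ} (hj : j ≤ p + 1) :
    ContDiffAt ℝ ∞ (prolongedCoord z p (derivRatio (z p) t X) j) u := by
  obtain ⟨htri, hframe, hne, -⟩ := h
  obtain rfl | hj := hj.eq_or_lt
  · rw [prolongedCoord_last]
    exact contDiffAt_derivRatio (htri.contDiffAt_coord p le_rfl) htri.contDiffAt_time
      (hframe.contDiffAt_field 1) hne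
  · rw [prolongedCoord_of_le (by omega)]
    exact (htri.contDiffAt_coord j (by omega)).comp u contDiffAt_fst

lemma contDiffAt_time (h : IsProlongableAt p G f z t Φ X θ u) :
    ContDiffAt ℝ ∞ (fun u : M × ℝ => t u.1) u :=
  h.isTriangularAt.contDiffAt_time.comp u contDiffAt_fst

lemma eq_zero_of_fderiv_eq_zero (h : IsProlongableAt p G f z t Φ X θ u) {w : M × ℝ}
    (hz : ∀ j ≤ p + 1, fderiv ℝ (prolongedCoord z p (derivRatio (z p) t X) j) u w = 0)
    (ht : fderiv ℝ (fun u : M × ℝ => t u.1) u w = 0) : w = 0 := by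
  obtain ⟨htri, hframe, hne, hwronskian⟩ := h
  have hfst : w.1 = 0 := by
    refine htri.eq_zero_of_fderiv_eq_zero _ (fun j hj => ?_)
      (by rwa [fderiv_comp_fst htri.contDiffAt_time] at ht)
    have hzj := hz j (by omega)
    rwa [prolongedCoord_of_le hj, fderiv_comp_fst (htri.contDiffAt_coord j hj)] at hzj
  have hw : w = w.2 • ((0, 1) : M × ℝ) := Prod.ext (by simp [hfst]) (by simp)
  have hlast := hz (p + 1) le_rfl
  rw [prolongedCoord_last, hw, map_smul, smul_eq_mul] at hlast
  exact Prod.ext hfst <| (mul_eq_zero.1 hlast).resolve_right <| fderiv_derivRatio_vertical_ne_zero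
    (htri.contDiffAt_coord p le_rfl) htri.contDiffAt_time (hframe.contDiffAt_field 1) hne hwronskian

end IsProlongableAt

variable [FiniteDimensional ℝ M]

namespace IsGoursatFlowBox

/- The derivative of `t` along `X` may vanish at a given point, but a nonzero Wronskian prevents it
from vanishing on an open set. -/
lemma exists_eventually_isProlongableAt (h : IsGoursatFlowBox (p + 2) B J G f) {q : M}
    (hq : q ∈ B) (htri : ∀ᶠ x in 𝓝 q,
      IsTriangularAt p (reducedFlag G 0) (transversalField f) z t Φ x) :
    ∃ X θ, ∃ q₁ ∈ B ×ˢ J, ∀ᶠ u in 𝓝 q₁, IsProlongableAt p G f z t Φ X θ u := by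
  have hq0 : (q, (0 : ℝ)) ∈ B ×ˢ J := ⟨hq, h.zero_mem⟩
  obtain ⟨X, hX, hli⟩ := h.exists_section_linearIndependent_vertical (by omega) hq0
  obtain ⟨θ, hframe⟩ := h.isGoursatSystem.exists_frame_pair (by omega) hq0
    (h.isLocalSection_verticalField (by omega) hq h.zero_mem) hX hli
  have hprep : ∀ᶠ u in 𝓝 (q, (0 : ℝ)), u ∈ B ×ˢ J ∧ IsFrameAt (G 0) ![verticalField, X] θ u ∧
      IsTriangularAt p (reducedFlag G 0) (transversalField f) z t Φ u.1 ∧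
      verticalWronskian (z p) t X u ≠ 0 := by
    filter_upwards [h.isGoursatSystem.eventually_mem hq0, hframe, hX.eventually,
      continuousAt_fst.eventually htri] with u hu hframeu hXu htriu
    exact ⟨hu, hframeu, htriu,
      h.verticalWronskian_ne_zero hu hXu hframeu.linearIndependent_pair htriu⟩
  obtain ⟨q₁, hne, hprep₁⟩ := ((frequently_derivAlong_ne_zero
    hprep.self_of_nhds.2.2.2).and_eventually hprep.eventually_nhds).exists
  obtain ⟨hq₁, hframe₁, htri₁, -⟩ := hprep₁.self_of_nhds
  have hcont :=
    (contDiffAt_derivAlong htri₁.contDiffAt_time (hframe₁.contDiffAt_field 1)).continuousAt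
  refine ⟨X, θ, q₁, hq₁, ?_⟩
  filter_upwards [hprep₁, hcont.eventually_ne hne] with u ⟨_, hframeu, htriu, hwronskian⟩ hneu
  exact ⟨htriu, hframeu, hneu, hwronskian⟩

lemma isTriangularAt_prolongedCoord (h : IsGoursatFlowBox (p + 2) B J G f) (hu : u ∈ B ×ˢ J)
    (hpro : IsProlongableAt p G f z t Φ X θ u)
    {κ : OpenPartialHomeomorph (M × ℝ) ((Fin (p + 2) → ℝ) × ℝ)} (hκ : IsSmoothDiffeo κ)
    (hκ_eq : ⇑κ = coordMap (prolongedCoord z p (derivRatio (z p) t X)) (fun u => t u.1) (p + 2))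
    (huκ : u ∈ κ.source) :
    IsTriangularAt (p + 1) (G 0) f (prolongedCoord z p (derivRatio (z p) t X)) (fun u => t u.1)
      (Function.update Φ p (relativeDrift (z p) t X f ∘ κ.symm)) u := by
  refine ⟨fun j hj => hpro.contDiffAt_prolongedCoord hj, hpro.contDiffAt_time,
    fun w => hpro.eq_zero_of_fderiv_eq_zero, fun j hj => ?_, fun j hj w hw => ?_⟩
  all_goals
    obtain ⟨htri, hframe, hne, -⟩ := hpro
    have hz := htri.contDiffAt_coord
    have ht := htri.contDiffAt_time
    obtain hj | rfl := Nat.lt_succ_iff_lt_or_eq.1 hj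
  · rw [Function.update_of_ne hj.ne, coordMap_prolongedCoord hj]
    exact htri.contDiffAt_drift j hj
  · rw [Function.update_self, ← hκ_eq]
    refine ContDiffAt.comp (κ u) ?_ (hκ.contDiffAt_symm (κ.map_source huκ))
    rw [κ.left_inv huκ]
    exact contDiffAt_relativeDrift (hz j le_rfl) ht (hframe.contDiffAt_field 1)
      (h.isGoursatSystem.contDiffAt_drift u hu) hne
  · rw [Function.update_of_ne hj.ne, coordMap_prolongedCoord hj, prolongedCoord_of_le hj.le,
      prolongedCoord_of_le hj, fderiv_comp_fst (hz j hj.le), fderiv_comp_fst ht]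
    exact h.fderiv_coord_of_lt hu htri hj hw
  · rw [Function.update_self, ← hκ_eq, Function.comp_apply, κ.left_inv huκ,
      prolongedCoord_of_le le_rfl, prolongedCoord_last, fderiv_comp_fst (hz j le_rfl),
      fderiv_comp_fst ht]
    exact hframe.fderiv_drift_add hne hw

theorem hasTriangularCoordinates_succ (h : IsGoursatFlowBox (p + 2) B J G f)
    (hred : HasTriangularCoordinates p B (reducedFlag G 0) (transversalField f)) :
    HasTriangularCoordinates (p + 1) (B ×ˢ J) (G 0) f := by
  obtain ⟨q, hq, z, t, Φ, htri⟩ := hred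
  obtain ⟨X, θ, q₁, hq₁, hpro⟩ := h.exists_eventually_isProlongableAt hq htri
  obtain ⟨κ, hq₁κ, hκ_eq, hκ⟩ := exists_isSmoothDiffeo_coordMap (p := p + 1)
    h.isGoursatSystem.finrank_eq
    (hpro.mono fun u hu => ⟨fun j hj => hu.contDiffAt_prolongedCoord hj, hu.contDiffAt_time⟩)
    (fun w => hpro.self_of_nhds.eq_zero_of_fderiv_eq_zero)
  refine ⟨q₁, hq₁, prolongedCoord z p (derivRatio (z p) t X), fun u => t u.1,
    Function.update Φ p (relativeDrift (z p) t X f ∘ κ.symm), ?_⟩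
  filter_upwards [hpro, h.isGoursatSystem.eventually_mem hq₁, κ.open_source.mem_nhds hq₁κ]
    with u hprou hu huκ
  exact h.isTriangularAt_prolongedCoord hu hprou hκ hκ_eq huκ

end IsGoursatFlowBox

lemma IsGoursatSystem.hasTriangularCoordinates_zero {E : Type*} [NormedAddCommGroup E]
    [NormedSpace ℝ E] [FiniteDimensional ℝ E] {O : Set E} {G : ℕ → E → Submodule ℝ E} {f : E → E}
    (h : IsGoursatSystem 2 O G f) (hO : O.Nonempty) : HasTriangularCoordinates 0 O (G 0) f := by
  obtain ⟨q, hq⟩ := hO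
  have hdim : Module.finrank ℝ E = Module.finrank ℝ (ℝ × ℝ) := by rw [h.finrank_eq]; simp
  let e : E ≃L[ℝ] ℝ × ℝ := (LinearEquiv.ofFinrankEq _ _ hdim).toContinuousLinearEquiv
  let ζ : E →L[ℝ] ℝ := (ContinuousLinearMap.fst ℝ ℝ ℝ).comp e.toContinuousLinearMap
  let τ : E →L[ℝ] ℝ := (ContinuousLinearMap.snd ℝ ℝ ℝ).comp e.toContinuousLinearMap
  refine ⟨q, hq, fun _ => ζ, τ, 0, Eventually.of_forall fun x => ⟨fun _ _ => ζ.contDiff.contDiffAt,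
    τ.contDiff.contDiffAt, fun w hζ hτ => ?_, by omega, by omega⟩⟩
  rw [ContinuousLinearMap.fderiv] at hτ
  have hζ₀ := hζ 0 le_rfl
  rw [ContinuousLinearMap.fderiv] at hζ₀
  exact e.map_eq_zero_iff.1 (Prod.ext hζ₀ hτ)

theorem IsGoursatSystem.hasTriangularCoordinates {E : Type*} [NormedAddCommGroup E]
    [NormedSpace ℝ E] [FiniteDimensional ℝ E] {O : Set E} {G : ℕ → E → Submodule ℝ E} {f : E → E}
    (h : IsGoursatSystem (p + 2) O G f) (hO : O.Nonempty) :
    HasTriangularCoordinates p O (G 0) f := by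
  induction p generalizing E with
  | zero => exact h.hasTriangularCoordinates_zero hO
  | succ p ih =>
    obtain ⟨q, hq⟩ := hO
    obtain ⟨M, κ, hκ, hκO, B, J, hsub, hbox⟩ := h.exists_isGoursatFlowBox (by omega) hq
    have hred := ih hbox.isGoursatSystem_reducedFlag hbox.nonempty_base
    exact (((hbox.hasTriangularCoordinates_succ hred).mono hsub).of_pullback hκ).mono hκO

end Prolongation

/-! ### The derived flag of a control system -/

section DerivedFlag

variable {n : ℕ} {U : Set (Fin n → ℝ)} {A B : Set (VF n)} {X : VF n} {q : Fin n → ℝ}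

/-- The subspace of tangent vectors spanned by the values at `q` of the fields in `A`; its dimension
is `evalDim A q`. -/
def valueSpace (A : Set (VF n)) (q : Fin n → ℝ) : Submodule ℝ (Fin n → ℝ) :=
  Submodule.span ℝ {w | ∃ X ∈ A, w = X q}

lemma apply_mem_valueSpace (hX : X ∈ A) (q : Fin n → ℝ) : X q ∈ valueSpace A q :=
  Submodule.subset_span ⟨X, hX, rfl⟩

lemma valueSpace_le {H : Submodule ℝ (Fin n → ℝ)} (h : ∀ X ∈ A, X q ∈ H) : valueSpace A q ≤ H := by
  refine Submodule.span_le.2 ?_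
  rintro _ ⟨X, hX, rfl⟩
  exact h X hX

lemma valueSpace_mono (h : A ⊆ B) (q : Fin n → ℝ) : valueSpace A q ≤ valueSpace B q :=
  valueSpace_le fun _ hX => apply_mem_valueSpace (h hX) q

/-- Every field in `A` is smooth at every point of `U`. -/
def IsSmoothOn (U : Set (Fin n → ℝ)) (A : Set (VF n)) : Prop :=
  ∀ X ∈ A, ∀ x ∈ U, ContDiffAt ℝ ∞ X x

namespace IsSmoothOn

lemma spanOn (hU : IsOpen U) (h : IsSmoothOn U A) : IsSmoothOn U (spanOn U A) := by
  rintro X ⟨m, c, Y, hc, hY, hX⟩ x hx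
  have hX_eq : X =ᶠ[𝓝 x] fun x => ∑ i, c i x • Y i x := eventually_of_mem (hU.mem_nhds hx) hX
  exact (ContDiffAt.sum fun i _ => ((hc i).contDiffAt (hU.mem_nhds hx)).smul
    (h _ (hY i) x hx)).congr_of_eventuallyEq hX_eq

lemma addOn (hU : IsOpen U) (hA : IsSmoothOn U A) (hB : IsSmoothOn U B) :
    IsSmoothOn U (addOn U A B) := by
  rintro X ⟨Y, hY, Z, hZ, hX⟩ x hx
  have hX_eq : X =ᶠ[𝓝 x] fun x => Y x + Z x := eventually_of_mem (hU.mem_nhds hx) hX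
  exact ((hA Y hY x hx).add (hB Z hZ x hx)).congr_of_eventuallyEq hX_eq

lemma bracketSet (hA : IsSmoothOn U A) (hB : IsSmoothOn U B) : IsSmoothOn U (bracketSet A B) := by
  rintro _ ⟨X, hX, Y, hY, rfl⟩ x hx
  exact (hA X hX x hx).lieBracket_vectorField (hB Y hY x hx) (by simp)

lemma derivedFlag (hU : IsOpen U) (h : IsSmoothOn U A) : ∀ k, IsSmoothOn U (derivedFlag U A k)
  | 0 => h
  | k + 1 =>
    have ih := derivedFlag hU h k
    ih.addOn hU ((ih.bracketSet ih).spanOn hU)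

lemma isLocalSection (hU : IsOpen U) (h : IsSmoothOn U A) (hX : X ∈ A) (hq : q ∈ U) :
    IsLocalSection (valueSpace A) X q :=
  eventually_of_mem (hU.mem_nhds hq) fun x hx => ⟨h X hX x hx, apply_mem_valueSpace hX x⟩

lemma exists_section (hU : IsOpen U) (h : IsSmoothOn U A) (hq : q ∈ U) {v : Fin n → ℝ}
    (hv : v ∈ valueSpace A q) : ∃ X, IsLocalSection (valueSpace A) X q ∧ X q = v := by
  induction hv using Submodule.span_induction with
  | mem v hv =>
    obtain ⟨X, hX, rfl⟩ := hv
    exact ⟨X, h.isLocalSection hU hX hq, rfl⟩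
  | zero =>
    exact ⟨0, Eventually.of_forall fun x => ⟨contDiffAt_const, Submodule.zero_mem _⟩, rfl⟩
  | add v w _ _ hv hw =>
    obtain ⟨X, hX, rfl⟩ := hv
    obtain ⟨Y, hY, rfl⟩ := hw
    refine ⟨fun x => X x + Y x, ?_, rfl⟩
    filter_upwards [hX, hY] with x hXx hYx
    exact ⟨hXx.1.add hYx.1, Submodule.add_mem _ hXx.2 hYx.2⟩
  | smul r v _ hv =>
    obtain ⟨X, hX, rfl⟩ := hv
    refine ⟨fun x => r • X x, ?_, rfl⟩
    filter_upwards [hX] with x hXx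
    exact ⟨hXx.1.const_smul r, Submodule.smul_mem _ _ hXx.2⟩

lemma exists_frame (hU : IsOpen U) (h : IsSmoothOn U A) (hq : q ∈ U)
    (hrank : ∀ᶠ x in 𝓝 q, evalDim A x = evalDim A q) :
    ∃ (e : Fin (evalDim A q) → VF n) (θ : (Fin n → ℝ) → (Fin n → ℝ) →L[ℝ] Fin (evalDim A q) → ℝ),
      (∀ i, e i ∈ A) ∧ ∀ᶠ x in 𝓝 q, IsFrameAt (valueSpace A) e θ x := by
  obtain ⟨b, hb, -, hli⟩ := Submodule.exists_fun_fin_finrank_span_eq ℝ {w | ∃ X ∈ A, w = X q}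
  choose e he hbe using hb
  obtain ⟨θ, hθ⟩ := exists_isFrameAt (G := valueSpace A) (e := e)
    (hrank.mono fun x hx => hx.trans (Fintype.card_fin _).symm)
    (fun i => h.isLocalSection hU (he i) hq) (by simpa only [← hbe] using hli)
  exact ⟨e, θ, he, hθ.mono fun _ hx => hx.1⟩

end IsSmoothOn

lemma zero_mem_spanOn (S : Set (VF n)) : (0 : VF n) ∈ spanOn U S :=
  ⟨0, fun _ _ => 0, fun i => i.elim0, fun i => i.elim0, fun i => i.elim0, fun x _ => by simp⟩

lemma zero_mem_derivedFlag (h : 0 ∈ A) : ∀ k, (0 : VF n) ∈ derivedFlag U A k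
  | 0 => h
  | k + 1 => ⟨0, zero_mem_derivedFlag h k, 0, zero_mem_spanOn _, fun x _ => by simp⟩

lemma derivedFlag_subset_succ (A : Set (VF n)) (k : ℕ) :
    derivedFlag U A k ⊆ derivedFlag U A (k + 1) :=
  fun X hX => ⟨X, hX, 0, zero_mem_spanOn _, fun x _ => by simp⟩

lemma lieBracket_mem_derivedFlag_succ (h : 0 ∈ A) {k : ℕ} {Y : VF n}
    (hX : X ∈ derivedFlag U A k) (hY : Y ∈ derivedFlag U A k) :
    lieBracket ℝ X Y ∈ derivedFlag U A (k + 1) :=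
  ⟨0, zero_mem_derivedFlag h k, lieBracket ℝ X Y,
    ⟨1, fun _ _ => 1, fun _ => lieBracket ℝ X Y, fun _ => contDiffOn_const,
      fun _ => ⟨X, hX, Y, hY, rfl⟩, fun x _ => by simp⟩, fun x _ => by simp⟩

lemma valueSpace_derivedFlag_succ_le {k : ℕ} (hq : q ∈ U)
    (h : ∀ X ∈ derivedFlag U A k, ∀ Y ∈ derivedFlag U A k,
      lieBracket ℝ X Y q ∈ valueSpace (derivedFlag U A k) q) :
    valueSpace (derivedFlag U A (k + 1)) q ≤ valueSpace (derivedFlag U A k) q := by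
  refine valueSpace_le ?_
  rintro X ⟨Y, hY, Z, ⟨m, c, W, -, hW, hZ⟩, hX⟩
  rw [hX q hq, hZ q hq]
  refine Submodule.add_mem _ (apply_mem_valueSpace hY q)
    (Submodule.sum_mem _ fun i _ => Submodule.smul_mem _ _ ?_)
  obtain ⟨X₁, hX₁, X₂, hX₂, hWi⟩ := hW i
  rw [hWi]
  exact h X₁ hX₁ X₂ hX₂

section Annihilator

variable {η : OneForm n}

lemma annihilatorOn_apply_eq_zero (hη : η ∈ annihilatorOn U A) (hq : q ∈ U) {v : Fin n → ℝ}
    (hv : v ∈ valueSpace A q) : η q v = 0 :=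
  have hle : valueSpace A q ≤ (η q).ker := valueSpace_le fun X hX => hη.2 X hX q hq
  hle hv

lemma IsSmoothOn.exists_annihilatorOn_eq (hU : IsOpen U) (h : IsSmoothOn U A) (hq : q ∈ U)
    (hrank : ∀ᶠ x in 𝓝 q, evalDim A x = evalDim A q) {ξ : Covector n}
    (hξ : ∀ v ∈ valueSpace A q, ξ v = 0) : ∃ ρ ∈ annihilatorOn U A, ρ q = ξ := by
  obtain ⟨e, θ, he, hframe⟩ := h.exists_frame hU hq hrank
  let coord (i : Fin (evalDim A q)) : (Fin (evalDim A q) → ℝ) →L[ℝ] ℝ :=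
    ContinuousLinearMap.proj i
  let σ : OneForm n := fun x => ξ - ∑ i, ξ (e i x) • (coord i).comp (θ x)
  have hσ_smooth : ∀ x, IsFrameAt (valueSpace A) e θ x → ContDiffAt ℝ ∞ σ x := fun x hx =>
    contDiffAt_const.sub (ContDiffAt.sum fun i _ =>
      (ξ.contDiff.contDiffAt.comp x (hx.contDiffAt_field i)).smul
        (contDiffAt_const.clm_comp hx.contDiffAt_coeff))
  have hσ_zero : ∀ x, IsFrameAt (valueSpace A) e θ x → ∀ v ∈ valueSpace A x, σ x v = 0 := by
    intro x hx v hv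
    have hsum := congrArg ξ (hx.sum_coeff_smul v hv)
    simp only [map_sum, map_smul, smul_eq_mul] at hsum
    simp [σ, coord, ← hsum, mul_comm, sum_apply]
  obtain ⟨χ, hχ_one, hχ_supp, hχ_smooth⟩ :=
    exists_contDiff_cutoff_smul (hframe.mono hσ_smooth) hframe
  refine ⟨fun x => χ x • σ x, ⟨hχ_smooth.contDiffOn, fun X hX x _ => ?_⟩, ?_⟩
  · by_cases hx : x ∈ tsupport χ
    · simp [hσ_zero x (hχ_supp hx) _ (apply_mem_valueSpace hX x)]
    · simp [image_eq_zero_of_notMem_tsupport hx]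
  · have hξe : ∀ i, ξ (e i q) = 0 := fun i => hξ _ (apply_mem_valueSpace (he i) q)
    simp [hχ_one.self_of_nhds, σ, hξe]

lemma fderiv_apply_add_apply_fderiv_eq_zero (hη : ContDiffAt ℝ ∞ η q) (hX : ContDiffAt ℝ ∞ X q)
    (h : ∀ᶠ x in 𝓝 q, η x (X x) = 0) (v : Fin n → ℝ) :
    fderiv ℝ η q v (X q) + η q (fderiv ℝ X q v) = 0 := by
  have hprod := fderiv_clm_apply (hη.differentiableAt (by simp)) (hX.differentiableAt (by simp))
  have hzero : fderiv ℝ (fun x => η x (X x)) q = 0 := by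
    rw [EventuallyEq.fderiv_eq (f := fun _ => (0 : ℝ)) h, fderiv_const_apply]
  have hv := congrArg (fun L : Covector n => L v) (hprod.symm.trans hzero)
  simpa [add_comm] using hv

lemma fderiv_annihilatorOn_apply (hU : IsOpen U) (hq : q ∈ U) (hη : η ∈ annihilatorOn U A)
    (hX : IsLocalSection (valueSpace A) X q) (v : Fin n → ℝ) :
    fderiv ℝ η q v (X q) = -η q (fderiv ℝ X q v) := by
  refine eq_neg_of_add_eq_zero_left (fderiv_apply_add_apply_fderiv_eq_zero
    (hη.1.contDiffAt (hU.mem_nhds hq)) hX.eventually_contDiffAt.self_of_nhds ?_ v)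
  filter_upwards [hX, hU.mem_nhds hq] with x hXx hx using annihilatorOn_apply_eq_zero hη hx hXx.2

lemma IsSmoothOn.mem_assocOf_annihilatorOn (hU : IsOpen U) (h : IsSmoothOn U A) (hq : q ∈ U)
    (hrank : ∀ᶠ x in 𝓝 q, evalDim A x = evalDim A q) (hX : IsLocalSection (valueSpace A) X q)
    (hchar : IsCharacteristicAt (valueSpace A) X q) : X q ∈ assocOf (annihilatorOn U A) q := by
  intro η hη
  refine ⟨annihilatorOn_apply_eq_zero hη hq hX.self_of_nhds.2, Submodule.subset_span ?_⟩
  suffices hvanish : ∀ v ∈ valueSpace A q, intExtDer η q (X q) v = 0 by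
    obtain ⟨ρ, hρ, hρq⟩ := h.exists_annihilatorOn_eq hU hq hrank hvanish
    exact ⟨ρ, hρ, hρq.symm⟩
  intro v hv
  obtain ⟨Y, hY, rfl⟩ := h.exists_section hU hq hv
  calc intExtDer η q (X q) (Y q)
      = fderiv ℝ η q (X q) (Y q) - fderiv ℝ η q (Y q) (X q) := rfl
    _ = -η q (lieBracket ℝ X Y q) := by
      rw [fderiv_annihilatorOn_apply hU hq hη hX, fderiv_annihilatorOn_apply hU hq hη hY,
        VectorField.lieBracket, map_sub]
      ring
    _ = 0 := by rw [annihilatorOn_apply_eq_zero hη hq (hchar.self_of_nhds Y hY), neg_zero]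

lemma IsSmoothOn.lieBracket_mem_valueSpace (hU : IsOpen U) (h : IsSmoothOn U A) (hq : q ∈ U)
    (hrank : ∀ᶠ x in 𝓝 q, evalDim A x = evalDim A q) {f : VF n}
    (hlie : ∀ η ∈ annihilatorOn U A, lieDerOneForm f η q ∈ retractOf (annihilatorOn U A) q)
    (hX : IsLocalSection (valueSpace A) X q) (hchar : IsCharacteristicAt (valueSpace A) X q) :
    lieBracket ℝ f X q ∈ valueSpace A q := by
  have hassoc := h.mem_assocOf_annihilatorOn hU hq hrank hX hchar
  rw [← Subspace.forall_mem_dualAnnihilator_apply_eq_zero_iff]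
  intro φ hφ
  obtain ⟨ρ, hρ, hρq⟩ := h.exists_annihilatorOn_eq hU hq hrank (ξ := φ.toContinuousLinearMap)
    ((Submodule.mem_dualAnnihilator φ).1 hφ)
  calc φ (lieBracket ℝ f X q)
      = ρ q (lieBracket ℝ f X q) := by rw [hρq]; rfl
    _ = -lieDerOneForm f ρ q (X q) := by
      rw [lieDerOneForm, add_apply, fderiv_annihilatorOn_apply hU hq hρ hX, VectorField.lieBracket,
        map_sub, ContinuousLinearMap.comp_apply]
      ring
    _ = 0 := by rw [hlie ρ hρ (X q) hassoc, neg_zero]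

end Annihilator

theorem isGoursatSystem_derivedFlag (hU : IsOpen U) {f : VF n} (hf : ContDiffOn ℝ ∞ f U)
    (hA : IsSmoothOn U A) (hzero : 0 ∈ A) {D : Set (Fin n → ℝ)} (hDopen : IsOpen D)
    (hDsub : D ⊆ U) (hdim : ∀ k, k + 2 ≤ n → ∀ q ∈ D, evalDim (derivedFlag U A k) q = 2 + k)
    (hlie : ∀ k, 1 ≤ k → k + 3 ≤ n → ∀ q ∈ D, ∀ η ∈ annihilatorOn U (derivedFlag U A k),
      lieDerOneForm f η q ∈ retractOf (annihilatorOn U (derivedFlag U A k)) q) :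
    IsGoursatSystem n D (fun k => valueSpace (derivedFlag U A k)) f := by
  have hflag := hA.derivedFlag hU
  have hrank : ∀ k, k + 2 ≤ n → ∀ q ∈ D,
      ∀ᶠ x in 𝓝 q, evalDim (derivedFlag U A k) x = evalDim (derivedFlag U A k) q :=
    fun k hk q hq => eventually_of_mem (hDopen.mem_nhds hq) fun x hx =>
      (hdim k hk x hx).trans (hdim k hk q hq).symm
  have hle : ∀ k q, valueSpace (derivedFlag U A k) q ≤ valueSpace (derivedFlag U A (k + 1)) q :=
    fun k q => valueSpace_mono (derivedFlag_subset_succ A k) q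
  refine
    { isOpen := hDopen
      finrank_eq := by simp
      contDiffAt_drift := fun x hx => hf.contDiffAt (hU.mem_nhds (hDsub hx))
      finrank_flag := fun k hk q hq => (hdim k hk q hq).trans (add_comm 2 k)
      exists_section := fun k _ q hq _ hv => (hflag k).exists_section hU (hDsub hq) hv
      le_succ := fun k _ q _ => hle k q
      lieBracket_mem_succ := fun k hk q hq X Y hX hY => ?_
      exists_lieBracket_notMem := fun k hk q hq => ?_
      lieBracket_drift_mem := fun k hk₁ hk q hq X hX hchar =>
        (hflag k).lieBracket_mem_valueSpace hU (hDsub hq) (hrank k (by omega) q hq)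
          (hlie k hk₁ hk q hq) hX hchar }
  · obtain ⟨e, θ, he, hframe⟩ := (hflag k).exists_frame hU (hDsub hq) (hrank k (by omega) q hq)
    exact lieBracket_mem_of_frame_lieBracket_mem hframe (hle k q) (fun i j =>
      apply_mem_valueSpace (lieBracket_mem_derivedFlag_succ hzero (he i) (he j)) q) hX hY
  · by_contra! hinvolutive
    have hsucc_le := valueSpace_derivedFlag_succ_le (hDsub hq) fun X hX Y hY =>
      hinvolutive X Y ((hflag k).isLocalSection hU hX (hDsub hq))
        ((hflag k).isLocalSection hU hY (hDsub hq))
    have hdim_le : evalDim (derivedFlag U A (k + 1)) q ≤ evalDim (derivedFlag U A k) q :=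
      Submodule.finrank_mono hsucc_le
    rw [hdim (k + 1) (by omega) q hq, hdim k (by omega) q hq] at hdim_le
    omega

end DerivedFlag

/-! ### Normalization by decoupling feedback -/

section SmoothMatrices

variable {E : Type*} [NormedAddCommGroup E] [NormedSpace ℝ E] {ι : Type*} [Fintype ι]
  [DecidableEq ι] {M : E → Matrix ι ι ℝ} {x : E}

lemma contDiffAt_det (hM : ∀ i j, ContDiffAt ℝ ∞ (fun x => M x i j) x) :
    ContDiffAt ℝ ∞ (fun x => (M x).det) x := by
  simp only [Matrix.det_apply']
  exact ContDiffAt.sum fun σ _ => contDiffAt_const.mul (contDiffAt_prod fun i _ => hM (σ i) i)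

lemma contDiffAt_adjugate_apply (hM : ∀ i j, ContDiffAt ℝ ∞ (fun x => M x i j) x) (i j : ι) :
    ContDiffAt ℝ ∞ (fun x => (M x).adjugate i j) x := by
  simp only [Matrix.adjugate_apply]
  refine contDiffAt_det fun k l => ?_
  by_cases hk : k = j
  · simp only [hk, Matrix.updateRow_self]
    exact contDiffAt_const
  · simp only [Matrix.updateRow_ne hk]
    exact hM k l

lemma contDiffAt_inv_apply (hM : ∀ i j, ContDiffAt ℝ ∞ (fun x => M x i j) x)
    (hdet : (M x).det ≠ 0) (i j : ι) : ContDiffAt ℝ ∞ (fun x => (M x)⁻¹ i j) x := by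
  simp only [Matrix.inv_def, Matrix.smul_apply, Ring.inverse_eq_inv', smul_eq_mul]
  exact ((contDiffAt_det hM).inv hdet).mul (contDiffAt_adjugate_apply hM i j)

end SmoothMatrices

section Decoupling

variable {E : Type*} [NormedAddCommGroup E] [NormedSpace ℝ E] {ι : Type*}
  {y : ι → E → ℝ} {f : E → E} {g : ι → E → E} {x : E}

/-- The decoupling matrix of the outputs `y` with respect to the input fields `g`, with entries the
derivatives `dyᵢ(gⱼ)`. -/
def decouplingMatrix (y : ι → E → ℝ) (g : ι → E → E) (x : E) : Matrix ι ι ℝ :=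
  Matrix.of fun i j => fderiv ℝ (y i) x (g j x)

lemma contDiffAt_fderiv_apply {h : E → ℝ} {X : E → E} (hh : ContDiffAt ℝ ∞ h x)
    (hX : ContDiffAt ℝ ∞ X x) : ContDiffAt ℝ ∞ (fun x => fderiv ℝ h x (X x)) x :=
  (hh.fderiv_right (by simp)).clm_apply hX

lemma contDiffAt_decouplingMatrix (hy : ∀ i, ContDiffAt ℝ ∞ (y i) x)
    (hg : ∀ j, ContDiffAt ℝ ∞ (g j) x) (i j : ι) :
    ContDiffAt ℝ ∞ (fun x => decouplingMatrix y g x i j) x :=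
  contDiffAt_fderiv_apply (hy i) (hg j)

variable [Fintype ι]

lemma fderiv_sum_smul_eq_decouplingMatrix_mulVec (c : ι → ℝ) (i : ι) :
    fderiv ℝ (y i) x (∑ j, c j • g j x) = (decouplingMatrix y g x *ᵥ c) i := by
  simp [decouplingMatrix, Matrix.mulVec, dotProduct, mul_comm]

variable [DecidableEq ι]

/-- The offset `α` of the feedback `u = α + M⁻¹ v`, `M` the decoupling matrix, for which `yᵢ` has
derivative `vᵢ` along the closed-loop field. -/
def decouplingOffset (y : ι → E → ℝ) (f : E → E) (g : ι → E → E) (x : E) : ι → ℝ :=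
  -((decouplingMatrix y g x)⁻¹ *ᵥ fun i => fderiv ℝ (y i) x (f x))

lemma det_decouplingMatrix_ne_zero (hli : LinearIndependent ℝ fun j => g j x)
    (hsep : ∀ w ∈ Submodule.span ℝ (range fun j => g j x), (∀ i, fderiv ℝ (y i) x w = 0) → w = 0) :
    (decouplingMatrix y g x).det ≠ 0 := by
  rw [Ne, ← Matrix.exists_mulVec_eq_zero_iff]
  rintro ⟨c, hc, hker⟩
  have hcomb : ∑ j, c j • g j x = 0 :=
    hsep _ (Submodule.sum_mem _ fun j _ => Submodule.smul_mem _ _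
      (Submodule.subset_span (mem_range_self j))) fun i => by
        rw [fderiv_sum_smul_eq_decouplingMatrix_mulVec, hker, Pi.zero_apply]
  exact hc (funext (Fintype.linearIndependent_iff.1 hli c hcomb))

lemma fderiv_closedLoop (hdet : (decouplingMatrix y g x).det ≠ 0) (v : ι → ℝ) (i : ι) :
    fderiv ℝ (y i) x (f x + ∑ j, (decouplingOffset y f g x +
      (decouplingMatrix y g x)⁻¹ *ᵥ v) j • g j x) = v i := by
  have hinv : decouplingMatrix y g x * (decouplingMatrix y g x)⁻¹ = 1 :=
    Matrix.mul_nonsing_inv _ (isUnit_iff_ne_zero.2 hdet)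
  rw [map_add, fderiv_sum_smul_eq_decouplingMatrix_mulVec, decouplingOffset, Matrix.mulVec_add,
    Matrix.mulVec_neg, Matrix.mulVec_mulVec, Matrix.mulVec_mulVec, hinv, Matrix.one_mulVec,
    Matrix.one_mulVec]
  simp

lemma contDiffAt_decouplingOffset (hy : ∀ i, ContDiffAt ℝ ∞ (y i) x) (hf : ContDiffAt ℝ ∞ f x)
    (hg : ∀ j, ContDiffAt ℝ ∞ (g j) x) (hdet : (decouplingMatrix y g x).det ≠ 0) (i : ι) :
    ContDiffAt ℝ ∞ (fun x => decouplingOffset y f g x i) x :=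
  (ContDiffAt.sum fun j _ =>
    (contDiffAt_inv_apply (contDiffAt_decouplingMatrix hy hg) hdet i j).mul
      (contDiffAt_fderiv_apply (hy j) hf)).neg

end Decoupling

section TriangularForm

variable {E : Type*} {p : ℕ} {z : ℕ → E → ℝ} {t : E → ℝ}

/-- The chart `(z 0, …, z p, t)` with values in `ℝ^(p+2)`. -/
def triangularChart (p : ℕ) (z : ℕ → E → ℝ) (t : E → ℝ) (x : E) : Fin (p + 2) → ℝ :=
  Fin.snoc (α := fun _ => ℝ) (fun j : Fin (p + 1) => z j x) (t x)

@[simp] lemma triangularChart_castSucc (x : E) (j : Fin (p + 1)) :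
    triangularChart p z t x j.castSucc = z j x :=
  Fin.snoc_castSucc ..

@[simp] lemma triangularChart_last (x : E) : triangularChart p z t x (Fin.last (p + 1)) = t x :=
  Fin.snoc_last ..

/-- The projection of `ℝ^(p+2)` onto its first `m` coordinates and its last one. The index is cast
through `Fin.ofNat`, which wraps around unless `m ≤ p + 2`. -/
def leadingCoords (p m : ℕ) : (Fin (p + 2) → ℝ) →L[ℝ] (Fin m → ℝ) × ℝ :=
  (ContinuousLinearMap.pi fun k : Fin m =>
    ContinuousLinearMap.proj (R := ℝ) (φ := fun _ => ℝ) (Fin.ofNat (p + 2) k)).prod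
    (ContinuousLinearMap.proj (Fin.last (p + 1)))

lemma leadingCoords_triangularChart {m : ℕ} (hm : m ≤ p + 1) (x : E) :
    leadingCoords p m (triangularChart p z t x) = coordMap z t m x := by
  refine Prod.ext (funext fun k => ?_) (triangularChart_last x)
  have hk : Fin.ofNat (p + 2) k = Fin.castSucc ⟨k, by omega⟩ :=
    Fin.ext (Nat.mod_eq_of_lt (by omega))
  change triangularChart p z t x (Fin.ofNat (p + 2) k) = z k x
  rw [hk, triangularChart_castSucc]

lemma leadingCoords_congr {m : ℕ} (hm : m ≤ p + 2) {y y' : Fin (p + 2) → ℝ}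
    (h : ∀ j : Fin (p + 2), j.1 < m ∨ j.1 + 1 = p + 2 → y j = y' j) :
    leadingCoords p m y = leadingCoords p m y' := by
  refine Prod.ext (funext fun k => h _ (Or.inl ?_)) (h _ (Or.inr rfl))
  rw [Fin.val_ofNat, Nat.mod_eq_of_lt (by omega)]
  exact k.2

variable [NormedAddCommGroup E] [NormedSpace ℝ E] {x : E}

lemma contDiffAt_triangularChart (hz : ∀ j ≤ p, ContDiffAt ℝ ∞ (z j) x)
    (ht : ContDiffAt ℝ ∞ t x) : ContDiffAt ℝ ∞ (triangularChart p z t) x := by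
  refine contDiffAt_pi.2 fun j => ?_
  induction j using Fin.lastCases with
  | last => simpa only [triangularChart_last] using ht
  | cast j => simpa only [triangularChart_castSucc] using hz j (by omega)

lemma fderiv_triangularChart_apply (hz : ∀ j ≤ p, ContDiffAt ℝ ∞ (z j) x)
    (ht : ContDiffAt ℝ ∞ t x) (w : E) :
    fderiv ℝ (triangularChart p z t) x w =
      Fin.snoc (α := fun _ => ℝ) (fun j : Fin (p + 1) => fderiv ℝ (z j) x w) (fderiv ℝ t x w) := by
  have hchart : DifferentiableAt ℝ (triangularChart p z t) x :=
    (contDiffAt_triangularChart hz ht).differentiableAt (by simp)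
  have hcomp (j : Fin (p + 2)) : fderiv ℝ (triangularChart p z t) x w j =
      fderiv ℝ (fun x => triangularChart p z t x j) x w := by rw [fderiv_apply hchart]; rfl
  funext j
  rw [hcomp]
  induction j using Fin.lastCases with
  | last => simp only [triangularChart_last, Fin.snoc_last]
  | cast j => simp only [triangularChart_castSucc, Fin.snoc_castSucc]

namespace IsTriangularAt

variable {G : E → Submodule ℝ E} {f : E → E} {Φ : (j : ℕ) → (Fin (j + 2) → ℝ) × ℝ → ℝ}

lemma injective_fderiv_triangularChart (h : IsTriangularAt p G f z t Φ x) :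
    Function.Injective (fderiv ℝ (triangularChart p z t) x) := by
  rw [injective_iff_map_eq_zero]
  intro w hw
  rw [fderiv_triangularChart_apply h.contDiffAt_coord h.contDiffAt_time] at hw
  refine h.eq_zero_of_fderiv_eq_zero w (fun j hj => ?_) ?_
  · simpa only [Fin.snoc_castSucc, Pi.zero_apply] using congrFun hw (Fin.castSucc ⟨j, by omega⟩)
  · simpa only [Fin.snoc_last, Pi.zero_apply] using congrFun hw (Fin.last (p + 1))

lemma exists_isSmoothDiffeo_triangularChart [FiniteDimensional ℝ E]
    (hdim : Module.finrank ℝ E = p + 2) {N : Set E} (hN : N ∈ 𝓝 x)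
    (h : ∀ᶠ y in 𝓝 x, IsTriangularAt p G f z t Φ y) :
    ∃ κ : OpenPartialHomeomorph E (Fin (p + 2) → ℝ), x ∈ κ.source ∧ κ.source ⊆ N ∧
      ⇑κ = triangularChart p z t ∧ IsSmoothDiffeo κ :=
  exists_isSmoothDiffeo_of_injective_fderiv (by simp [hdim]) hN
    (h.mono fun _ hy => contDiffAt_triangularChart hy.contDiffAt_coord hy.contDiffAt_time)
    h.self_of_nhds.injective_fderiv_triangularChart

lemma fderiv_triangularChart_eq_triRHS (h : IsTriangularAt p G f z t Φ x) {w : E} (hw : w ∈ G x)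
    {v : Fin 2 → ℝ} (hv₀ : fderiv ℝ t x (f x + w) = v 0)
    (hv₁ : fderiv ℝ (z p) x (f x + w) = v 1) :
    fderiv ℝ (triangularChart p z t) x (f x + w) =
      triRHS (p + 2) (fun i => Φ i ∘ leadingCoords p (i + 2)) (triangularChart p z t x) v := by
  rw [fderiv_triangularChart_apply h.contDiffAt_coord h.contDiffAt_time]
  funext j
  induction j using Fin.lastCases with
  | last => simp [triRHS, hv₀]
  | cast j =>
    simp only [Fin.snoc_castSucc, triRHS, Fin.val_castSucc]
    by_cases hj : j.1 < p
    · have hnext : triangularChart p z t x ⟨j.1 + 1, by omega⟩ = z (j.1 + 1) x :=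
        triangularChart_castSucc x ⟨j.1 + 1, by omega⟩
      rw [dif_pos (by omega), h.fderiv_coord j hj w hw, hv₀, hnext, Function.comp_apply,
        leadingCoords_triangularChart (by omega)]
    · have hjp : j.1 = p := by omega
      rw [dif_neg (by omega), if_pos (by omega), hjp, hv₁]

end IsTriangularAt

end TriangularForm

section Triangularization

variable {n : ℕ} {U : Set (Fin n → ℝ)} {f g1 g2 : VF n}

lemma valueSpace_spanOn (A : Set (VF n)) {x : Fin n → ℝ} (hx : x ∈ U) :
    valueSpace (spanOn U A) x = valueSpace A x := by
  refine le_antisymm (valueSpace_le ?_) (valueSpace_mono (fun X hX => ?_) x)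
  · rintro X ⟨m, c, Y, -, hY, hX⟩
    rw [hX x hx]
    exact Submodule.sum_mem _ fun i _ => Submodule.smul_mem _ _ (apply_mem_valueSpace (hY i) x)
  · exact ⟨1, fun _ _ => 1, fun _ => X, fun _ => contDiffOn_const, fun _ => hX, fun x _ => by simp⟩

lemma valueSpace_spanOn_pair {x : Fin n → ℝ} (hx : x ∈ U) :
    valueSpace (spanOn U {g1, g2}) x = Submodule.span ℝ (range fun j => ![g1, g2] j x) := by
  rw [valueSpace_spanOn _ hx, valueSpace, ← Matrix.range_cons_cons_empty g1 g2 ![]]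
  congr 1
  ext w
  constructor
  · rintro ⟨_, ⟨j, rfl⟩, rfl⟩
    exact ⟨j, rfl⟩
  · rintro ⟨j, rfl⟩
    exact ⟨_, ⟨j, rfl⟩, rfl⟩

lemma linearIndependent_of_evalDim_spanOn_pair {x : Fin n → ℝ} (hx : x ∈ U)
    (hdim : evalDim (spanOn U {g1, g2}) x = 2) :
    LinearIndependent ℝ fun j => ![g1, g2] j x := by
  rw [linearIndependent_iff_card_eq_finrank_span, Set.finrank, ← valueSpace_spanOn_pair hx,
    Fintype.card_fin]
  exact hdim.symm

lemma IsTriangularAt.det_decouplingMatrix_ne_zero {p : ℕ} {z : ℕ → (Fin n → ℝ) → ℝ}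
    {t : (Fin n → ℝ) → ℝ} {Φ : (j : ℕ) → (Fin (j + 2) → ℝ) × ℝ → ℝ} {x : Fin n → ℝ}
    (h : IsTriangularAt p (valueSpace (spanOn U {g1, g2})) f z t Φ x) (hx : x ∈ U)
    (hdim : evalDim (spanOn U {g1, g2}) x = 2) :
    (decouplingMatrix ![t, z p] ![g1, g2] x).det ≠ 0 := by
  refine _root_.det_decouplingMatrix_ne_zero (linearIndependent_of_evalDim_spanOn_pair hx hdim)
    fun w hw hsep => ?_
  rw [← valueSpace_spanOn_pair hx] at hw
  exact h.eq_zero_of_mem hw (hsep 1) (hsep 0)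

lemma IsTriangularAt.fderiv_triangularChart_closedLoop {p : ℕ} {z : ℕ → (Fin n → ℝ) → ℝ}
    {t : (Fin n → ℝ) → ℝ} {Φ : (j : ℕ) → (Fin (j + 2) → ℝ) × ℝ → ℝ} {x : Fin n → ℝ}
    (h : IsTriangularAt p (valueSpace (spanOn U {g1, g2})) f z t Φ x) (hx : x ∈ U)
    (hdim : evalDim (spanOn U {g1, g2}) x = 2) (v : Fin 2 → ℝ) :
    fderiv ℝ (triangularChart p z t) x (f x + ∑ j, (decouplingOffset ![t, z p] f ![g1, g2] x +
      (decouplingMatrix ![t, z p] ![g1, g2] x)⁻¹ *ᵥ v) j • ![g1, g2] j x) =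
      triRHS (p + 2) (fun i => Φ i ∘ leadingCoords p (i + 2)) (triangularChart p z t x) v := by
  have hdet := h.det_decouplingMatrix_ne_zero hx hdim
  refine h.fderiv_triangularChart_eq_triRHS ?_ (fderiv_closedLoop hdet v 0)
    (fderiv_closedLoop hdet v 1)
  rw [valueSpace_spanOn_pair hx]
  exact Submodule.sum_mem _ fun j _ =>
    Submodule.smul_mem _ _ (Submodule.subset_span (mem_range_self j))

lemma exists_feedback_of_isTriangularAt (hU : IsOpen U) (hf : ContDiffOn ℝ ∞ f U)
    (hg1 : ContDiffOn ℝ ∞ g1 U) (hg2 : ContDiffOn ℝ ∞ g2 U) {W : Set (Fin n → ℝ)} (hWU : W ⊆ U)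
    (hdim : ∀ x ∈ W, evalDim (spanOn U {g1, g2}) x = 2) {p : ℕ} {z : ℕ → (Fin n → ℝ) → ℝ}
    {t : (Fin n → ℝ) → ℝ} {Φ : (j : ℕ) → (Fin (j + 2) → ℝ) × ℝ → ℝ}
    (htri : ∀ x ∈ W, IsTriangularAt p (valueSpace (spanOn U {g1, g2})) f z t Φ x) :
    ∃ (α : (Fin n → ℝ) → Fin 2 → ℝ) (β : (Fin n → ℝ) → Fin 2 → Fin 2 → ℝ),
      (∀ i, ContDiffOn ℝ ∞ (fun x => α x i) W) ∧
      (∀ i j, ContDiffOn ℝ ∞ (fun x => β x i j) W) ∧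
      (∀ x ∈ W, β x 0 0 * β x 1 1 - β x 0 1 * β x 1 0 ≠ 0) ∧
      ∀ x ∈ W, ∀ v : Fin 2 → ℝ, fderiv ℝ (triangularChart p z t) x (f x +
          (α x 0 + β x 0 0 * v 0 + β x 0 1 * v 1) • g1 x +
          (α x 1 + β x 1 0 * v 0 + β x 1 1 * v 1) • g2 x) =
        triRHS (p + 2) (fun i => Φ i ∘ leadingCoords p (i + 2)) (triangularChart p z t x) v := by
  have hdet : ∀ x ∈ W, (decouplingMatrix ![t, z p] ![g1, g2] x).det ≠ 0 := fun x hx =>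
    (htri x hx).det_decouplingMatrix_ne_zero (hWU hx) (hdim x hx)
  have hout : ∀ x ∈ W, ∀ i, ContDiffAt ℝ ∞ (![t, z p] i) x := fun x hx =>
    Fin.forall_fin_two.2 ⟨(htri x hx).contDiffAt_time, (htri x hx).contDiffAt_coord p le_rfl⟩
  have hfield : ∀ x ∈ W, ∀ j, ContDiffAt ℝ ∞ (![g1, g2] j) x := fun x hx =>
    Fin.forall_fin_two.2 ⟨hg1.contDiffAt (hU.mem_nhds (hWU hx)),
      hg2.contDiffAt (hU.mem_nhds (hWU hx))⟩
  refine ⟨decouplingOffset ![t, z p] f ![g1, g2],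
    fun x i j => (decouplingMatrix ![t, z p] ![g1, g2] x)⁻¹ i j,
    fun i x hx => (contDiffAt_decouplingOffset (hout x hx)
      (hf.contDiffAt (hU.mem_nhds (hWU hx))) (hfield x hx) (hdet x hx) i).contDiffWithinAt,
    fun i j x hx => (contDiffAt_inv_apply (contDiffAt_decouplingMatrix (hout x hx) (hfield x hx))
      (hdet x hx) i j).contDiffWithinAt,
    fun x hx => ?_, fun x hx v => ?_⟩
  · rw [← Matrix.det_fin_two, Matrix.det_nonsing_inv, Ring.inverse_eq_inv']
    exact inv_ne_zero (hdet x hx)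
  · rw [← (htri x hx).fderiv_triangularChart_closedLoop (hWU hx) (hdim x hx) v]
    simp [Fin.sum_univ_two, add_assoc]

end Triangularization

theorem isTriangularizableAt_of_eventually_isTriangularAt {p : ℕ} {U : Set (Fin (p + 2) → ℝ)}
    (hU : IsOpen U) {f g1 g2 : VF (p + 2)} (hf : ContDiffOn ℝ ∞ f U) (hg1 : ContDiffOn ℝ ∞ g1 U)
    (hg2 : ContDiffOn ℝ ∞ g2 U) {q : Fin (p + 2) → ℝ} (hq : q ∈ U)
    (hdim : ∀ᶠ x in 𝓝 q, evalDim (spanOn U {g1, g2}) x = 2) {z : ℕ → (Fin (p + 2) → ℝ) → ℝ}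
    {t : (Fin (p + 2) → ℝ) → ℝ} {Φ : (j : ℕ) → (Fin (j + 2) → ℝ) × ℝ → ℝ}
    (htri : ∀ᶠ x in 𝓝 q, IsTriangularAt p (valueSpace (spanOn U {g1, g2})) f z t Φ x) :
    IsTriangularizableAt (p + 2) U f g1 g2 q := by
  obtain ⟨κ, hqκ, hκN, hκ_eq, hκ⟩ := IsTriangularAt.exists_isSmoothDiffeo_triangularChart
    (by simp) ((hU.eventually_mem hq).and (hdim.and htri)) htri
  have hκU : κ.source ⊆ U := fun x hx => (hκN hx).1
  have htriκ : ∀ x ∈ κ.source, IsTriangularAt p _ f z t Φ x := fun x hx => (hκN hx).2.2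
  obtain ⟨α, β, hα, hβ, hβdet, hclosed⟩ := exists_feedback_of_isTriangularAt hU hf hg1 hg2 hκU
    (fun x hx => (hκN hx).2.1) htriκ
  have himage : triangularChart p z t '' κ.source = κ.target := by
    rw [← hκ_eq, κ.image_source_eq_target]
  refine ⟨κ.source, κ.open_source, hqκ, hκU, triangularChart p z t, κ.symm,
    fun x hx => (hκ_eq ▸ hκ.contDiffAt x hx).contDiffWithinAt, himage ▸ κ.open_target,
    himage ▸ fun y hy => (hκ.contDiffAt_symm hy).contDiffWithinAt,
    fun x hx => hκ_eq ▸ κ.left_inv hx, α, β, hα, hβ, hβdet,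
    fun i => Φ i ∘ leadingCoords p (i + 2), ?_, fun i hi y y' hy => ?_, hclosed⟩
  · rintro i hi _ ⟨x, hx, rfl⟩
    refine (ContDiffAt.comp _ ?_ (leadingCoords p (i + 2)).contDiff.contDiffAt).contDiffWithinAt
    rw [leadingCoords_triangularChart (by omega)]
    exact (htriκ x hx).contDiffAt_drift i (by omega)
  · exact congrArg (Φ i) (leadingCoords_congr (by omega) fun j hj => hy j (by omega))

lemma isOpen_setOf_isTriangularizableAt {n : ℕ} (U : Set (Fin n → ℝ)) (f g1 g2 : VF n) :
    IsOpen {x | IsTriangularizableAt n U f g1 g2 x} := by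
  refine isOpen_iff_mem_nhds.2 ?_
  rintro x ⟨V, hV, hxV, hrest⟩
  filter_upwards [hV.mem_nhds hxV] with y hy using ⟨V, hV, hy, hrest⟩

lemma IsTriangularizableAt.mem {n : ℕ} {U : Set (Fin n → ℝ)} {f g1 g2 : VF n} {x : Fin n → ℝ}
    (h : IsTriangularizableAt n U f g1 g2 x) : x ∈ U :=
  let ⟨_, _, hxV, hVU, _⟩ := h
  hVU hxV

theorem IsGoursatSystem.exists_isTriangularizableAt {n : ℕ} (hn : 2 ≤ n) {U O : Set (Fin n → ℝ)}
    (hU : IsOpen U) {f g1 g2 : VF n} (hf : ContDiffOn ℝ ∞ f U) (hg1 : ContDiffOn ℝ ∞ g1 U)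
    (hg2 : ContDiffOn ℝ ∞ g2 U) (hOU : O ⊆ U) (hO : O.Nonempty)
    (h : IsGoursatSystem n O (fun k => valueSpace (derivedFlag U (spanOn U {g1, g2}) k)) f) :
    ∃ q ∈ O, IsTriangularizableAt n U f g1 g2 q := by
  obtain ⟨p, rfl⟩ := Nat.exists_eq_add_of_le' hn
  obtain ⟨q, hq, z, t, Φ, htri⟩ := h.hasTriangularCoordinates hO
  refine ⟨q, hq, isTriangularizableAt_of_eventually_isTriangularAt hU hf hg1 hg2 (hOU hq) ?_ htri⟩
  filter_upwards [h.eventually_mem hq] with x hx using h.finrank_flag 0 (by omega) x hx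

end

noncomputable section

/-- **generic corollary of the main theorem.** If there is an open set
`D ⊆ U`, dense in `U`, on which `dim G_k(q) = 2 + k` (`0 ≤ k ≤ n−2`) and
`(L_f ω)(q) ∈ Cᵏ_q` for all `1 ≤ k ≤ n−3` and `ω ∈ Λᵏ = (G_k)^⊥`, then there is an open
set `V ⊆ U`, dense in `U`, such that near every `p ∈ V` the system is transformable
into the triangular form (3) by a local change of coordinates and a regular static
state feedback. -/
theorem main_theorem_generic {n : ℕ} (hn : 2 ≤ n) (U : Set (Fin n → ℝ)) (hU : IsOpen U)
    (f g1 g2 : VF n)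
    (hf : ContDiffOn ℝ (⊤ : ℕ∞) f U) (hg1 : ContDiffOn ℝ (⊤ : ℕ∞) g1 U) (hg2 : ContDiffOn ℝ (⊤ : ℕ∞) g2 U)
    (D : Set (Fin n → ℝ)) (hDopen : IsOpen D) (hDsub : D ⊆ U) (hDdense : U ⊆ closure D)
    (hdim : ∀ k : ℕ, k + 2 ≤ n → ∀ q ∈ D,
      evalDim (derivedFlag U (spanOn U {g1, g2}) k) q = 2 + k)
    (hlie : ∀ k : ℕ, 1 ≤ k → k + 3 ≤ n → ∀ q ∈ D,
      ∀ ω ∈ annihilatorOn U (derivedFlag U (spanOn U {g1, g2}) k),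
        lieDerOneForm f ω q ∈
          retractOf (annihilatorOn U (derivedFlag U (spanOn U {g1, g2}) k)) q) :
    ∃ V : Set (Fin n → ℝ), IsOpen V ∧ V ⊆ U ∧ U ⊆ closure V ∧
      ∀ p ∈ V, IsTriangularizableAt n U f g1 g2 p := by
  have hsmooth : IsSmoothOn U {g1, g2} := by
    rintro X (rfl | rfl)
    exacts [fun x hx => hg1.contDiffAt (hU.mem_nhds hx),
      fun x hx => hg2.contDiffAt (hU.mem_nhds hx)]
  have hG := isGoursatSystem_derivedFlag hU hf (hsmooth.spanOn hU) (zero_mem_spanOn _)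
    hDopen hDsub hdim hlie
  refine ⟨{x | IsTriangularizableAt n U f g1 g2 x}, isOpen_setOf_isTriangularizableAt U f g1 g2,
    fun x hx => hx.mem, fun x hx => mem_closure_iff.2 fun O hO hxO => ?_, fun x hx => hx⟩
  have hne : (O ∩ D).Nonempty := mem_closure_iff.1 (hDdense hx) O hO hxO
  obtain ⟨q, hq, hqtri⟩ := (hG.mono (hO.inter hDopen) Set.inter_subset_right
    ).exists_isTriangularizableAt hn hU hf hg1 hg2 (Set.inter_subset_right.trans hDsub) hne
  exact ⟨q, hq.1, hqtri⟩

end
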